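/- arXiv:2505.00166 — 2 statements merged into one kernel-verified Lean document; each statement's English description precedes it below -/
import Mathlib

section
/- Let f : (ℝ^n,0) → (ℝ,0) be a germ of C^∞ function of finite order m = ord_0 f whose initial part in(f) has an algebraically isolated singularity at the origin, i.e. μ(in(f)) < +∞. Then the real Milnor number of f satisfies μ(f) = (m − 1)^n. -/
open Filter Set Metric Topology Asymptotics

noncomputable section

set_option synthInstance.maxHeartbeats 1000000

/-- `ℝ^n` with the Euclidean structure. -/
abbrev Eucl (n : ℕ) : Type := EuclideanSpace ℝ (Fin n)

variable {V W : Type*} [NormedAddCommGroup V] [NormedSpace ℝ V]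
  [NormedAddCommGroup W] [NormedSpace ℝ W]

/-- `F` admits the `α`-derivative `H` at `x`:  `H` is continuous and for every direction `v`,
`F (x + t v) - F x = t ^ α • H v + o(t ^ α)` as `t → 0⁺`. -/
def HasAlphaDerivAt (F : V → W) (x : V) (α : ℝ) (H : V → W) : Prop :=
  Continuous H ∧ ∀ v : V,
    Tendsto (fun t : ℝ => (t ^ α)⁻¹ • (F (x + t • v) - F x - t ^ α • H v))
      (𝓝[>] (0 : ℝ)) (𝓝 0)

/-- `F` has order `α` at `x`: for every nonzero direction `v` the limit of
`F (x + t v) / t ^ α` as `t → 0⁺` exists, and for at least one `v` it is nonzero. -/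
def HasOrderAt (F : V → W) (x : V) (α : ℝ) : Prop :=
  (∀ v : V, v ≠ 0 → ∃ L : W,
      Tendsto (fun t : ℝ => (t ^ α)⁻¹ • F (x + t • v)) (𝓝[>] (0 : ℝ)) (𝓝 L)) ∧
  ∃ v : V, v ≠ 0 ∧ ∃ L : W, L ≠ 0 ∧
      Tendsto (fun t : ℝ => (t ^ α)⁻¹ • F (x + t • v)) (𝓝[>] (0 : ℝ)) (𝓝 L)

/-- `φ` is a lipeomorphism from `U` onto `V'`. -/
def IsLipeoOn (φ : V → W) (U : Set V) (V' : Set W) : Prop :=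
  Set.BijOn φ U V' ∧ ∃ c : ℝ, 1 ≤ c ∧ ∀ x ∈ U, ∀ y ∈ U,
    (1 / c) * ‖x - y‖ ≤ ‖φ x - φ y‖ ∧ ‖φ x - φ y‖ ≤ c * ‖x - y‖

/-- `d` is a pseudo-Lipschitz derivative of `φ` at `x`: along some sequence `t_j → 0⁺`,
`(φ (x + t_j v) - φ x) / t_j → d v` uniformly on compact sets. -/
def IsPseudoLipDerivAt (φ : V → V) (x : V) (d : V → V) : Prop :=
  ∃ t : ℕ → ℝ, (∀ j, 0 < t j) ∧ Tendsto t atTop (𝓝 (0 : ℝ)) ∧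
    ∀ K : Set V, IsCompact K →
      TendstoUniformlyOn (fun j v => (t j)⁻¹ • (φ (x + t j • v) - φ x)) d atTop K

/-- `F ∼ G` at `x₀`: asymptotic equivalence of `F` and `G` at `x₀`. -/
def AsympEquivAt (F G : V → W) (x₀ : V) : Prop :=
  ∃ c₁ c₂ : ℝ, 0 < c₁ ∧ 0 < c₂ ∧
    ∀ᶠ x in 𝓝 x₀, c₂ * ‖F x‖ ≤ ‖G x‖ ∧ ‖G x‖ ≤ c₁ * ‖F x‖

/-- `F ≈ G` at `x₀` via the lipeomorphism `φ`. -/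
def AsympLipEquivAtVia {V' : Type*} [NormedAddCommGroup V'] [NormedSpace ℝ V']
    (F : V → W) (G : V' → W) (φ : V → V') (x₀ : V) : Prop :=
  ∃ c : ℝ, 1 ≤ c ∧ ∀ᶠ x in 𝓝 x₀,
    (1 / c) * ‖F x - F x₀‖ ≤ ‖G (φ x) - G (φ x₀)‖ ∧
      ‖G (φ x) - G (φ x₀)‖ ≤ c * ‖F x - F x₀‖

/-- The degree-`m` term of the Taylor series of `F` at `0`; for a `C^∞` germ of
finite order `m` this is its initial part `in(F)`. -/
def inPart (F : V → ℝ) (m : ℕ) : V → ℝ :=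
  fun x => (m.factorial : ℝ)⁻¹ • iteratedFDeriv ℝ m F 0 (fun _ => x)

instance {α : Type*} (l : Filter α) {R : Type*} [CommSemiring R] :
    Algebra R (Filter.Germ l R) :=
  Algebra.ofModule
    (fun r x y => Filter.Germ.inductionOn₂ x y fun f g => by
      rw [← Filter.Germ.coe_smul, ← Filter.Germ.coe_mul, ← Filter.Germ.coe_mul,
        ← Filter.Germ.coe_smul, smul_mul_assoc])
    (fun r x y => Filter.Germ.inductionOn₂ x y fun f g => by
      rw [← Filter.Germ.coe_smul, ← Filter.Germ.coe_mul, ← Filter.Germ.coe_mul,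
        ← Filter.Germ.coe_smul, mul_smul_comm])

/-- `E_n`: the ℝ-algebra of germs at `0` of `C^∞` functions `ℝ^n → ℝ`, realized as a
subalgebra of the algebra of germs at `0` of functions `ℝ^n → ℝ`. -/
def smoothGerms (n : ℕ) : Subalgebra ℝ (Filter.Germ (𝓝 (0 : Eucl n)) ℝ) where
  carrier := {γ | ∃ f : Eucl n → ℝ, ContDiff ℝ (⊤ : ℕ∞) f ∧ γ = ↑f}
  add_mem' := by
    rintro a b ⟨f, hf, rfl⟩ ⟨g, hg, rfl⟩
    exact ⟨f + g, hf.add hg, rfl⟩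
  mul_mem' := by
    rintro a b ⟨f, hf, rfl⟩ ⟨g, hg, rfl⟩
    exact ⟨f * g, hf.mul hg, rfl⟩
  algebraMap_mem' := fun r => ⟨fun _ => r, contDiff_const, by
    rw [Algebra.algebraMap_eq_smul_one, ← Filter.Germ.coe_one, ← Filter.Germ.coe_smul]
    congr 1
    funext x
    simp⟩

/-- The Jacobian ideal `J(f) ⊆ E_n`, generated by the germs at `0` of the partial
derivatives `∂f/∂x_1, …, ∂f/∂x_n`. -/
def jacobianIdeal (n : ℕ) (f : Eucl n → ℝ) : Ideal (smoothGerms n) :=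
  Ideal.span {γ | ∃ i : Fin n,
    (γ : Filter.Germ (𝓝 (0 : Eucl n)) ℝ) =
      ↑(fun x => fderiv ℝ f x (EuclideanSpace.single i 1))}

/-- The real Milnor number `μ(f) = dim_ℝ E_n / J(f)`, as a cardinal. -/
def milnor (n : ℕ) (f : Eucl n → ℝ) : Cardinal :=
  Module.rank ℝ (smoothGerms n ⧸ jacobianIdeal n f)

namespace MilnorNumber

/-!
Let `q = in(f)`, a form of degree `m`. The partial derivatives of `f` have the partial derivatives
`∂_i q` as initial forms, which have degree `m - 1` and, as `μ(q)` is finite, no common zero but the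
origin. The Milnor number is thus an intersection multiplicity, and both bounds hold in any local
algebra whose associated graded ring is a polynomial ring in `n` variables.

Lower bound: the Jacobian ideal `J` lies in `𝔪 ^ (m - 1)`, so the colength of `𝔪 ^ ((m - 1) N)` is
at most that of `J ^ N`. As `J` has `n` generators, the latter is at most `(N + n - 1).choose n`
times the colength of `J`. Compare the leading terms as `N → ∞`.

Upper bound: monomials that span the polynomial ring modulo the ideal `(∂_i q)` also span
`E_n / J`, so it suffices to bound the colength of `(∂_i q)`. Starting from the ideal of the
variables, replace one variable at a time by a generic combination of the `∂_i q`. Since everything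
stays a regular sequence of forms, each replacement multiplies the colength by at most `m - 1`.
-/

section Colength

variable {R : Type*} [CommRing R] {I J K : Ideal R} {a b c : R}

lemma mem_sup_span_singleton :
    b ∈ K ⊔ Ideal.span {a} ↔ ∃ u ∈ K, ∃ z, b = u + a * z := by
  simp only [Submodule.mem_sup, Ideal.mem_span_singleton', exists_exists_eq_and, mul_comm a,
    eq_comm (a := b)]

lemma isSMulRegular_quotient_iff :
    IsSMulRegular (R ⧸ K) a ↔ ∀ z, a * z ∈ K → z ∈ K :=
  isSMulRegular_quotient_iff_mem_of_smul_mem K a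

lemma isSMulRegular_quotient_sup_comm (ha : IsSMulRegular (R ⧸ K) a)
    (hb : IsSMulRegular (R ⧸ K ⊔ Ideal.span {a}) b) :
    IsSMulRegular (R ⧸ K ⊔ Ideal.span {b}) a := by
  rw [isSMulRegular_quotient_iff] at *
  intro z hz
  obtain ⟨u, hu, w, hw⟩ := mem_sup_span_singleton.1 hz
  obtain ⟨v, hv, w', rfl⟩ := mem_sup_span_singleton.1 <| hb w <|
    mem_sup_span_singleton.2 ⟨-u, neg_mem hu, z, by rw [hw]; ring⟩
  have hdiff : a * (z - b * w') ∈ K := by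
    have : a * (z - b * w') = u + b * v := by rw [mul_sub, hw]; ring
    exact this ▸ add_mem hu (K.mul_mem_left _ hv)
  exact mem_sup_span_singleton.2 ⟨_, ha _ hdiff, w', by ring⟩

lemma isSMulRegular_quotient_of_pow_mem_sup (hc : IsSMulRegular (R ⧸ K) c) {N : ℕ}
    (hN : c ^ N ∈ K ⊔ Ideal.span {b}) : IsSMulRegular (R ⧸ K) b := by
  have hcN := isSMulRegular_quotient_iff.1 (hc.pow N)
  obtain ⟨u, hu, a, hcN_eq⟩ := mem_sup_span_singleton.1 hN
  refine isSMulRegular_quotient_iff.2 fun z hz ↦ hcN z ?_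
  have : c ^ N * z = u * z + a * (b * z) := by rw [hcN_eq]; ring
  exact this ▸ add_mem (K.mul_mem_right _ hu) (K.mul_mem_left _ hz)

variable (k : Type*) [CommRing k] [Algebra k R]

/-- The colength `ℓ(R/K)` of an ideal, measured over a base ring `k`; over a field it is the
dimension of `R/K`, with all infinite cardinals identified with `⊤`. -/
def colength (K : Ideal R) : ℕ∞ := Module.length k (R ⧸ K)

lemma colength_anti (h : I ≤ J) : colength k J ≤ colength k I :=
  Module.length_le_of_surjective (Ideal.Quotient.factorₐ k h).toLinearMap
    (Ideal.Quotient.factor_surjective h)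

lemma colength_comap_le {S : Type*} [CommRing S] [Algebra k S] (f : R →ₐ[k] S) (K : Ideal S) :
    colength k (K.comap f) ≤ colength k K :=
  Module.length_le_of_injective (Ideal.quotientMapₐ K f le_rfl).toLinearMap
    Ideal.quotientMap_injective

lemma colength_top : colength k (⊤ : Ideal R) = 0 :=
  Module.length_eq_zero

lemma colength_eq_add (h : ∀ z, a * z ∈ K ↔ z ∈ J) :
    colength k K = colength k J + colength k (K ⊔ Ideal.span {a}) := by
  let f₀ : R →ₗ[R] R ⧸ K := K.mkQ ∘ₗ LinearMap.lsmul R R a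
  have hker : LinearMap.ker f₀ = J := by
    ext z
    rw [← h z]
    exact Submodule.Quotient.mk_eq_zero K
  let f : (R ⧸ J) →ₗ[R] R ⧸ K := Submodule.liftQ J f₀ hker.ge
  let g : (R ⧸ K) →ₗ[R] R ⧸ K ⊔ Ideal.span {a} := Submodule.factor le_sup_left
  have hf : Function.Injective f := by
    rw [← LinearMap.ker_eq_bot]
    exact Submodule.ker_liftQ_eq_bot _ _ _ hker.le
  have hrange : LinearMap.range (LinearMap.lsmul R R a) = Ideal.span {a} := by
    ext z
    simp [Ideal.mem_span_singleton', mul_comm]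
  have hexact : Function.Exact f g := by
    rw [LinearMap.exact_iff, Submodule.ker_mapQ, Submodule.comap_id, Submodule.range_liftQ,
      LinearMap.range_comp, hrange, Submodule.map_sup, Submodule.mkQ_map_self, bot_sup_eq]
  have hg : Function.Surjective g := Submodule.factor_surjective _
  clear_value f g
  exact Module.length_eq_add_of_exact (f.restrictScalars k) (g.restrictScalars k) hf hg hexact

lemma colength_le_add (h : ∀ z ∈ J, a * z ∈ K) :
    colength k K ≤ colength k J + colength k (K ⊔ Ideal.span {a}) := by
  rw [colength_eq_add k (J := Submodule.comap (LinearMap.lsmul R R a) K) (a := a) fun z ↦ Iff.rfl]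
  gcongr
  exact colength_anti k h

lemma colength_le_card_mul_add (s : Finset R) (h : ∀ a ∈ s, ∀ z ∈ J, a * z ∈ K) :
    colength k K ≤ s.card * colength k J + colength k (K ⊔ Ideal.span s) := by
  classical
  induction s using Finset.induction_on with
  | empty => simp
  | insert a s ha ih =>
    rw [Finset.forall_mem_insert] at h
    calc colength k K ≤ s.card * colength k J + colength k (K ⊔ Ideal.span s) := ih h.2
      _ ≤ s.card * colength k J +
          (colength k J + colength k (K ⊔ Ideal.span s ⊔ Ideal.span {a})) := by
        gcongr
        exact colength_le_add k fun z hz ↦ Ideal.mem_sup_left (h.1 z hz)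
      _ = _ := by
        rw [Finset.card_insert_of_notMem ha, Finset.coe_insert, Ideal.span_insert, sup_assoc,
          sup_comm (Ideal.span (s : Set R))]
        push_cast
        ring

lemma colength_sup_span_pow_le (K : Ideal R) (a : R) (s : ℕ) :
    colength k (K ⊔ Ideal.span {a ^ s}) ≤ s * colength k (K ⊔ Ideal.span {a}) := by
  induction s with
  | zero => simp [colength_top]
  | succ s ih =>
    have hmul : ∀ z ∈ K ⊔ Ideal.span {a ^ s}, a * z ∈ K ⊔ Ideal.span {a ^ (s + 1)} := by
      intro z hz
      obtain ⟨u, hu, w, rfl⟩ := mem_sup_span_singleton.1 hz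
      exact mem_sup_span_singleton.2 ⟨a * u, K.mul_mem_left _ hu, w, by ring⟩
    refine (colength_le_add k hmul).trans ?_
    rw [Nat.cast_succ, add_one_mul]
    gcongr
    exact colength_anti k (sup_le_sup_right le_sup_left _)

lemma le_colength_sup_span_pow (ha : IsSMulRegular (R ⧸ K) a) (s : ℕ) :
    s * colength k (K ⊔ Ideal.span {a}) ≤ colength k (K ⊔ Ideal.span {a ^ s}) := by
  rw [isSMulRegular_quotient_iff] at ha
  induction s with
  | zero => simp
  | succ s ih =>
    have hmul : ∀ z, a * z ∈ K ⊔ Ideal.span {a ^ (s + 1)} ↔ z ∈ K ⊔ Ideal.span {a ^ s} := by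
      simp only [mem_sup_span_singleton]
      refine fun z ↦ ⟨fun ⟨u, hu, w, hw⟩ ↦ ⟨z - a ^ s * w, ha _ ?_, w, by ring⟩,
        fun ⟨u, hu, w, hw⟩ ↦ ⟨a * u, K.mul_mem_left _ hu, w, by rw [hw]; ring⟩⟩
      convert hu using 1
      linear_combination hw
    rw [colength_eq_add k hmul, Nat.cast_succ, add_one_mul]
    gcongr
    refine colength_anti k (sup_le (sup_le le_sup_left ?_) le_sup_right)
    rw [Ideal.span_singleton_le_iff_mem, pow_succ']
    exact Ideal.mem_sup_right (Ideal.mul_mem_right _ _ (Ideal.mem_span_singleton_self _))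

/-- Comparing `b ^ s` with `c ^ (M + d * s)` modulo `K` and letting `s → ∞` removes the
constant `M`. -/
lemma colength_sup_le_mul {d M : ℕ} (hb : IsSMulRegular (R ⧸ K) b)
    (h : ∀ s, c ^ (M + d * s) ∈ K ⊔ Ideal.span {b ^ s})
    (hc : colength k (K ⊔ Ideal.span {c}) ≠ ⊤) :
    colength k (K ⊔ Ideal.span {b}) ≤ d * colength k (K ⊔ Ideal.span {c}) := by
  have hbound (s : ℕ) : s * colength k (K ⊔ Ideal.span {b}) ≤
      (M + d * s : ℕ) * colength k (K ⊔ Ideal.span {c}) :=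
    calc s * colength k (K ⊔ Ideal.span {b})
      _ ≤ colength k (K ⊔ Ideal.span {b ^ s}) := le_colength_sup_span_pow k hb s
      _ ≤ colength k (K ⊔ Ideal.span {c ^ (M + d * s)}) :=
        colength_anti k (sup_le le_sup_left ((Ideal.span_singleton_le_iff_mem _).2 (h s)))
      _ ≤ _ := colength_sup_span_pow_le k K c _
  lift colength k (K ⊔ Ideal.span {c}) to ℕ using hc with lc
  have hfin : colength k (K ⊔ Ideal.span {b}) ≠ ⊤ := fun htop ↦ by
    have := hbound 1
    rw [htop, Nat.cast_one, one_mul, top_le_iff] at this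
    exact ENat.natCast_ne_top ((M + d * 1) * lc) (by exact_mod_cast this)
  lift colength k (K ⊔ Ideal.span {b}) to ℕ using hfin with lb
  norm_cast at hbound ⊢
  by_contra! hlt
  have := hbound (M * lc + 1)
  have := Nat.mul_le_mul_left (M * lc + 1) (Nat.succ_le_of_lt hlt)
  nlinarith

end Colength

section ColengthPow

variable {R ι : Type*} [CommRing R] [Fintype ι] (k : Type*) [CommRing k] [Algebra k R]

lemma exists_finset_span_eq_pow (g : ι → R) (N : ℕ) :
    ∃ s : Finset R, s.card ≤ (Fintype.card ι).multichoose N ∧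
      Ideal.span (s : Set R) = Ideal.span (range g) ^ N := by
  classical
  let s : Finset R := (Finset.univ.finsuppAntidiag N).image fun α : ι →₀ ℕ ↦ ∏ i, g i ^ α i
  refine ⟨s, Finset.card_image_le.trans_eq
    (Finset.card_finsuppAntidiag_nat_eq_multichoose _), le_antisymm ?_ fun x hx ↦ ?_⟩
  · rw [Ideal.span_le]
    intro x hx
    obtain ⟨α, hα, rfl⟩ := Finset.mem_image.1 hx
    rw [← (Finset.mem_finsuppAntidiag.1 hα).1, ← Finset.prod_pow_eq_pow_sum]
    exact Ideal.prod_mem_prod fun i _ ↦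
      Ideal.pow_mem_pow (Ideal.subset_span (mem_range_self i)) _
  · obtain ⟨p, hp, rfl⟩ := (Ideal.mem_span_pow_iff_exists_isHomogeneous g x).1 hx
    rw [MvPolynomial.eval_eq']
    refine Ideal.sum_mem _ fun α hα ↦ Ideal.mul_mem_left _ _ (Ideal.subset_span ?_)
    refine Finset.mem_image_of_mem _ (Finset.mem_finsuppAntidiag.2 ⟨?_, Finset.subset_univ _⟩)
    rw [← Finsupp.degree_eq_sum, ← hp (MvPolynomial.mem_support_iff.1 hα),
      Finsupp.degree_eq_weight_one]
    rfl

lemma colength_span_range_pow_le (g : ι → R) (N : ℕ) :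
    colength k (Ideal.span (range g) ^ N) ≤
      (∑ j ∈ Finset.range N, (Fintype.card ι).multichoose j : ℕ) *
        colength k (Ideal.span (range g)) := by
  set G := Ideal.span (range g)
  induction N with
  | zero => simp [colength_top]
  | succ N ih =>
    obtain ⟨s, hcard, hs⟩ := exists_finset_span_eq_pow g N
    have hmul : ∀ a ∈ s, ∀ z ∈ G, a * z ∈ G ^ (N + 1) := fun a ha z hz ↦ by
      rw [pow_succ]
      exact Ideal.mul_mem_mul (hs ▸ Ideal.subset_span ha) hz
    have hsup : G ^ (N + 1) ⊔ Ideal.span s = G ^ N := by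
      rw [hs, sup_eq_right]
      exact Ideal.pow_le_pow_right N.le_succ
    calc colength k (G ^ (N + 1)) ≤ s.card * colength k G + colength k (G ^ N) :=
          hsup ▸ colength_le_card_mul_add k s hmul
      _ ≤ (Fintype.card ι).multichoose N * colength k G + _ * colength k G := by gcongr
      _ = _ := by rw [Finset.sum_range_succ, Nat.cast_add, add_mul, add_comm]

end ColengthPow

section Graded

open DirectSum

variable {A S : Type*} [CommRing A] [SetLike S A] [AddSubgroupClass S A]
  (𝒜 : ℕ → S) [GradedRing 𝒜] {K : Ideal A} {M N d e j : ℕ} {b c p y z Q : A}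

lemma isHomogeneous_span_singleton (hQ : Q ∈ 𝒜 d) : (Ideal.span {Q}).IsHomogeneous 𝒜 :=
  Ideal.homogeneous_span 𝒜 _ <| by rintro _ rfl; exact ⟨d, hQ⟩

variable {𝒜}

lemma exists_sub_mul_mem_of_mem_sup (hK : K.IsHomogeneous 𝒜) (hQ : Q ∈ 𝒜 d) (hp : p ∈ 𝒜 (d + j))
    (h : p ∈ K ⊔ Ideal.span {Q}) : ∃ a ∈ 𝒜 j, p - Q * a ∈ K := by
  obtain ⟨u, hu, z, rfl⟩ := mem_sup_span_singleton.1 h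
  refine ⟨decompose 𝒜 z j, SetLike.coe_mem _, ?_⟩
  rw [← coe_decompose_mul_add_of_left_mem 𝒜 hQ, ← decompose_of_mem_same 𝒜 hp]
  simpa using hK (d + j) hu

lemma mem_of_mem_sup_of_lt (hK : K.IsHomogeneous 𝒜) (hQ : Q ∈ 𝒜 d) (hp : p ∈ 𝒜 j) (hjd : j < d)
    (h : p ∈ K ⊔ Ideal.span {Q}) : p ∈ K := by
  obtain ⟨u, hu, z, rfl⟩ := mem_sup_span_singleton.1 h
  rw [← decompose_of_mem_same 𝒜 hp, decompose_add, DirectSum.add_apply, AddMemClass.coe_add,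
    coe_decompose_mul_of_left_mem_of_not_le 𝒜 hQ hjd.not_ge, add_zero]
  exact hK j hu

lemma mem_of_forall_mem_sup_span_pow (hK : K.IsHomogeneous 𝒜) (hy : y ∈ 𝒜 e) (he : 0 < e)
    (h : ∀ N, z ∈ K ⊔ Ideal.span {y ^ N}) : z ∈ K := by
  refine (hK.mem_iff 𝒜).2 fun j ↦ ?_
  have hyN : y ^ (j + 1) ∈ 𝒜 ((j + 1) * e) := SetLike.pow_mem_graded (j + 1) hy
  have hKy := hK.sup (isHomogeneous_span_singleton 𝒜 hyN)
  exact mem_of_mem_sup_of_lt hK hyN (SetLike.coe_mem _)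
    (j.lt_succ_self.trans_le (Nat.le_mul_of_pos_right _ he)) (hKy j (h (j + 1)))

lemma isSMulRegular_quotient_of_sup (hK : K.IsHomogeneous 𝒜) (hy : y ∈ 𝒜 e) (he : 0 < e)
    (hyK : IsSMulRegular (A ⧸ K) y) (hb : IsSMulRegular (A ⧸ K ⊔ Ideal.span {y}) b) :
    IsSMulRegular (A ⧸ K) b := by
  rw [isSMulRegular_quotient_iff] at *
  intro z hz
  have hdiv (N : ℕ) : ∃ a, b * a ∈ K ∧ ∃ u ∈ K, z = u + y ^ N * a := by
    induction N with
    | zero => exact ⟨z, hz, 0, zero_mem _, by simp⟩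
    | succ N ih =>
      obtain ⟨a, ha, u, hu, hza⟩ := ih
      obtain ⟨v, hv, a', rfl⟩ := mem_sup_span_singleton.1 (hb a (Ideal.mem_sup_left ha))
      refine ⟨a', hyK _ ?_, u + y ^ N * v, add_mem hu (K.mul_mem_left _ hv), by rw [hza]; ring⟩
      have : y * (b * a') = b * (v + y * a') - b * v := by ring
      exact this ▸ sub_mem ha (K.mul_mem_left _ hv)
  refine mem_of_forall_mem_sup_span_pow hK hy he fun N ↦ ?_
  obtain ⟨a, -, u, hu, hza⟩ := hdiv N
  exact mem_sup_span_singleton.2 ⟨u, hu, a, hza⟩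

variable (𝒜) in
/-- `K` contains every homogeneous element of degree at least `M`. For a homogeneous ideal of a
polynomial ring over a field this says that `K` is the whole ring or primary to the irrelevant
ideal, i.e. that `0` is the only common zero over the algebraic closure. -/
def ContainsDegreesGE (M : ℕ) (K : Ideal A) : Prop :=
  ∀ j ≥ M, ∀ p ∈ 𝒜 j, p ∈ K

lemma ContainsDegreesGE.sup_span_pow (hK : K.IsHomogeneous 𝒜) (hQ : Q ∈ 𝒜 d)
    (h : ContainsDegreesGE 𝒜 M (K ⊔ Ideal.span {Q})) (s : ℕ) :
    ContainsDegreesGE 𝒜 (M + d * s) (K ⊔ Ideal.span {Q ^ s}) := by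
  induction s with
  | zero => simp [ContainsDegreesGE]
  | succ s ih =>
    intro j hj p hp
    obtain ⟨i, rfl⟩ : ∃ i, j = d + i := Nat.exists_eq_add_of_le (by lia)
    obtain ⟨a, ha, hpa⟩ := exists_sub_mul_mem_of_mem_sup hK hQ hp (h _ (by lia) p hp)
    obtain ⟨v, hv, w, rfl⟩ := mem_sup_span_singleton.1 (ih i (by lia) a ha)
    exact mem_sup_span_singleton.2
      ⟨p - Q * (v + Q ^ s * w) + Q * v, add_mem hpa (K.mul_mem_left _ hv), w, by ring⟩

lemma exists_pow_mem_of_one_mem_sup (hK : K.IsHomogeneous 𝒜) (hc : c ∈ 𝒜 1)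
    (h : 1 ∈ K ⊔ Ideal.span {c - 1}) : ∃ N, c ^ N ∈ K := by
  classical
  obtain ⟨u, hu, z, hz⟩ := mem_sup_span_singleton.1 h
  have hz' : z + 1 = u + c * z := by linear_combination hz
  -- comparing components of degree `j + 1` gives `z_{j+1} ≡ c z_j` modulo `K`
  have hcomp (j : ℕ) : (decompose 𝒜 z j : A) + c ^ j ∈ K := by
    induction j with
    | zero =>
      have := congrArg (fun a ↦ (decompose 𝒜 a 0 : A)) hz'
      simp only [decompose_add, DirectSum.add_apply, AddMemClass.coe_add,
        decompose_of_mem_same 𝒜 SetLike.GradedOne.one_mem,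
        coe_decompose_mul_of_left_mem_of_not_le 𝒜 hc one_pos.not_ge, add_zero] at this
      rw [pow_zero, this]
      exact hK 0 hu
    | succ j ih =>
      have := congrArg (fun a ↦ (decompose 𝒜 a (1 + j) : A)) hz'
      simp only [decompose_add, DirectSum.add_apply, AddMemClass.coe_add,
        decompose_of_mem_ne 𝒜 SetLike.GradedOne.one_mem (show 0 ≠ 1 + j by lia),
        coe_decompose_mul_add_of_left_mem 𝒜 hc, add_zero] at this
      rw [add_comm j, this, add_assoc, pow_add, pow_one, ← mul_add]
      exact add_mem (hK _ hu) (K.mul_mem_left _ ih)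
  obtain ⟨N, hN⟩ := Infinite.exists_notMem_finset (decompose 𝒜 z).support
  refine ⟨N, ?_⟩
  simpa [DFinsupp.notMem_support_iff.1 hN] using hcomp N

end Graded

section Bezout

open DirectSum

lemma exists_mem_isUnit_of_span_eq_top {k B : Type*} [Field k] [Infinite k] [CommRing B]
    [Algebra k B] [Finite (MaximalSpectrum B)] (V : Submodule k B)
    (hV : Ideal.span (V : Set B) = ⊤) : ∃ v ∈ V, IsUnit v := by
  by_contra! hnonunit
  let S (m : MaximalSpectrum B) : Submodule k V := (m.asIdeal.restrictScalars k).comap V.subtype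
  have hcover : ⋃ m, (S m : Set V) = univ := by
    refine eq_univ_of_forall fun v ↦ mem_iUnion.2 ?_
    obtain ⟨m, hm, hvm⟩ := exists_max_ideal_of_mem_nonunits (hnonunit v v.2)
    exact ⟨⟨m, hm⟩, hvm⟩
  obtain ⟨m, hm⟩ := Subspace.exists_eq_top_of_iUnion_eq_univ hcover
  refine m.isMaximal.ne_top (top_le_iff.1 (hV ▸ Ideal.span_le.2 fun v hv ↦ ?_))
  exact (hm ▸ Submodule.mem_top : (⟨v, hv⟩ : V) ∈ S m)

variable {k A : Type*} [Field k] [CommRing A] [Algebra k A] {𝒜 : ℕ → Submodule k A}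
  [GradedAlgebra 𝒜] {J K : Ideal A} {M N d : ℕ} {b c : A} {xs : List A}

lemma ContainsDegreesGE.finite_quotient_sup_span_sub_one [∀ i, Module.Finite k (𝒜 i)]
    (hK : K.IsHomogeneous 𝒜) (hc : c ∈ 𝒜 1) (h : ContainsDegreesGE 𝒜 M (K ⊔ Ideal.span {c})) :
    Module.Finite k (A ⧸ K ⊔ Ideal.span {c - 1}) := by
  set L := K ⊔ Ideal.span {c - 1}
  let π : A →ₗ[k] A ⧸ L := (Ideal.Quotient.mkₐ k L).toLinearMap
  let W : Submodule k (A ⧸ L) := (⨆ i ∈ Finset.range M, 𝒜 i).map π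
  have hW (j : ℕ) : ∀ p ∈ 𝒜 j, π p ∈ W := by
    induction j with
    | zero =>
      intro p hp
      obtain hM | hM := M.eq_zero_or_pos
      · have hpK := mem_of_mem_sup_of_lt hK hc hp one_pos (h 0 hM.le p hp)
        have : π p = 0 := Ideal.Quotient.eq_zero_iff_mem.2 (Ideal.mem_sup_left hpK)
        exact this ▸ zero_mem W
      · exact Submodule.mem_map_of_mem <|
          Submodule.mem_iSup_of_mem 0 <| Submodule.mem_iSup_of_mem (Finset.mem_range.2 hM) hp
    | succ j ih =>
      intro p hp
      obtain hjM | hjM := lt_or_ge (j + 1) M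
      · exact Submodule.mem_map_of_mem <| Submodule.mem_iSup_of_mem (j + 1) <|
          Submodule.mem_iSup_of_mem (Finset.mem_range.2 hjM) hp
      · obtain ⟨a, ha, hpa⟩ :=
          exists_sub_mul_mem_of_mem_sup hK hc (add_comm j 1 ▸ hp) (h _ hjM p hp)
        have : π p = π a := Ideal.Quotient.eq.2 <|
          mem_sup_span_singleton.2 ⟨p - c * a, hpa, a, by ring⟩
        exact this ▸ ih a ha
  have htop : ⊤ ≤ W := by
    have hπ : LinearMap.range π = ⊤ := LinearMap.range_eq_top.2 (Ideal.Quotient.mkₐ_surjective k L)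
    rw [← hπ, LinearMap.range_eq_map, ← (Decomposition.isInternal 𝒜).submodule_iSup_eq_top,
      Submodule.map_iSup]
    exact iSup_le fun j ↦ Submodule.map_le_iff_le_comap.2 (hW j)
  rw [Module.finite_def, ← top_le_iff.1 htop]
  exact (Submodule.fg_biSup _ _ fun i _ ↦ Module.Finite.iff_fg.1 inferInstance).map π

lemma exists_pow_mem_sup_span_singleton [Infinite k] [∀ i, Module.Finite k (𝒜 i)]
    (hK : K.IsHomogeneous 𝒜) (hc : c ∈ 𝒜 1) (h : ContainsDegreesGE 𝒜 M (K ⊔ Ideal.span {c}))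
    {V : Submodule k A} (hV : V ≤ 𝒜 d) (hcV : c ^ N ∈ Ideal.span (V : Set A)) :
    ∃ Q ∈ V, ∃ N', c ^ N' ∈ K ⊔ Ideal.span {Q} := by
  have := h.finite_quotient_sup_span_sub_one hK hc
  set L := K ⊔ Ideal.span {c - 1}
  have := IsArtinianRing.of_finite k (A ⧸ L)
  have hc1 : Ideal.Quotient.mk L c = 1 :=
    Ideal.Quotient.eq.2 (Ideal.mem_sup_right (Ideal.mem_span_singleton_self _))
  have hspan : Ideal.span (V.map (Ideal.Quotient.mkₐ k L).toLinearMap : Set (A ⧸ L)) = ⊤ := by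
    rw [Ideal.eq_top_iff_one, ← one_pow N, ← hc1, ← map_pow]
    have := Ideal.mem_map_of_mem (Ideal.Quotient.mk L) hcV
    rwa [Ideal.map_span] at this
  obtain ⟨_, ⟨Q, hQ, rfl⟩, hunit⟩ := exists_mem_isUnit_of_span_eq_top _ hspan
  refine ⟨Q, hQ, exists_pow_mem_of_one_mem_sup
    (hK.sup (isHomogeneous_span_singleton 𝒜 (hV hQ))) hc ?_⟩
  obtain ⟨z, hz⟩ := hunit.exists_right_inv
  obtain ⟨z, rfl⟩ := Ideal.Quotient.mk_surjective z
  have hQz : Q * z - 1 ∈ L := Ideal.Quotient.eq.1 hz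
  have hQzQ : Q * z ∈ Ideal.span {Q} := Ideal.mul_mem_right _ _ (Ideal.mem_span_singleton_self Q)
  rw [sup_right_comm]
  simpa using sub_mem (Ideal.mem_sup_right hQzQ) (Ideal.mem_sup_left hQz)

/-- `xs` is a weakly regular sequence on `A ⧸ J` *when read from right to left*: each entry is a
nonzerodivisor modulo `J` and the entries after it. With this order, peeling off the head of the
list removes the last element of the sequence. -/
def IsRegularOn (J : Ideal A) : List A → Prop
  | [] => True
  | c :: cs => IsSMulRegular (A ⧸ J ⊔ Ideal.ofList cs) c ∧ IsRegularOn J cs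

lemma isHomogeneous_sup_ofList (hJ : J.IsHomogeneous 𝒜) (hxs : ∀ x ∈ xs, x ∈ 𝒜 1) :
    (J ⊔ Ideal.ofList xs).IsHomogeneous 𝒜 :=
  hJ.sup (Ideal.homogeneous_span 𝒜 _ fun x hx ↦ ⟨1, hxs x hx⟩)

lemma sup_ofList_cons (J : Ideal A) (c : A) (cs : List A) :
    J ⊔ Ideal.ofList (c :: cs) = J ⊔ Ideal.ofList cs ⊔ Ideal.span {c} := by
  rw [Ideal.ofList_cons, sup_comm (Ideal.span {c}), sup_assoc]

lemma IsRegularOn.sup_span_singleton (hJ : J.IsHomogeneous 𝒜) (hxs : ∀ x ∈ xs, x ∈ 𝒜 1)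
    (h : IsRegularOn J xs) (hb : IsSMulRegular (A ⧸ J ⊔ Ideal.ofList xs) b) :
    IsRegularOn (J ⊔ Ideal.span {b}) xs := by
  induction xs with
  | nil => trivial
  | cons c cs ih =>
    rw [List.forall_mem_cons] at hxs
    rw [sup_ofList_cons] at hb
    refine ⟨?_, ih hxs.2 h.2 (isSMulRegular_quotient_of_sup
      (isHomogeneous_sup_ofList hJ hxs.2) hxs.1 one_pos h.1 hb)⟩
    rw [sup_right_comm]
    exact isSMulRegular_quotient_sup_comm h.1 hb

/-- One after the other the linear forms `xs` are traded for elements of `V`, each of which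
multiplies the colength by at most the degree `d`. -/
theorem colength_span_le_pow_length_mul [Infinite k] [∀ i, Module.Finite k (𝒜 i)]
    {V : Submodule k A} (hV : V ≤ 𝒜 d) (hVN : ContainsDegreesGE 𝒜 N (Ideal.span (V : Set A)))
    (hJ : J.IsHomogeneous 𝒜) (hJV : J ≤ Ideal.span (V : Set A)) (hxs : ∀ x ∈ xs, x ∈ 𝒜 1)
    (hreg : IsRegularOn J xs) (hM : ContainsDegreesGE 𝒜 M (J ⊔ Ideal.ofList xs))
    (hfin : colength k (J ⊔ Ideal.ofList xs) ≠ ⊤) :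
    colength k (Ideal.span (V : Set A)) ≤
      (d ^ xs.length : ℕ) * colength k (J ⊔ Ideal.ofList xs) := by
  induction xs generalizing J M with
  | nil => simpa [Ideal.ofList] using colength_anti k hJV
  | cons c cs ih =>
    rw [List.forall_mem_cons] at hxs
    have ⟨hc, hcs⟩ := hxs
    have hcpow (N : ℕ) : c ^ N ∈ 𝒜 N := by simpa using SetLike.pow_mem_graded N hc
    rw [sup_ofList_cons] at hM hfin ⊢
    set K := J ⊔ Ideal.ofList cs
    have hK : K.IsHomogeneous 𝒜 := isHomogeneous_sup_ofList hJ hcs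
    obtain ⟨Q, hQV, N', hN'⟩ :=
      exists_pow_mem_sup_span_singleton hK hc hM hV (hVN N le_rfl _ (hcpow N))
    have hQ : Q ∈ 𝒜 d := hV hQV
    have hQreg : IsSMulRegular (A ⧸ K) Q := isSMulRegular_quotient_of_pow_mem_sup hreg.1 hN'
    have hMQ : ContainsDegreesGE 𝒜 (M + N') (K ⊔ Ideal.span {Q}) := fun j hj p hp ↦
      sup_le le_sup_left ((Ideal.span_singleton_le_iff_mem _).2 hN')
        (hM.sup_span_pow hK hc N' j (by lia) p hp)
    have hcolen : colength k (K ⊔ Ideal.span {Q}) ≤ d * colength k (K ⊔ Ideal.span {c}) :=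
      colength_sup_le_mul k hQreg (fun s ↦ hMQ.sup_span_pow hK hQ s _ le_rfl _ (hcpow _)) hfin
    have hJQ : J ⊔ Ideal.span {Q} ⊔ Ideal.ofList cs = K ⊔ Ideal.span {Q} := sup_right_comm _ _ _
    calc colength k (Ideal.span (V : Set A))
      _ ≤ (d ^ cs.length : ℕ) * colength k (J ⊔ Ideal.span {Q} ⊔ Ideal.ofList cs) :=
        ih (hJ.sup (isHomogeneous_span_singleton 𝒜 hQ))
          (sup_le hJV ((Ideal.span_singleton_le_iff_mem _).2 (Ideal.subset_span hQV))) hcs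
          (hreg.2.sup_span_singleton hJ hcs hQreg) (hJQ ▸ hMQ)
          (hJQ ▸ ne_top_of_le_ne_top (WithTop.mul_ne_top (ENat.natCast_ne_top d) hfin) hcolen)
      _ ≤ (d ^ cs.length : ℕ) * (d * colength k (K ⊔ Ideal.span {c})) := by rw [hJQ]; gcongr
      _ = _ := by rw [List.length_cons, pow_succ, Nat.cast_mul, mul_assoc]

end Bezout

section BezoutMvPolynomial

open MvPolynomial

attribute [local instance] MvPolynomial.gradedAlgebra

variable {σ ι k : Type*} [Field k] {d N : ℕ}

lemma isRegularOn_map_X {l : List σ} (hl : l.Nodup) :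
    IsRegularOn (⊥ : Ideal (MvPolynomial σ k)) (l.map X) := by
  induction l with
  | nil => trivial
  | cons i l ih =>
    obtain ⟨hil, hl⟩ := List.nodup_cons.1 hl
    refine ⟨isSMulRegular_quotient_iff.2 fun z hz ↦ ?_, ih hl⟩
    have hspan : Ideal.ofList (l.map (X : σ → MvPolynomial σ k)) =
        Ideal.span (X '' {j | j ∈ l}) := by
      simp [Ideal.ofList, Set.image]
    rw [hspan, bot_sup_eq, mem_ideal_span_X_image] at hz ⊢
    intro m hm
    obtain ⟨j, hj, hmj⟩ := hz (Finsupp.single i 1 + m) <| by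
      rwa [mem_support_iff, coeff_X_mul, ← mem_support_iff]
    have hij : i ≠ j := fun h ↦ hil (h ▸ hj)
    exact ⟨j, hj, by simpa [hij] using hmj⟩

lemma containsDegreesGE_idealOfVars :
    ContainsDegreesGE (homogeneousSubmodule σ k) 1 (idealOfVars σ k) := fun j hj p hp ↦ by
  rw [← pow_one (idealOfVars σ k), mem_pow_idealOfVars_iff']
  exact fun α hα ↦ ((mem_homogeneousSubmodule j p).1 hp).coeff_eq_zero (hα.trans_le hj).ne

lemma colength_idealOfVars_le_one : colength k (idealOfVars σ k) ≤ 1 := by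
  rw [← Module.length_eq_one k k]
  refine Module.length_le_of_surjective (Algebra.linearMap k _) fun y ↦ ?_
  obtain ⟨p, rfl⟩ := Ideal.Quotient.mk_surjective y
  refine ⟨coeff 0 p, (Ideal.Quotient.eq (I := idealOfVars σ k) (x := C (coeff 0 p))).2 ?_⟩
  rw [← pow_one (idealOfVars σ k), mem_pow_idealOfVars_iff']
  intro α hα
  obtain rfl : α = 0 := α.degree_eq_zero_iff.1 (Nat.lt_one_iff.1 hα)
  simp

variable [Fintype σ] [Infinite k]

theorem colength_span_range_le_pow_card {P : ι → MvPolynomial σ k}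
    (hP : ∀ i, (P i).IsHomogeneous d)
    (hN : ContainsDegreesGE (homogeneousSubmodule σ k) N (Ideal.span (range P))) :
    colength k (Ideal.span (range P)) ≤ (d ^ Fintype.card σ : ℕ) := by
  have (i : ℕ) : Module.Finite k (homogeneousSubmodule σ k i) :=
    Module.Finite.iff_fg.2 (homogeneousSubmodule_fg σ k i)
  let xs : List (MvPolynomial σ k) := Finset.univ.toList.map X
  have hxs : ∀ x ∈ xs, x ∈ homogeneousSubmodule σ k 1 := by
    simp [xs, isHomogeneous_X]
  have hvars : ⊥ ⊔ Ideal.ofList xs = idealOfVars σ k := by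
    simp [xs, Ideal.ofList, idealOfVars, Set.range]
  have hspan : Ideal.span (Submodule.span k (range P) : Set (MvPolynomial σ k)) =
      Ideal.span (range P) := Submodule.span_span_of_tower k _ _
  rw [← hspan] at hN ⊢
  calc _ ≤ (d ^ xs.length : ℕ) * colength k (⊥ ⊔ Ideal.ofList xs) :=
        colength_span_le_pow_length_mul
          (Submodule.span_le.2 (by rintro _ ⟨i, rfl⟩; exact hP i)) hN
          (Ideal.IsHomogeneous.bot _) bot_le hxs (isRegularOn_map_X (Finset.nodup_toList _))
          (hvars ▸ containsDegreesGE_idealOfVars)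
          (hvars ▸ ne_top_of_le_ne_top ENat.one_ne_top colength_idealOfVars_le_one)
    _ ≤ (d ^ Fintype.card σ : ℕ) * 1 := by
        rw [hvars, List.length_map, Finset.length_toList, Finset.card_univ]
        gcongr
        exact colength_idealOfVars_le_one
    _ = _ := mul_one _

end BezoutMvPolynomial

section MvPolynomialComplement

open MvPolynomial

variable {σ k : Type*} [Field k]

lemma exists_isCompl_restrictSupport (I : Ideal (MvPolynomial σ k)) :
    ∃ s : Set (σ →₀ ℕ), IsCompl (restrictSupport k s) (I.restrictScalars k) := by
  let π : MvPolynomial σ k →ₗ[k] MvPolynomial σ k ⧸ I := (Ideal.Quotient.mkₐ k I).toLinearMap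
  have hker : LinearMap.ker π = I.restrictScalars k :=
    Submodule.ext fun p ↦ Ideal.Quotient.eq_zero_iff_mem
  let mon (α : σ →₀ ℕ) : MvPolynomial σ k := monomial α 1
  obtain ⟨κ, a, -, hspan, hli⟩ := exists_linearIndependent' k (π ∘ mon)
  have hrange : Submodule.span k (range (mon ∘ a)) = restrictSupport k (range a) := by
    rw [restrictSupport_eq_span, range_comp]
  refine ⟨range a, ?_⟩
  rw [← hker, ← hrange]
  refine ⟨Submodule.range_ker_disjoint hli, codisjoint_iff.2 ?_⟩
  rw [← Submodule.comap_map_eq, ← Submodule.span_image, ← range_comp, ← Function.comp_assoc, hspan,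
    range_comp, Submodule.span_image, Submodule.comap_map_eq, ← image_univ,
    ← restrictSupport_eq_span, restrictSupport_univ, top_sup_eq]

lemma homogeneousComponent_mem_restrictSupport {s : Set (σ →₀ ℕ)} {p : MvPolynomial σ k}
    (hp : p ∈ restrictSupport k s) (j : ℕ) : homogeneousComponent j p ∈ restrictSupport k s := by
  rw [mem_restrictSupport_iff] at *
  intro α hα
  refine hp ?_
  simp only [Finset.mem_coe, mem_support_iff, coeff_homogeneousComponent] at hα ⊢
  exact (ite_ne_right_iff.1 hα).2

lemma sub_homogeneousComponent_mem_pow_idealOfVars {p : MvPolynomial σ k} {j : ℕ}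
    (hp : p ∈ idealOfVars σ k ^ j) :
    p - homogeneousComponent j p ∈ idealOfVars σ k ^ (j + 1) := by
  rw [mem_pow_idealOfVars_iff'] at *
  intro α hα
  rw [coeff_sub, coeff_homogeneousComponent]
  split_ifs with h
  · exact sub_self _
  · rw [hp α (by lia), sub_zero]

lemma sum_multichoose_le_colength_pow_idealOfVars [Fintype σ] (K : ℕ) :
    (∑ j ∈ Finset.range K, (Fintype.card σ).multichoose j : ℕ) ≤
      colength k (idealOfVars σ k ^ K) := by
  classical
  let s : Finset (σ →₀ ℕ) :=
    (Finset.range K).biUnion fun j ↦ Finset.univ.finsuppAntidiag j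
  have hs {α : σ →₀ ℕ} : α ∈ s ↔ α.degree < K := by
    simp [s, Finsupp.degree_eq_sum]
  have hcard : s.card = ∑ j ∈ Finset.range K, (Fintype.card σ).multichoose j := by
    rw [Finset.card_biUnion fun i _ j _ hij ↦ Finset.disjoint_left.2 fun α hi hj ↦
      hij ((Finset.mem_finsuppAntidiag.1 hi).1.symm.trans (Finset.mem_finsuppAntidiag.1 hj).1)]
    simp only [Finset.card_finsuppAntidiag_nat_eq_multichoose, Finset.card_univ]
  have hlength : Module.length k (restrictSupport k (s : Set (σ →₀ ℕ))) = s.card := by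
    let B := basisRestrictSupport k (s : Set (σ →₀ ℕ))
    have := B.finiteDimensional_of_finite
    rw [Module.length_eq_finrank, Module.finrank_eq_card_basis B]
    simp
  rw [← hcard, ← hlength]
  let π := (Ideal.Quotient.mkₐ k (idealOfVars σ k ^ K)).toLinearMap
  refine Module.length_le_of_injective (π.domRestrict _) ?_
  rw [← LinearMap.ker_eq_bot, LinearMap.ker_eq_bot']
  rintro ⟨p, hp⟩ hπp
  have hpK := (mem_pow_idealOfVars_iff K p).1 (Ideal.Quotient.eq_zero_iff_mem.1 hπp)
  rw [Submodule.mk_eq_zero, ← support_eq_empty, Finset.eq_empty_iff_forall_notMem]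
  exact fun α hα ↦ (hpK α hα).not_gt (hs.1 ((mem_restrictSupport_iff k).1 hp hα))

end MvPolynomialComplement

section Growth

lemma factorial_mul_sum_multichoose (n N : ℕ) :
    n.factorial * ∑ j ∈ Finset.range (N + 1), n.multichoose j = (N + 1).ascFactorial n := by
  rw [Nat.sum_range_multichoose, Nat.ascFactorial_eq_factorial_mul_choose]

/-- The sums are polynomials in `N` with leading terms `(d * N) ^ n / n!` and `N ^ n / n!`. -/
lemma pow_le_of_sum_multichoose_le {n d r : ℕ} (hd : 0 < d)
    (h : ∀ N, ∑ j ∈ Finset.range (d * N), n.multichoose j ≤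
      (∑ j ∈ Finset.range N, n.multichoose j) * r) : d ^ n ≤ r := by
  have hbound (N : ℕ) : d ^ n * (N + 1) ^ n ≤ r * (N + n) ^ n := by
    obtain ⟨K, hK⟩ : ∃ K, d * (N + 1) = K + 1 := Nat.exists_eq_succ_of_ne_zero (by positivity)
    calc d ^ n * (N + 1) ^ n
      _ = (K + 1) ^ n := by rw [← mul_pow, hK]
      _ ≤ (K + 1).ascFactorial n := Nat.pow_succ_le_ascFactorial _ _
      _ ≤ n.factorial * ((∑ j ∈ Finset.range (N + 1), n.multichoose j) * r) := by
        rw [← factorial_mul_sum_multichoose, ← hK]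
        exact Nat.mul_le_mul_left _ (h _)
      _ = r * (N + 1).ascFactorial n := by rw [← factorial_mul_sum_multichoose]; ring
      _ ≤ r * (N + n) ^ n := by gcongr; exact Nat.ascFactorial_le_pow_add N n
  have hlim : Tendsto (fun N : ℕ ↦ (d : ℝ) ^ n * ((1 + 1 * N) / (n + 1 * N)) ^ n) atTop
      (𝓝 (d ^ n)) := by
    simpa using ((tendsto_add_mul_div_add_mul_atTop_nhds (1 : ℝ) n 1 one_ne_zero).pow n).const_mul
      ((d : ℝ) ^ n)
  suffices (d : ℝ) ^ n ≤ r by exact_mod_cast this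
  refine le_of_tendsto hlim ((eventually_gt_atTop 0).mono fun N hN ↦ ?_)
  rw [div_pow, ← mul_div_assoc, div_le_iff₀ (by positivity), one_mul, add_comm, add_comm (n : ℝ)]
  exact_mod_cast hbound N

end Growth

section RegularCoordinates

open MvPolynomial IsLocalRing

attribute [local instance] MvPolynomial.gradedAlgebra

lemma exists_maximalIdeal_pow_le_of_colength_ne_top {k E : Type*} [Field k] [CommRing E]
    [IsLocalRing E] [Algebra k E] {J : Ideal E} (hJ : colength k J ≠ ⊤) :
    ∃ N, maximalIdeal E ^ N ≤ J := by
  have : IsFiniteLength k (E ⧸ J) := Module.length_ne_top_iff.1 hJ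
  have := (isFiniteLength_iff_isNoetherian_isArtinian.1 this).2
  have : IsArtinianRing (E ⧸ J) := isArtinian_of_tower k this
  exact exists_maximalIdeal_pow_le_of_isArtinianRing_quotient J

/-- `x` is a regular system of coordinates of the local `k`-algebra `E`: it generates the maximal
ideal, the residue field is `k`, and the associated graded ring is the polynomial ring in the
initial forms of `x`. The last two conditions are phrased through representatives in `E`. -/
structure IsRegularCoordinates (k : Type*) {E σ : Type*} [CommRing k] [CommRing E] [IsLocalRing E]
    [Algebra k E] (x : σ → E) : Prop where
  span_range_eq : Ideal.span (range x) = maximalIdeal E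
  exists_sub_algebraMap_mem : ∀ e : E, ∃ r : k, e - algebraMap k E r ∈ maximalIdeal E
  eq_zero_of_aeval_mem : ∀ (j : ℕ) (p : MvPolynomial σ k), p.IsHomogeneous j →
    aeval x p ∈ maximalIdeal E ^ (j + 1) → p = 0

namespace IsRegularCoordinates

variable {k E σ ι : Type*} [Field k] [CommRing E] [IsLocalRing E] [Algebra k E] {x : σ → E}
  {d j K N : ℕ} {p : MvPolynomial σ k} {I : Ideal (MvPolynomial σ k)} {G : Ideal E} {e : E}
  {P : ι → MvPolynomial σ k} {g : ι → E}

lemma map_pow_idealOfVars (hx : IsRegularCoordinates k x) (K : ℕ) :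
    (idealOfVars σ k ^ K).map (aeval x) = maximalIdeal E ^ K := by
  rw [Ideal.map_pow, idealOfVars, Ideal.map_span, ← range_comp, ← hx.span_range_eq]
  congr
  ext
  simp

lemma aeval_mem_pow_of_isHomogeneous (hx : IsRegularCoordinates k x) (hp : p.IsHomogeneous j) :
    aeval x p ∈ maximalIdeal E ^ j :=
  hx.map_pow_idealOfVars j ▸ Ideal.mem_map_of_mem _ ((mem_pow_idealOfVars_iff' j p).2
    fun _ hα ↦ hp.coeff_eq_zero hα.ne)

lemma aeval_mem_pow_iff (hx : IsRegularCoordinates k x) :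
    aeval x p ∈ maximalIdeal E ^ K ↔ p ∈ idealOfVars σ k ^ K := by
  have of_mem {q : MvPolynomial σ k} {j : ℕ} (hq : q ∈ idealOfVars σ k ^ j) :
      aeval x q ∈ maximalIdeal E ^ j := hx.map_pow_idealOfVars j ▸ Ideal.mem_map_of_mem _ hq
  refine ⟨fun h ↦ ?_, of_mem⟩
  induction K with
  | zero => simp
  | succ K ih =>
    have hdiff :=
      sub_homogeneousComponent_mem_pow_idealOfVars (ih (Ideal.pow_le_pow_right K.le_succ h))
    have hzero : homogeneousComponent K p = 0 := by
      refine hx.eq_zero_of_aeval_mem K _ (homogeneousComponent_isHomogeneous K p) ?_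
      simpa using sub_mem h (of_mem hdiff)
    simpa [hzero] using hdiff

lemma exists_isHomogeneous_sub_aeval_mem (hx : IsRegularCoordinates k x)
    (he : e ∈ maximalIdeal E ^ N) :
    ∃ p : MvPolynomial σ k, p.IsHomogeneous N ∧ e - aeval x p ∈ maximalIdeal E ^ (N + 1) := by
  rw [← hx.map_pow_idealOfVars, pow_idealOfVars_eq_span, Ideal.map_span] at he
  induction he using Submodule.span_induction with
  | mem _ h =>
    obtain ⟨_, ⟨α, hα, rfl⟩, rfl⟩ := h
    exact ⟨monomial α 1, isHomogeneous_monomial 1 hα, by simp⟩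
  | zero => exact ⟨0, isHomogeneous_zero _ _ _, by simp⟩
  | add a b _ _ iha ihb =>
    obtain ⟨p, hp, hap⟩ := iha
    obtain ⟨q, hq, hbq⟩ := ihb
    exact ⟨p + q, hp.add hq, by simpa [add_sub_add_comm] using add_mem hap hbq⟩
  | smul a b _ ih =>
    obtain ⟨p, hp, hbp⟩ := ih
    obtain ⟨r, hr⟩ := hx.exists_sub_algebraMap_mem a
    refine ⟨r • p, (homogeneousSubmodule σ k N).smul_mem r hp, ?_⟩
    have : a • b - aeval x (r • p) =
        a * (b - aeval x p) + (a - algebraMap k E r) * aeval x p := by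
      rw [map_smul, smul_eq_mul, Algebra.smul_def]
      ring
    rw [this]
    refine add_mem (Ideal.mul_mem_left _ _ hbp) ?_
    rw [pow_succ']
    exact Ideal.mul_mem_mul hr (hx.aeval_mem_pow_of_isHomogeneous hp)

lemma exists_sub_aeval_mem (hx : IsRegularCoordinates k x) (N : ℕ) (e : E) :
    ∃ p : MvPolynomial σ k, e - aeval x p ∈ maximalIdeal E ^ N := by
  induction N with
  | zero => exact ⟨0, by simp⟩
  | succ N ih =>
    obtain ⟨p, hp⟩ := ih
    obtain ⟨q, -, hq⟩ := hx.exists_isHomogeneous_sub_aeval_mem hp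
    exact ⟨p + q, by rwa [map_add, ← sub_sub]⟩

lemma mem_sup_of_aeval_mem_map (hx : IsRegularCoordinates k x) (K : ℕ)
    (h : aeval x p ∈ I.map (aeval x)) : p ∈ I ⊔ idealOfVars σ k ^ K := by
  have happrox : ∀ e ∈ I.map (aeval x), ∃ q ∈ I, e - aeval x q ∈ maximalIdeal E ^ K := by
    intro e he
    induction he using Submodule.span_induction with
    | mem _ h =>
      obtain ⟨q, hq, rfl⟩ := h
      exact ⟨q, hq, by simp⟩
    | zero => exact ⟨0, zero_mem I, by simp⟩
    | add a b _ _ iha ihb =>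
      obtain ⟨p, hp, hap⟩ := iha
      obtain ⟨q, hq, hbq⟩ := ihb
      exact ⟨p + q, add_mem hp hq, by simpa [add_sub_add_comm] using add_mem hap hbq⟩
    | smul a b _ ih =>
      obtain ⟨q, hq, hbq⟩ := ih
      obtain ⟨r, hr⟩ := hx.exists_sub_aeval_mem K a
      refine ⟨r * q, I.mul_mem_left r hq, ?_⟩
      have : a • b - aeval x (r * q) = a * (b - aeval x q) + (a - aeval x r) * aeval x q := by
        rw [map_mul, smul_eq_mul]
        ring
      exact this ▸ add_mem (Ideal.mul_mem_left _ _ hbq) (Ideal.mul_mem_right _ _ hr)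
  obtain ⟨q, hq, hpq⟩ := happrox _ h
  rw [← map_sub, hx.aeval_mem_pow_iff] at hpq
  exact Submodule.mem_sup.2 ⟨q, hq, p - q, hpq, by ring⟩

lemma containsDegreesGE_of_pow_le_map (hx : IsRegularCoordinates k x)
    (hI : I.IsHomogeneous (homogeneousSubmodule σ k))
    (h : maximalIdeal E ^ N ≤ I.map (aeval x)) :
    ContainsDegreesGE (homogeneousSubmodule σ k) N I := by
  intro j hj p hp
  have hpI := h (Ideal.pow_le_pow_right hj (hx.aeval_mem_pow_of_isHomogeneous hp))
  obtain ⟨q, hq, r, hr, rfl⟩ := Submodule.mem_sup.1 (hx.mem_sup_of_aeval_mem_map (j + 1) hpI)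
  have hr0 : homogeneousComponent j r = 0 := by
    ext α
    rw [coeff_homogeneousComponent, coeff_zero, ite_eq_right_iff]
    exact fun hα ↦ (mem_pow_idealOfVars_iff' _ r).1 hr α (by lia)
  have hcomp := homogeneousComponent_of_mem hp (m := j)
  rw [if_pos rfl, map_add, hr0, add_zero] at hcomp
  exact hcomp ▸ homogeneousComponent_mem_of_mem hI hq j

lemma aeval_mem_span_sup_of_mem_span (hx : IsRegularCoordinates k x)
    (hP : ∀ i, (P i).IsHomogeneous d) (hg : ∀ i, g i - aeval x (P i) ∈ maximalIdeal E ^ (d + 1))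
    (hp : p.IsHomogeneous j) (hpP : p ∈ Ideal.span (range P)) :
    aeval x p ∈ Ideal.span (range g) ⊔ maximalIdeal E ^ (j + 1) := by
  rw [← homogeneousComponent_eq_self hp]
  clear hp
  obtain ⟨c, rfl⟩ := (Finsupp.mem_ideal_span_range_iff_exists_finsupp).1 hpP
  rw [Finsupp.sum, map_sum, map_sum]
  refine sum_mem fun i _ ↦ ?_
  rw [← decomposition.decompose'_apply]
  change aeval x
    (DirectSum.decompose (homogeneousSubmodule σ k) (c i * P i) j : MvPolynomial σ k) ∈ _
  rcases le_or_gt d j with hdj | hjd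
  · obtain ⟨l, rfl⟩ := exists_add_of_le hdj
    rw [mul_comm, DirectSum.coe_decompose_mul_add_of_left_mem _ (hP i)]
    set a := (DirectSum.decompose (homogeneousSubmodule σ k) (c i) l : MvPolynomial σ k)
    have ha : aeval x a ∈ maximalIdeal E ^ l :=
      hx.aeval_mem_pow_of_isHomogeneous
        (SetLike.coe_mem (DirectSum.decompose (homogeneousSubmodule σ k) (c i) l))
    have : aeval x (P i * a) = aeval x a * g i - (g i - aeval x (P i)) * aeval x a := by
      rw [map_mul]
      ring
    rw [this, add_right_comm, pow_add]
    exact sub_mem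
      (Ideal.mem_sup_left (Ideal.mul_mem_left _ _ (Ideal.subset_span (mem_range_self i))))
      (Ideal.mem_sup_right (Ideal.mul_mem_mul (hg i) ha))
  · rw [mul_comm, DirectSum.coe_decompose_mul_of_left_mem_of_not_le _ (hP i) hjd.not_ge, map_zero]
    exact zero_mem _

lemma maximalIdeal_pow_le [Finite σ] (hx : IsRegularCoordinates k x)
    (hI : ContainsDegreesGE (homogeneousSubmodule σ k) N I)
    (hG : ∀ j, ∀ p ∈ I, p.IsHomogeneous j → aeval x p ∈ G ⊔ maximalIdeal E ^ (j + 1)) :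
    maximalIdeal E ^ N ≤ G := by
  have hfg : (maximalIdeal E).FG := hx.span_range_eq ▸ Submodule.fg_span (finite_range x)
  refine Submodule.le_of_le_smul_of_le_jacobson_bot (hfg.pow (n := N)) (maximalIdeal_le_jacobson ⊥)
    fun e he ↦ ?_
  rw [smul_eq_mul, ← pow_succ']
  obtain ⟨p, hp, hep⟩ := hx.exists_isHomogeneous_sub_aeval_mem he
  rw [← add_sub_cancel (aeval x p) e]
  exact add_mem (hG N p (hI N le_rfl p hp) hp) (Ideal.mem_sup_right hep)

lemma exists_sub_aeval_add_mem_of_isCompl (hx : IsRegularCoordinates k x)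
    (hI : I.IsHomogeneous (homogeneousSubmodule σ k))
    (hG : ∀ j, ∀ p ∈ I, p.IsHomogeneous j → aeval x p ∈ G ⊔ maximalIdeal E ^ (j + 1))
    {s : Set (σ →₀ ℕ)} (hs : IsCompl (restrictSupport k s) (I.restrictScalars k)) (N : ℕ) (e : E) :
    ∃ q ∈ restrictSupport k s, ∃ v ∈ G, e - (aeval x q + v) ∈ maximalIdeal E ^ N := by
  induction N with
  | zero => exact ⟨0, zero_mem _, 0, zero_mem _, by simp⟩
  | succ N ih =>
    obtain ⟨q, hq, v, hv, he⟩ := ih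
    obtain ⟨p, hp, hep⟩ := hx.exists_isHomogeneous_sub_aeval_mem he
    obtain ⟨q', hq', u, hu, hqu⟩ :=
      Submodule.mem_sup.1 (hs.sup_eq_top.ge (Submodule.mem_top (x := p)))
    have hpN : p = homogeneousComponent N q' + homogeneousComponent N u := by
      rw [← map_add, hqu, homogeneousComponent_eq_self hp]
    obtain ⟨v', hv', w, hw, hvw⟩ := Submodule.mem_sup.1 <| hG N _
      (homogeneousComponent_mem_of_mem hI hu N) (homogeneousComponent_isHomogeneous N u)
    refine ⟨q + homogeneousComponent N q',
      add_mem hq (homogeneousComponent_mem_restrictSupport hq' N), v + v', add_mem hv hv', ?_⟩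
    have : e - (aeval x (q + homogeneousComponent N q') + (v + v')) =
        e - (aeval x q + v) - aeval x p + w := by
      rw [hpN, map_add, map_add, ← hvw]
      ring
    exact this ▸ add_mem hep hw

lemma colength_le_of_isHomogeneous [Finite σ] (hx : IsRegularCoordinates k x)
    (hI : I.IsHomogeneous (homogeneousSubmodule σ k))
    (hN : ContainsDegreesGE (homogeneousSubmodule σ k) N I)
    (hG : ∀ j, ∀ p ∈ I, p.IsHomogeneous j → aeval x p ∈ G ⊔ maximalIdeal E ^ (j + 1)) :
    colength k G ≤ colength k I := by
  obtain ⟨s, hs⟩ := exists_isCompl_restrictSupport I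
  let π : restrictSupport k s →ₗ[k] E ⧸ G :=
    (Ideal.Quotient.mkₐ k G).toLinearMap ∘ₗ (aeval x).toLinearMap ∘ₗ Submodule.subtype _
  have hπ : Function.Surjective π := fun y ↦ by
    obtain ⟨e, rfl⟩ := Ideal.Quotient.mk_surjective y
    obtain ⟨q, hq, v, hv, he⟩ := hx.exists_sub_aeval_add_mem_of_isCompl hI hG hs N e
    refine ⟨⟨q, hq⟩, (Ideal.Quotient.eq.2 ?_).symm⟩
    simpa [← sub_sub] using add_mem (hx.maximalIdeal_pow_le hN hG he) hv
  calc colength k G ≤ Module.length k (restrictSupport k s) := Module.length_le_of_surjective π hπ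
    _ = colength k I := (Submodule.quotientEquivOfIsCompl _ _ hs.symm).length_eq.symm

lemma colength_pow_idealOfVars_le (hx : IsRegularCoordinates k x) (K : ℕ) :
    colength k (idealOfVars σ k ^ K) ≤ colength k (maximalIdeal E ^ K) := by
  have hcomap : (maximalIdeal E ^ K).comap (aeval x) = idealOfVars σ k ^ K :=
    Ideal.ext fun _ ↦ hx.aeval_mem_pow_iff
  exact hcomap ▸ colength_comap_le k (aeval x) (maximalIdeal E ^ K)

lemma pow_card_le_colength [Fintype σ] [Fintype ι] (hx : IsRegularCoordinates k x)
    (hι : Fintype.card ι = Fintype.card σ) (hg : ∀ i, g i ∈ maximalIdeal E ^ d) :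
    (d ^ Fintype.card σ : ℕ) ≤ colength k (Ideal.span (range g)) := by
  rcases d.eq_zero_or_pos with rfl | hd
  · rcases isEmpty_or_nonempty σ with hσ | hσ
    · have hι0 : IsEmpty ι := by rwa [← Fintype.card_eq_zero_iff, hι, Fintype.card_eq_zero_iff]
      have : Nontrivial (E ⧸ Ideal.span (range g)) := by
        rw [range_eq_empty, Ideal.span_empty]
        exact Ideal.Quotient.nontrivial_iff.2 bot_ne_top
      have hpos : 0 < colength k (Ideal.span (range g)) := Module.length_pos
      simpa [Order.one_le_iff_pos] using hpos
    · simp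
  by_cases htop : colength k (Ideal.span (range g)) = ⊤
  · simp [htop]
  lift colength k (Ideal.span (range g)) to ℕ using htop with r hr
  refine Nat.cast_le.2 (pow_le_of_sum_multichoose_le hd fun N ↦ ?_)
  have hle : Ideal.span (range g) ≤ maximalIdeal E ^ d :=
    Ideal.span_le.2 (range_subset_iff.2 hg)
  have : ((∑ j ∈ Finset.range (d * N), (Fintype.card σ).multichoose j : ℕ) : ℕ∞) ≤
      (∑ j ∈ Finset.range N, (Fintype.card σ).multichoose j : ℕ) * r :=
    calc _ ≤ colength k (idealOfVars σ k ^ (d * N)) := sum_multichoose_le_colength_pow_idealOfVars _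
      _ ≤ colength k (maximalIdeal E ^ (d * N)) := hx.colength_pow_idealOfVars_le _
      _ ≤ colength k (Ideal.span (range g) ^ N) :=
        colength_anti k (pow_mul (maximalIdeal E) d N ▸ Ideal.pow_right_mono hle N)
      _ ≤ _ := hr ▸ hι ▸ colength_span_range_pow_le k g N
  exact_mod_cast this

/-- The hypothesis `hfin` says that the initial forms `P i` have no common zero but the origin over
the algebraic closure. -/
theorem colength_span_range_eq_pow_card [Infinite k] [Fintype σ] [Fintype ι]
    (hx : IsRegularCoordinates k x) (hι : Fintype.card ι = Fintype.card σ)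
    (hP : ∀ i, (P i).IsHomogeneous d) (hg : ∀ i, g i - aeval x (P i) ∈ maximalIdeal E ^ (d + 1))
    (hfin : colength k (Ideal.span (range fun i ↦ aeval x (P i))) ≠ ⊤) :
    colength k (Ideal.span (range g)) = (d ^ Fintype.card σ : ℕ) := by
  set I := Ideal.span (range P)
  have hmap : I.map (aeval x) = Ideal.span (range fun i ↦ aeval x (P i)) := by
    rw [Ideal.map_span, ← range_comp]
    rfl
  obtain ⟨N, hN⟩ := exists_maximalIdeal_pow_le_of_colength_ne_top hfin
  have hI : I.IsHomogeneous (homogeneousSubmodule σ k) :=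
    Ideal.homogeneous_span _ _ (forall_mem_range.2 fun i ↦ ⟨d, hP i⟩)
  have hI_deg := hx.containsDegreesGE_of_pow_le_map hI (hmap ▸ hN)
  refine le_antisymm ?_ (hx.pow_card_le_colength hι fun i ↦ ?_)
  · exact (hx.colength_le_of_isHomogeneous hI hI_deg
      fun j p hpI hp ↦ hx.aeval_mem_span_sup_of_mem_span hP hg hp hpI).trans
      (colength_span_range_le_pow_card hP hI_deg)
  · rw [← sub_add_cancel (g i) (aeval x (P i))]
    exact add_mem (Ideal.pow_le_pow_right d.le_succ (hg i))
      (hx.aeval_mem_pow_of_isHomogeneous (hP i))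

end IsRegularCoordinates

end RegularCoordinates

section Hadamard

open ContinuousLinearMap

universe u

variable {H : Type u} [NormedAddCommGroup H] [NormedSpace ℝ H] [ProperSpace H]

lemma hasFDerivAt_intervalIntegral_of_contDiff_one {F : Type*} [NormedAddCommGroup F]
    [NormedSpace ℝ F] {Φ : H × ℝ → F} (hΦ : ContDiff ℝ 1 Φ) (x : H) :
    HasFDerivAt (fun y ↦ ∫ t in (0 : ℝ)..1, Φ (y, t))
      (∫ t in (0 : ℝ)..1, fderiv ℝ Φ (x, t) ∘L inl ℝ H ℝ) x := by
  have hcont : Continuous fun z ↦ fderiv ℝ Φ z ∘L inl ℝ H ℝ :=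
    (hΦ.continuous_fderiv one_ne_zero).clm_comp continuous_const
  obtain ⟨C, hC⟩ := ((isCompact_closedBall x 1).prod (isCompact_Icc (a := (0 : ℝ)) (b := 1))
    ).exists_bound_of_continuousOn hcont.continuousOn
  have hline (y : H) : Continuous fun t : ℝ ↦ (y, t) := by fun_prop
  refine intervalIntegral.hasFDerivAt_integral_of_dominated_of_fderiv_le
    (F := fun y t ↦ Φ (y, t)) (F' := fun y t ↦ fderiv ℝ Φ (y, t) ∘L inl ℝ H ℝ)
    (bound := fun _ ↦ C) (ball_mem_nhds x one_pos)
    (.of_forall fun y ↦ (hΦ.continuous.comp (hline y)).aestronglyMeasurable)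
    ((hΦ.continuous.comp (hline x)).intervalIntegrable _ _)
    (hcont.comp (hline x)).aestronglyMeasurable
    (.of_forall fun t ht y hy ↦ hC _ ⟨ball_subset_closedBall hy, ?_⟩)
    intervalIntegrable_const
    (.of_forall fun t _ y _ ↦ ?_)
  · rw [uIoc_of_le zero_le_one] at ht
    exact Ioc_subset_Icc_self ht
  · exact (hΦ.differentiable one_ne_zero (y, t)).hasFDerivAt.comp y (hasFDerivAt_prodMk_left y t)

lemma contDiff_nat_intervalIntegral (k : ℕ) {F : Type u} [NormedAddCommGroup F] [NormedSpace ℝ F]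
    {Φ : H × ℝ → F} (hΦ : ContDiff ℝ k Φ) :
    ContDiff ℝ k fun x ↦ ∫ t in (0 : ℝ)..1, Φ (x, t) := by
  induction k generalizing F with
  | zero =>
    rw [Nat.cast_zero, contDiff_zero] at hΦ ⊢
    exact intervalIntegral.continuous_parametric_intervalIntegral_of_continuous'
      (f := fun x t ↦ Φ (x, t)) hΦ 0 1
  | succ k ih =>
    push_cast
    rw [contDiff_succ_iff_hasFDerivAt]
    refine ⟨_, ih ((hΦ.fderiv_right (by norm_cast)).clm_comp contDiff_const),
      hasFDerivAt_intervalIntegral_of_contDiff_one (hΦ.of_le ?_)⟩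
    exact_mod_cast Nat.le_add_left 1 k

lemma contDiff_infty_intervalIntegral {F : Type u} [NormedAddCommGroup F] [NormedSpace ℝ F]
    {Φ : H × ℝ → F} (hΦ : ContDiff ℝ (⊤ : ℕ∞) Φ) :
    ContDiff ℝ (⊤ : ℕ∞) fun x ↦ ∫ t in (0 : ℝ)..1, Φ (x, t) :=
  contDiff_infty.2 fun k ↦ contDiff_nat_intervalIntegral k (contDiff_infty.1 hΦ k)

lemma exists_contDiff_eq_add_apply_self {F : Type u} [NormedAddCommGroup F] [NormedSpace ℝ F]
    [CompleteSpace F] {f : H → F} (hf : ContDiff ℝ (⊤ : ℕ∞) f) :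
    ∃ q : H → H →L[ℝ] F, ContDiff ℝ (⊤ : ℕ∞) q ∧ ∀ x, f x = f 0 + q x x := by
  have hΦ : ContDiff ℝ (⊤ : ℕ∞) fun z : H × ℝ ↦ fderiv ℝ f (z.2 • z.1) :=
    (hf.fderiv_right (by norm_cast)).comp (contDiff_snd.smul contDiff_fst)
  refine ⟨_, contDiff_infty_intervalIntegral hΦ, fun x ↦ ?_⟩
  have hcont : Continuous fun t : ℝ ↦ fderiv ℝ f (t • x) :=
    hΦ.continuous.comp (by fun_prop : Continuous fun t : ℝ ↦ (x, t))
  have hderiv (t : ℝ) : HasDerivAt (fun t : ℝ ↦ f (t • x)) (fderiv ℝ f (t • x) x) t := by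
    have hline : HasDerivAt (fun t : ℝ ↦ t • x) x t := by
      simpa using (hasDerivAt_id t).smul_const x
    exact (hf.differentiable (by simp) (t • x)).hasFDerivAt.comp_hasDerivAt t hline
  rw [ContinuousLinearMap.intervalIntegral_apply (hcont.intervalIntegrable _ _),
    intervalIntegral.integral_eq_sub_of_hasDerivAt (fun t _ ↦ hderiv t)
      ((hcont.clm_apply continuous_const).intervalIntegrable _ _)]
  simp

end Hadamard

section SmoothGerms

open MvPolynomial IsLocalRing

variable {n : ℕ} {f g : Eucl n → ℝ}

/-- The element of `E_n` represented by a smooth function. -/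
def germ (f : Eucl n → ℝ) (hf : ContDiff ℝ (⊤ : ℕ∞) f) : smoothGerms n := ⟨f, f, hf, rfl⟩

lemma exists_germ_eq (e : smoothGerms n) : ∃ f, ∃ hf : ContDiff ℝ (⊤ : ℕ∞) f, germ f hf = e := by
  obtain ⟨e, f, hf, rfl⟩ := e
  exact ⟨f, hf, rfl⟩

lemma germ_eq_germ_iff (hf : ContDiff ℝ (⊤ : ℕ∞) f) (hg : ContDiff ℝ (⊤ : ℕ∞) g) :
    germ f hf = germ g hg ↔ f =ᶠ[𝓝 0] g :=
  Subtype.ext_iff.trans Filter.Germ.coe_eq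

lemma germ_add (hf : ContDiff ℝ (⊤ : ℕ∞) f) (hg : ContDiff ℝ (⊤ : ℕ∞) g) :
    germ f hf + germ g hg = germ (fun x ↦ f x + g x) (hf.add hg) := rfl

lemma germ_sub (hf : ContDiff ℝ (⊤ : ℕ∞) f) (hg : ContDiff ℝ (⊤ : ℕ∞) g) :
    germ f hf - germ g hg = germ (fun x ↦ f x - g x) (hf.sub hg) := rfl

lemma germ_mul (hf : ContDiff ℝ (⊤ : ℕ∞) f) (hg : ContDiff ℝ (⊤ : ℕ∞) g) :
    germ f hf * germ g hg = germ (fun x ↦ f x * g x) (hf.mul hg) := rfl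

lemma germ_sum {ι : Type*} (s : Finset ι) {f : ι → Eucl n → ℝ}
    (hf : ∀ i, ContDiff ℝ (⊤ : ℕ∞) (f i)) :
    ∑ i ∈ s, germ (f i) (hf i) = germ (fun x ↦ ∑ i ∈ s, f i x) (.sum fun i _ ↦ hf i) := by
  classical
  induction s using Finset.induction_on with
  | empty => simp only [Finset.sum_empty]; rfl
  | insert a s ha ih => simp only [Finset.sum_insert ha, ih, germ_add]

lemma algebraMap_eq_germ (r : ℝ) :
    algebraMap ℝ (smoothGerms n) r = germ (fun _ ↦ r) contDiff_const := by
  refine Subtype.ext <| (Algebra.algebraMap_eq_smul_one r).trans ?_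
  rw [← Filter.Germ.coe_one, ← Filter.Germ.coe_smul]
  exact congrArg _ (funext fun _ ↦ mul_one r)

/-- The germs of the coordinate functions of `ℝ^n`. -/
def coord (n : ℕ) (i : Fin n) : smoothGerms n := germ (fun x ↦ x i) (by fun_prop)

lemma contDiff_eval (p : MvPolynomial (Fin n) ℝ) :
    ContDiff ℝ (⊤ : ℕ∞) fun x : Eucl n ↦ eval x p :=
  (AnalyticOnNhd.aeval_mvPolynomial (s := univ)
    (fun i ↦ (EuclideanSpace.proj i : Eucl n →L[ℝ] ℝ).analyticOnNhd univ) p).contDiff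

lemma aeval_coord (p : MvPolynomial (Fin n) ℝ) :
    aeval (coord n) p = germ (fun x ↦ eval x p) (contDiff_eval p) := by
  induction p using MvPolynomial.induction_on with
  | C r => simp only [algHom_C, algebraMap_eq_germ, eval_C]
  | add p q hp hq => simp only [map_add, hp, hq, germ_add]
  | mul_X p i hp => simp only [map_mul, hp, aeval_X, coord, germ_mul, eval_X]

/-- Evaluation of a germ at the origin. -/
def valueAtZero (n : ℕ) : smoothGerms n →+* ℝ :=
  Filter.Germ.valueRingHom.comp (smoothGerms n).subtype

lemma valueAtZero_germ (hf : ContDiff ℝ (⊤ : ℕ∞) f) : valueAtZero n (germ f hf) = f 0 := rfl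

lemma isUnit_germ (hf : ContDiff ℝ (⊤ : ℕ∞) f) (hf0 : f 0 ≠ 0) : IsUnit (germ f hf) := by
  obtain ⟨r, hr, hrf⟩ := nhds_basis_closedBall.eventually_iff.1
    (hf.continuous.continuousAt.eventually_ne hf0)
  -- the inverse of `f` near `0`, cut off to a globally smooth function
  let χ : ContDiffBump (0 : Eucl n) := ⟨r / 2, r, half_pos hr, half_lt_self hr⟩
  have hinv : ContDiff ℝ (⊤ : ℕ∞) fun x ↦ χ x * (f x)⁻¹ := by
    refine contMDiff_iff_contDiff.1 <| contMDiff_of_tsupport fun x hx ↦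
      (χ.contDiffAt.mul (hf.contDiffAt.inv (hrf ?_))).contMDiffAt
    exact χ.tsupport_eq ▸ tsupport_mul_subset_left hx
  refine .of_mul_eq_one (germ _ hinv) ?_
  rw [germ_mul, ← map_one (algebraMap ℝ (smoothGerms n)), algebraMap_eq_germ, germ_eq_germ_iff]
  filter_upwards [χ.eventuallyEq_one, closedBall_mem_nhds 0 hr] with x hχ hx
  rw [hχ, Pi.one_apply, one_mul, mul_inv_cancel₀ (hrf hx)]

instance isLocalHom_valueAtZero : IsLocalHom (valueAtZero n) where
  map_nonunit e he := by
    obtain ⟨f, hf, rfl⟩ := exists_germ_eq e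
    exact isUnit_germ hf he.ne_zero

instance isLocalRing_smoothGerms : IsLocalRing (smoothGerms n) :=
  (valueAtZero n).domain_isLocalRing

lemma germ_mem_maximalIdeal_iff (hf : ContDiff ℝ (⊤ : ℕ∞) f) :
    germ f hf ∈ maximalIdeal (smoothGerms n) ↔ f 0 = 0 := by
  rw [← maximalIdeal_comap (valueAtZero n), Ideal.mem_comap, valueAtZero_germ, maximalIdeal_eq_bot,
    Ideal.mem_bot]

lemma span_range_coord :
    Ideal.span (range (coord n)) = maximalIdeal (smoothGerms n) := by
  refine le_antisymm (Ideal.span_le.2 ?_) fun e he ↦ ?_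
  · rintro _ ⟨i, rfl⟩
    exact (germ_mem_maximalIdeal_iff _).2 rfl
  · obtain ⟨f, hf, rfl⟩ := exists_germ_eq e
    obtain ⟨q, hq, hfq⟩ := exists_contDiff_eq_add_apply_self hf
    have hqi (i : Fin n) : ContDiff ℝ (⊤ : ℕ∞) fun x ↦ q x (EuclideanSpace.single i 1) :=
      hq.clm_apply contDiff_const
    have hsum : germ f hf = ∑ i, germ _ (hqi i) * coord n i := by
      simp only [coord, germ_mul]
      rw [germ_sum _ fun i ↦ (hqi i).mul (by fun_prop), germ_eq_germ_iff]
      refine .of_forall fun x ↦ ?_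
      rw [hfq, (germ_mem_maximalIdeal_iff hf).1 he, zero_add]
      nth_rw 2 [← (EuclideanSpace.basisFun (Fin n) ℝ).sum_repr x]
      simp only [map_sum, map_smul, smul_eq_mul, mul_comm, EuclideanSpace.basisFun_repr,
        EuclideanSpace.basisFun_apply]
    rw [hsum]
    exact Ideal.sum_mem _ fun i _ ↦ Ideal.mul_mem_left _ _ (Ideal.subset_span ⟨i, rfl⟩)

end SmoothGerms

section RegularCoordinatesSmoothGerms

open MvPolynomial IsLocalRing

variable {n : ℕ} {f : Eucl n → ℝ}

lemma isBigO_of_germ_mem_pow (v : Eucl n) {N : ℕ} (hf : ContDiff ℝ (⊤ : ℕ∞) f)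
    (hfN : germ f hf ∈ maximalIdeal (smoothGerms n) ^ N) :
    (fun t : ℝ ↦ f (t • v)) =O[𝓝[>] 0] fun t ↦ t ^ N := by
  have hline : Tendsto (fun t : ℝ ↦ t • v) (𝓝[>] 0) (𝓝 0) := by
    simpa using ((by fun_prop : Continuous fun t : ℝ ↦ t • v).tendsto 0).mono_left
      nhdsWithin_le_nhds
  induction N generalizing f with
  | zero => simpa using ((hf.continuous.tendsto 0).comp hline).isBigO_one ℝ
  | succ N ih =>
    rw [pow_succ] at hfN
    generalize he : germ f hf = e at hfN
    induction hfN using Submodule.mul_induction_on' generalizing f with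
    | mem_mul_mem a ha b hb =>
      obtain ⟨a, hsmooth_a, rfl⟩ := exists_germ_eq a
      obtain ⟨b, hsmooth_b, rfl⟩ := exists_germ_eq b
      have hbO : (fun t : ℝ ↦ b (t • v)) =O[𝓝[>] 0] fun t ↦ t := by
        have := (hsmooth_b.differentiable (by simp) 0).isBigO_sub.comp_tendsto hline
        simp only [(germ_mem_maximalIdeal_iff _).1 hb, Function.comp_def, sub_zero] at this
        exact this.trans (.of_bound ‖v‖ (.of_forall fun t ↦ by rw [norm_smul, mul_comm]))
      rw [germ_mul, germ_eq_germ_iff] at he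
      simp only [pow_succ]
      exact ((ih hsmooth_a ha).mul hbO).congr' (hline.eventually he.symm) .rfl
    | add a _ b _ iha ihb =>
      obtain ⟨a, hsmooth_a, rfl⟩ := exists_germ_eq a
      obtain ⟨b, hsmooth_b, rfl⟩ := exists_germ_eq b
      rw [germ_add, germ_eq_germ_iff] at he
      exact ((iha hsmooth_a rfl).add (ihb hsmooth_b rfl)).congr' (hline.eventually he.symm) .rfl

lemma eval_smul_of_isHomogeneous {σ R : Type*} [CommSemiring R] {p : MvPolynomial σ R} {d : ℕ}
    (hp : p.IsHomogeneous d) (t : R) (x : σ → R) : eval (t • x) p = eval x p * t ^ d := by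
  rw [eval_eq, eval_eq, Finset.sum_mul]
  refine Finset.sum_congr rfl fun e he ↦ ?_
  have hdeg : ∑ i ∈ e.support, e i = d :=
    (Finsupp.degree_eq_weight_one (R := ℕ) ▸ hp (mem_support_iff.1 he) : e.degree = d)
  simp only [Pi.smul_apply, smul_eq_mul, mul_pow, Finset.prod_mul_distrib,
    Finset.prod_pow_eq_pow_sum, hdeg]
  ring

lemma pow_succ_isBigO_pow (N : ℕ) : (fun t : ℝ ↦ t ^ (N + 1)) =O[𝓝[>] 0] fun t ↦ t ^ N :=
  (isLittleO_pow_pow N.lt_succ_self).isBigO.mono nhdsWithin_le_nhds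

lemma coeff_eq_zero_of_isBigO {p : Polynomial ℝ} {N j : ℕ}
    (hp : (fun t ↦ p.eval t) =O[𝓝[>] (0 : ℝ)] fun t ↦ t ^ N) (hj : j < N) : p.coeff j = 0 := by
  suffices h : Polynomial.X ^ N ∣ p from Polynomial.X_pow_dvd_iff.1 h j hj
  clear hj
  induction N with
  | zero => simp
  | succ N ih =>
    obtain ⟨r, rfl⟩ := ih (hp.trans (pow_succ_isBigO_pow N))
    have hr : (fun t ↦ r.eval t) =O[𝓝[>] (0 : ℝ)] fun t ↦ t := by
      refine ((isBigO_refl (fun t : ℝ ↦ (t ^ N)⁻¹) _).mul hp).congr' ?_ ?_ <;>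
      · filter_upwards [self_mem_nhdsWithin] with t (ht : 0 < t)
        simp [field, pow_succ]
    have hr0 : r.IsRoot 0 := tendsto_nhds_unique
      ((r.continuous.tendsto 0).mono_left nhdsWithin_le_nhds)
      (hr.trans_tendsto (tendsto_id.mono_left nhdsWithin_le_nhds))
    rw [pow_succ]
    exact mul_dvd_mul_left _ (by simpa using Polynomial.dvd_iff_isRoot.2 hr0)

lemma eq_zero_of_eval_smul_isBigO {p : MvPolynomial (Fin n) ℝ} {d : ℕ} (hp : p.IsHomogeneous d)
    (hO : ∀ v : Eucl n, (fun t : ℝ ↦ eval (t • v) p) =O[𝓝[>] 0] fun t ↦ t ^ (d + 1)) : p = 0 := by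
  refine MvPolynomial.funext fun x ↦ ?_
  have hmon : (fun t ↦ (Polynomial.monomial d (eval x p)).eval t) =O[𝓝[>] (0 : ℝ)]
      fun t ↦ t ^ (d + 1) :=
    (hO (WithLp.toLp 2 x)).congr_left fun t ↦ by
      simpa using eval_smul_of_isHomogeneous hp t x
  simpa using coeff_eq_zero_of_isBigO hmon d.lt_succ_self

lemma isRegularCoordinates_coord : IsRegularCoordinates ℝ (coord n) where
  span_range_eq := span_range_coord
  exists_sub_algebraMap_mem e := by
    obtain ⟨f, hf, rfl⟩ := exists_germ_eq e
    refine ⟨f 0, ?_⟩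
    rw [algebraMap_eq_germ, germ_sub, germ_mem_maximalIdeal_iff, sub_self]
  eq_zero_of_aeval_mem j p hp hmem := by
    rw [aeval_coord] at hmem
    exact eq_zero_of_eval_smul_isBigO hp fun v ↦ isBigO_of_germ_mem_pow v _ hmem

lemma germ_mem_pow_of_isBigO {N : ℕ} (hf : ContDiff ℝ (⊤ : ℕ∞) f)
    (hO : ∀ v : Eucl n, (fun t : ℝ ↦ f (t • v)) =O[𝓝[>] 0] fun t ↦ t ^ N) :
    germ f hf ∈ maximalIdeal (smoothGerms n) ^ N := by
  induction N with
  | zero => simp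
  | succ N ih =>
    obtain ⟨p, hp, hfp⟩ := isRegularCoordinates_coord.exists_isHomogeneous_sub_aeval_mem
      (ih fun v ↦ (hO v).trans (pow_succ_isBigO_pow N))
    have hp0 : p = 0 := by
      refine eq_zero_of_eval_smul_isBigO hp fun v ↦ ?_
      rw [aeval_coord, germ_sub] at hfp
      simpa using (hO v).sub (isBigO_of_germ_mem_pow v _ hfp)
    simpa [hp0] using hfp

end RegularCoordinatesSmoothGerms

lemma derivation_apply_mem_pow {R A : Type*} [CommSemiring R] [CommSemiring A] [Algebra R A]
    (D : Derivation R A A) {I : Ideal A} {N : ℕ} {a : A} (ha : a ∈ I ^ (N + 1)) : D a ∈ I ^ N := by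
  induction N generalizing a with
  | zero => simp
  | succ N ih =>
    rw [pow_succ] at ha
    induction ha using Submodule.mul_induction_on' with
    | mem_mul_mem b hb c hc =>
      rw [D.leibniz, smul_eq_mul, smul_eq_mul, mul_comm c]
      exact add_mem (Ideal.mul_mem_right _ _ hb) (pow_succ I N ▸ Ideal.mul_mem_mul (ih hb) hc)
    | add b _ c _ ihb ihc => exact map_add D b c ▸ add_mem ihb ihc

section PartialDerivatives

open MvPolynomial IsLocalRing

variable {n : ℕ} {f : Eucl n → ℝ} (i : Fin n)

lemma contDiff_fderiv_single (hf : ContDiff ℝ (⊤ : ℕ∞) f) :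
    ContDiff ℝ (⊤ : ℕ∞) fun x ↦ fderiv ℝ f x (EuclideanSpace.single i 1) :=
  (hf.fderiv_right (by norm_cast)).clm_apply contDiff_const

/-- The map induced on germs by `∂/∂x_i`, computed on a chosen representative; it underlies the
derivation `partialDeriv`. -/
def partialDerivFun (e : smoothGerms n) : smoothGerms n :=
  germ _ (contDiff_fderiv_single i (exists_germ_eq e).choose_spec.choose)

lemma partialDerivFun_germ (hf : ContDiff ℝ (⊤ : ℕ∞) f) :
    partialDerivFun i (germ f hf) = germ _ (contDiff_fderiv_single i hf) := by
  have hrep := (germ_eq_germ_iff _ hf).1 (exists_germ_eq (germ f hf)).choose_spec.choose_spec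
  refine (germ_eq_germ_iff _ _).2 ?_
  filter_upwards [hrep.fderiv (𝕜 := ℝ)] with x hx
  rw [hx]

lemma partialDerivFun_add (a b : smoothGerms n) :
    partialDerivFun i (a + b) = partialDerivFun i a + partialDerivFun i b := by
  obtain ⟨a, ha, rfl⟩ := exists_germ_eq a
  obtain ⟨b, hb, rfl⟩ := exists_germ_eq b
  simp only [germ_add, partialDerivFun_germ, germ_eq_germ_iff]
  refine .of_forall fun x ↦ ?_
  dsimp only
  rw [fderiv_fun_add (ha.differentiable (by simp) x) (hb.differentiable (by simp) x)]
  rfl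

lemma partialDerivFun_mul (a b : smoothGerms n) :
    partialDerivFun i (a * b) = a • partialDerivFun i b + b • partialDerivFun i a := by
  obtain ⟨a, ha, rfl⟩ := exists_germ_eq a
  obtain ⟨b, hb, rfl⟩ := exists_germ_eq b
  simp only [smul_eq_mul, germ_mul, partialDerivFun_germ, germ_add, germ_eq_germ_iff]
  refine .of_forall fun x ↦ ?_
  dsimp only
  rw [fderiv_fun_mul (ha.differentiable (by simp) x) (hb.differentiable (by simp) x)]
  rfl

lemma partialDerivFun_algebraMap (r : ℝ) :
    partialDerivFun i (algebraMap ℝ (smoothGerms n) r) = 0 := by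
  rw [algebraMap_eq_germ, partialDerivFun_germ, ← map_zero (algebraMap ℝ (smoothGerms n)),
    algebraMap_eq_germ]
  simp

/-- The partial derivative `∂/∂x_i` as a derivation of `E_n`. -/
def partialDeriv : Derivation ℝ (smoothGerms n) (smoothGerms n) :=
  .mk'
    { toFun := partialDerivFun i
      map_add' := partialDerivFun_add i
      map_smul' := fun r a ↦ by
        rw [Algebra.smul_def, partialDerivFun_mul, partialDerivFun_algebraMap, smul_zero, add_zero,
          algebraMap_smul, RingHom.id_apply] }
    (partialDerivFun_mul i)

lemma partialDeriv_germ (hf : ContDiff ℝ (⊤ : ℕ∞) f) :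
    partialDeriv i (germ f hf) = germ _ (contDiff_fderiv_single i hf) :=
  partialDerivFun_germ i hf

lemma partialDeriv_coord (j : Fin n) :
    partialDeriv i (coord n j) = aeval (coord n) (pderiv i (X j : MvPolynomial (Fin n) ℝ)) := by
  have hfderiv (x : Eucl n) : fderiv ℝ (fun y : Eucl n ↦ y j) x = EuclideanSpace.proj j :=
    (EuclideanSpace.proj j : Eucl n →L[ℝ] ℝ).fderiv
  rw [coord, partialDeriv_germ, pderiv_X, aeval_coord, germ_eq_germ_iff]
  refine .of_forall fun x ↦ ?_
  rcases eq_or_ne i j with rfl | hij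
  · simp [hfderiv]
  · simp [hfderiv, hij.symm]

lemma partialDeriv_aeval_coord (p : MvPolynomial (Fin n) ℝ) :
    partialDeriv i (aeval (coord n) p) = aeval (coord n) (pderiv i p) := by
  induction p using MvPolynomial.induction_on with
  | C r => simp only [algHom_C, Derivation.map_algebraMap, pderiv_C, map_zero]
  | add p q hp hq => simp only [map_add, hp, hq]
  | mul_X p j hp =>
    simp only [map_mul, aeval_X, Derivation.leibniz, hp, partialDeriv_coord, map_add, smul_eq_mul]

lemma jacobianIdeal_eq_span_range (hf : ContDiff ℝ (⊤ : ℕ∞) f) :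
    jacobianIdeal n f = Ideal.span (range fun i ↦ partialDeriv i (germ f hf)) := by
  simp only [partialDeriv_germ]
  refine congrArg Ideal.span (Set.ext fun γ ↦ exists_congr fun i ↦ ?_)
  exact ⟨fun h ↦ (Subtype.ext h).symm, fun h ↦ h ▸ rfl⟩

lemma jacobianIdeal_eval (p : MvPolynomial (Fin n) ℝ) :
    jacobianIdeal n (fun x ↦ eval x p) =
      Ideal.span (range fun i ↦ aeval (coord n) (pderiv i p)) := by
  simp only [jacobianIdeal_eq_span_range (contDiff_eval p), ← aeval_coord,
    partialDeriv_aeval_coord]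

end PartialDerivatives

section InitialPart

open MvPolynomial IsLocalRing

lemma iteratedDeriv_comp_smul_eq_inPart {f : V → ℝ} {j : ℕ} (hf : ContDiff ℝ j f) (v : V) :
    ((j.factorial : ℝ)⁻¹ * iteratedDeriv j (fun t : ℝ ↦ f (t • v)) 0) = inPart f j v := by
  have hcomp := (ContinuousLinearMap.toSpanSingleton ℝ v).iteratedFDeriv_comp_right hf 0 le_rfl
  have hline : f ∘ ContinuousLinearMap.toSpanSingleton ℝ v = fun t : ℝ ↦ f (t • v) := by
    ext t
    simp
  rw [hline] at hcomp
  rw [iteratedDeriv_eq_iteratedFDeriv, hcomp]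
  simp [inPart]

lemma sub_sum_inPart_isBigO {f : V → ℝ} {N : ℕ} (hf : ContDiff ℝ N f) (v : V) :
    (fun t : ℝ ↦ f (t • v) - ∑ j ∈ Finset.range N, inPart f j v * t ^ j)
      =O[𝓝[>] 0] fun t ↦ t ^ N := by
  have htaylor := ((taylor_isLittleO_univ (f := fun t : ℝ ↦ f (t • v)) (x₀ := 0)
    (hf.comp (contDiff_id.smul contDiff_const))).isBigO.mono
    nhdsWithin_le_nhds : _ =O[𝓝[>] (0 : ℝ)] _)
  have hcoeff (j : ℕ) (hj : j ∈ Finset.range (N + 1)) :=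
    iteratedDeriv_comp_smul_eq_inPart
      (hf.of_le (by exact_mod_cast Finset.mem_range_succ_iff.1 hj) : ContDiff ℝ j f) v
  have hsum (t : ℝ) : taylorWithinEval (fun t : ℝ ↦ f (t • v)) N univ 0 t =
      ∑ j ∈ Finset.range (N + 1), inPart f j v * t ^ j := by
    rw [taylor_within_apply]
    refine Finset.sum_congr rfl fun j hj ↦ ?_
    rw [← hcoeff j hj, iteratedDerivWithin_univ, sub_zero, smul_eq_mul]
    ring
  simp only [hsum, Finset.sum_range_succ, sub_zero] at htaylor
  have htop := (isBigO_refl (fun t : ℝ ↦ t ^ N) (𝓝[>] 0)).const_mul_left (inPart f N v)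
  refine (htaylor.add htop).congr_left fun t ↦ ?_
  ring

lemma inPart_eq_eval_of_germ_sub_mem {n d : ℕ} {f : Eucl n → ℝ} {q : MvPolynomial (Fin n) ℝ}
    (hf : ContDiff ℝ (⊤ : ℕ∞) f) (hq : q.IsHomogeneous d)
    (hfq : germ f hf - aeval (coord n) q ∈ maximalIdeal (smoothGerms n) ^ (d + 1)) :
    inPart f d = fun x : Eucl n ↦ eval x q := by
  funext v
  rw [aeval_coord, germ_sub] at hfq
  let taylorSub : Polynomial ℝ :=
    ∑ j ∈ Finset.range (d + 1), .monomial j (inPart f j v) - .monomial d (eval v q)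
  have htaylorSub : (fun t ↦ taylorSub.eval t) =O[𝓝[>] (0 : ℝ)] fun t ↦ t ^ (d + 1) := by
    have htaylor := sub_sum_inPart_isBigO (N := d + 1) (hf.of_le (by exact_mod_cast le_top)) v
    refine ((isBigO_of_germ_mem_pow v _ hfq).sub htaylor).congr_left fun t ↦ ?_
    simp only [taylorSub, Polynomial.eval_sub, Polynomial.eval_finsetSum, Polynomial.eval_monomial,
      ← eval_smul_of_isHomogeneous hq, WithLp.ofLp_smul]
    ring
  have hcoeff := coeff_eq_zero_of_isBigO htaylorSub d.lt_succ_self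
  simpa [taylorSub, Polynomial.coeff_monomial, sub_eq_zero] using hcoeff

end InitialPart

section Order

variable {F : V → W} {x : V} {m : ℕ}

lemma isBigO_of_hasOrderAt (hF : HasOrderAt F x m) (hx : F x = 0) (v : V) :
    (fun t : ℝ ↦ F (x + t • v)) =O[𝓝[>] 0] fun t ↦ t ^ m := by
  rcases eq_or_ne v 0 with rfl | hv
  · simpa only [smul_zero, add_zero, hx] using isBigO_zero _ _
  obtain ⟨L, hL⟩ := hF.1 v hv
  refine ((isBigO_refl (fun t : ℝ ↦ t ^ m) (𝓝[>] 0)).smul (hL.isBigO_one ℝ)).congr' ?_ ?_ <;>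
  · filter_upwards [self_mem_nhdsWithin] with t (ht : 0 < t)
    simp [smul_smul, ht.ne']

lemma ne_zero_of_hasOrderAt (hF : HasOrderAt F x m) (hcont : ContinuousAt F x) (hx : F x = 0) :
    m ≠ 0 := by
  rintro rfl
  obtain ⟨v, -, L, hL, hlim⟩ := hF.2
  have hline : Tendsto (fun t : ℝ ↦ x + t • v) (𝓝[>] 0) (𝓝 x) := by
    simpa using ((by fun_prop : Continuous fun t : ℝ ↦ x + t • v).tendsto 0).mono_left
      nhdsWithin_le_nhds
  simp only [Nat.cast_zero, Real.rpow_zero, inv_one, one_smul] at hlim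
  exact hL (tendsto_nhds_unique hlim (hx ▸ hcont.tendsto.comp hline))

end Order

section Milnor

variable {n N : ℕ} {f : Eucl n → ℝ}

lemma toENat_milnor : (milnor n f).toENat = colength ℝ (jacobianIdeal n f) :=
  (Module.length_eq_rank ℝ _).symm

lemma milnor_lt_aleph0_iff : milnor n f < Cardinal.aleph0 ↔ colength ℝ (jacobianIdeal n f) ≠ ⊤ := by
  rw [← toENat_milnor, Ne, Cardinal.toENat_eq_top, not_le]

lemma milnor_eq_natCast_iff : milnor n f = N ↔ colength ℝ (jacobianIdeal n f) = N := by
  rw [← toENat_milnor, Cardinal.toENat_eq_natCast]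

end Milnor

end MilnorNumber

open MilnorNumber MvPolynomial IsLocalRing in
/-- if `f : (ℝ^n, 0) → (ℝ, 0)` is a `C^∞` germ of finite order `m` whose
initial part has an algebraically isolated singularity at the origin, then
`μ(f) = (m - 1) ^ n`. -/
theorem milnor_eq_order_sub_one_pow {n : ℕ} (f : Eucl n → ℝ)
    (hf : ContDiff ℝ (⊤ : ℕ∞) f) (hf0 : f 0 = 0)
    (m : ℕ) (hord : HasOrderAt f 0 (m : ℝ))
    (hiso : milnor n (inPart f m) < Cardinal.aleph0) :
    milnor n f = (((m - 1) ^ n : ℕ) : Cardinal) := by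
  obtain ⟨d, rfl⟩ := Nat.exists_eq_add_one_of_ne_zero
    (ne_zero_of_hasOrderAt hord hf.continuous.continuousAt hf0)
  have hmem : germ f hf ∈ maximalIdeal (smoothGerms n) ^ (d + 1) :=
    germ_mem_pow_of_isBigO hf fun v ↦ by simpa using isBigO_of_hasOrderAt hord hf0 v
  obtain ⟨q, hq, hfq⟩ := isRegularCoordinates_coord.exists_isHomogeneous_sub_aeval_mem hmem
  have hpartial (i : Fin n) : partialDeriv i (germ f hf) - aeval (coord n) (pderiv i q) ∈
      maximalIdeal (smoothGerms n) ^ (d + 1) := by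
    rw [← partialDeriv_aeval_coord, ← map_sub]
    exact derivation_apply_mem_pow _ hfq
  have hfinite := milnor_lt_aleph0_iff.1 hiso
  rw [inPart_eq_eval_of_germ_sub_mem hf hq hfq, jacobianIdeal_eval] at hfinite
  rw [milnor_eq_natCast_iff, jacobianIdeal_eq_span_range hf,
    isRegularCoordinates_coord.colength_span_range_eq_pow_card rfl (fun i ↦ hq.pderiv) hpartial
      hfinite, Fintype.card_fin]
end
end

section
/- Let f, g : (ℝ^n,0) → (ℝ,0) be germs of C^∞ functions of finite order whose initial parts in(f) and in(g) have algebraically isolated singularities at the origin, i.e. μ(in(f)) < +∞ and μ(in(g)) < +∞. If f and g are R-asymptotically Lipschitz equivalent at the origin, then μ(f) = μ(g). -/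
open Filter Set Metric Topology Asymptotics

noncomputable section

set_option synthInstance.maxHeartbeats 1000000

variable {V W : Type*} [NormedAddCommGroup V] [NormedSpace ℝ V]
  [NormedAddCommGroup W] [NormedSpace ℝ W]

/-- `φ` is a germ at `0` of a lipeomorphism `(ℝ^n, 0) → (ℝ^n, 0)`. -/
def IsLipeoGermAt {n : ℕ} (φ : Eucl n → Eucl n) : Prop :=
  φ 0 = 0 ∧ ∃ U V : Set (Eucl n), U ∈ 𝓝 (0 : Eucl n) ∧ V ∈ 𝓝 (0 : Eucl n) ∧
    IsLipeoOn φ U V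

/-!
A lipeomorphism fixing the origin changes norms by bounded factors only, so `f` and `g` have the
same order `m = d + 1` and it suffices to compute `μ(f)` from `n` and `d`. The `i`-th partial
derivative of `f` has initial form `∂ᵢ P` of degree `d`, where `P` is the initial form of `f`, and
finiteness of `μ(P)` says that these forms generate an ideal of finite colength in the polynomial
ring. For `d > 0` the depth of such an ideal is `n`, so prime avoidance among linear combinations of
the forms, the scalars being infinite, yields `n` of them that form a regular sequence. These are
linearly independent, so the corresponding combinations of the partial derivatives of `f` still
generate `J(f)`. Since the associated graded ring of the ideal `𝔪` of smooth germs vanishing at the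
origin is the polynomial ring, such a sequence `q₁, …, qₙ` is regular on the truncations by powers
of `𝔪`: with `I = (q₁, …, qᵢ₋₁)`, multiplication by `qᵢ` identifies `E / (I + 𝔪 ^ (k - d))` with the
kernel of `E / (I + 𝔪 ^ k) → E / (I + (qᵢ) + 𝔪 ^ k)`. So the dimensions of these quotients satisfy a
recursion that depends on `n` and `d` only, and for large `k` the last of them is `μ(f)`.
-/

section RegularSequences

open RingTheory.Sequence CategoryTheory Abelian

universe u

variable {𝕜 : Type*} {R : Type u} [Field 𝕜] [Infinite 𝕜] [CommRing R] [IsNoetherianRing R]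
  [Algebra 𝕜 R]

theorem exists_mem_isSMulRegular_of_mem_span {M : Type*} [AddCommGroup M] [Module R M]
    [Module.Finite R M] (W : Submodule 𝕜 R) {x : R} (hxW : x ∈ Ideal.span (W : Set R))
    (hx : IsSMulRegular M x) : ∃ w ∈ W, IsSMulRegular M w := by
  classical
  let trace (p : Ideal R) : Subspace 𝕜 W := (p.restrictScalars 𝕜).comap W.subtype
  have htop : ⊤ ∉ (associatedPrimes.finite R M).toFinset.image trace := by
    simp only [Finset.mem_image, Finite.mem_toFinset, not_exists, not_and]
    intro p hp hpW
    have hWp : Ideal.span (W : Set R) ≤ p :=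
      Ideal.span_le.2 fun w hw => (Submodule.eq_top_iff'.1 hpW) ⟨w, hw⟩
    have : x ∈ ⋃ p ∈ associatedPrimes R M, (p : Set R) := mem_biUnion hp (hWp hxW)
    rw [biUnion_associatedPrimes_eq_compl_regular] at this
    exact this hx
  obtain ⟨w, hw⟩ := (ne_univ_iff_exists_notMem _).1 (Subspace.biUnion_ne_univ_of_top_notMem htop)
  refine ⟨w, w.2, by_contra fun hreg => hw ?_⟩
  have : (w : R) ∈ ⋃ p ∈ associatedPrimes R M, (p : Set R) := by
    rwa [biUnion_associatedPrimes_eq_compl_regular]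
  obtain ⟨p, hp, hwp⟩ := mem_iUnion₂.1 this
  exact mem_biUnion (Finset.mem_image_of_mem trace (by simpa using hp)) hwp

theorem exists_isWeaklyRegular_of_subsingleton_ext (W : Submodule 𝕜 R) (n : ℕ)
    (M : ModuleCat.{u} R) [Module.Finite R M]
    (hext : ∀ i < n, Subsingleton (Ext (ModuleCat.of R (R ⧸ Ideal.span (W : Set R))) M i)) :
    ∃ rs : List R, rs.length = n ∧ (∀ r ∈ rs, r ∈ W) ∧ IsWeaklyRegular M rs := by
  set N := ModuleCat.of R (R ⧸ Ideal.span (W : Set R))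
  induction n generalizing M with
  | zero => exact ⟨[], by simp⟩
  | succ n ih =>
    have : Subsingleton (N →ₗ[R] M) :=
      (Ext.addEquiv₀.trans ModuleCat.homAddEquiv).symm.subsingleton_congr.mpr
        (hext 0 n.zero_lt_succ)
    obtain ⟨x, hxann, hx⟩ := IsSMulRegular.subsingleton_linearMap_iff.mp this
    rw [Ideal.annihilator_quotient] at hxann
    obtain ⟨w, hwW, hw⟩ := exists_mem_isSMulRegular_of_mem_span W hxann hx
    have hext' : ∀ i < n, Subsingleton (Ext N (ModuleCat.of R (QuotSMulTop w M)) i) := by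
      intro i hi
      have hi₁ := AddCommGrpCat.isZero_of_iff_subsingleton.mpr (hext i (by omega))
      have hi₂ := AddCommGrpCat.isZero_of_iff_subsingleton.mpr (hext (i + 1) (by omega))
      exact AddCommGrpCat.subsingleton_of_isZero <| ShortComplex.Exact.isZero_of_both_zeros
        (Ext.covariant_sequence_exact₃' N hw.smulShortComplex_shortExact i (i + 1) rfl)
        (hi₁.eq_zero_of_src _) (hi₂.eq_zero_of_tgt _)
    obtain ⟨rs, hlen, hmem, hreg⟩ := ih (ModuleCat.of R (QuotSMulTop w M)) hext'
    exact ⟨w :: rs, by simp [hlen], by simpa [hwW] using hmem,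
      (isWeaklyRegular_cons_iff M w rs).2 ⟨hw, hreg⟩⟩

end RegularSequences

section RegularSequencesOfPolynomials

open RingTheory.Sequence MvPolynomial

theorem isWeaklyRegular_ofFn_iff {R : Type*} [CommRing R] {n : ℕ} (q : Fin n → R) :
    IsWeaklyRegular R (List.ofFn q) ↔
      ∀ i u, q i * u ∈ Ideal.span (q '' Iio i) → u ∈ Ideal.span (q '' Iio i) := by
  have hset (i : Fin n) : {r | r ∈ (List.ofFn q).take i} = q '' Iio i := by
    ext r
    simp only [List.mem_take_iff_getElem, List.length_ofFn, List.getElem_ofFn, mem_ofPred_eq,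
      mem_image, mem_Iio, lt_inf_iff]
    exact ⟨fun ⟨j, hj, hr⟩ => ⟨⟨j, hj.2⟩, hj.1, hr⟩, fun ⟨j, hj, hr⟩ => ⟨j, ⟨hj, j.2⟩, hr⟩⟩
  simp_rw [isWeaklyRegular_iff, isSMulRegular_quotient_iff_mem_of_smul_mem, List.length_ofFn,
    Fin.forall_iff]
  refine forall₂_congr fun i hi => ?_
  rw [smul_eq_mul, Ideal.mul_top, Ideal.ofList, hset ⟨i, hi⟩, List.getElem_ofFn]
  rfl

theorem idealOfVars_ne_top (σ R : Type*) [CommRing R] [Nontrivial R] : idealOfVars σ R ≠ ⊤ := by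
  rw [Ideal.ne_top_iff_one]
  simpa using (C_mem_pow_idealOfVars_iff (σ := σ) (R := R) 1 1).not.2 (by simp)

theorem isWeaklyRegular_ofFn_X (R : Type*) [CommRing R] (n : ℕ) :
    IsWeaklyRegular (MvPolynomial (Fin n) R)
      (List.ofFn (X : Fin n → MvPolynomial (Fin n) R)) := by
  rw [isWeaklyRegular_ofFn_iff]
  intro i u hu
  rw [mem_ideal_span_X_image, support_X_mul] at hu
  rw [mem_ideal_span_X_image]
  intro s hs
  obtain ⟨j, hj, hsj⟩ := hu _ (Finset.mem_map_of_mem _ hs)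
  have hij : i ≠ j := (mem_Iio.1 hj).ne'
  exact ⟨j, hj, by simpa [Finsupp.single_apply, hij] using hsj⟩

theorem exists_isWeaklyRegular_of_pow_idealOfVars_le_span {𝕜 : Type*} [Field 𝕜] [Infinite 𝕜]
    {n : ℕ} (W : Submodule 𝕜 (MvPolynomial (Fin n) 𝕜)) {k : ℕ}
    (hk : idealOfVars (Fin n) 𝕜 ^ k ≤ Ideal.span W) :
    ∃ q : Fin n → MvPolynomial (Fin n) 𝕜, (∀ i, q i ∈ W) ∧
      IsWeaklyRegular (MvPolynomial (Fin n) 𝕜) (List.ofFn q) := by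
  let A := MvPolynomial (Fin n) 𝕜
  have hsupp : Module.support A (A ⧸ Ideal.span (W : Set A)) ⊆
      PrimeSpectrum.zeroLocus (idealOfVars (Fin n) 𝕜) := by
    rw [Module.support_eq_zeroLocus, Ideal.annihilator_quotient,
      PrimeSpectrum.zeroLocus_subset_zeroLocus_iff]
    exact fun p hp => ⟨k, hk (Ideal.pow_mem_pow hp k)⟩
  have hsmul : idealOfVars (Fin n) 𝕜 • (⊤ : Submodule A A) < ⊤ := by
    rw [smul_eq_mul, Ideal.mul_top, lt_top_iff_ne_top]
    exact idealOfVars_ne_top _ _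
  have hX : IsRegular A (List.ofFn (X : Fin n → A)) := by
    refine ⟨isWeaklyRegular_ofFn_X 𝕜 n, ?_⟩
    have : Ideal.ofList (List.ofFn (X : Fin n → A)) = idealOfVars (Fin n) 𝕜 := by
      simp only [Ideal.ofList, List.mem_ofFn']; rfl
    rw [this]
    exact hsmul.ne'
  have hext := ModuleCat.subsingleton_ext_of_exists_isRegular (idealOfVars (Fin n) 𝕜)
    (ModuleCat.of A (A ⧸ Ideal.span (W : Set A))) hsupp (ModuleCat.of A A) hsmul (List.ofFn X)
    (by simpa [List.mem_ofFn] using fun i => Ideal.subset_span (mem_range_self i)) hX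
  rw [List.length_ofFn] at hext
  obtain ⟨rs, hlen, hmem, hreg⟩ := exists_isWeaklyRegular_of_subsingleton_ext W n _ hext
  obtain ⟨q, rfl⟩ : ∃ q : Fin n → A, List.ofFn q = rs :=
    ⟨fun i => rs[i], List.ext_getElem (by simp [hlen]) (by simp)⟩
  exact ⟨q, fun i => hmem _ (List.mem_ofFn.2 ⟨i, rfl⟩), hreg⟩

theorem image_init_Iio {α : Type*} {n : ℕ} (v : Fin (n + 1) → α) (i : Fin n) :
    Fin.init v '' Iio i = v '' Iio i.castSucc := by
  rw [← Fin.image_castSucc_Iio, image_image]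
  rfl

theorem image_Iio_last {α : Type*} {n : ℕ} (v : Fin (n + 1) → α) :
    v '' Iio (Fin.last n) = range (Fin.init v) := by
  have : Iio (Fin.last n) = range Fin.castSucc := by
    ext i
    simp [Fin.lt_def]
  rw [this, ← range_comp]
  rfl

theorem range_eq_insert_last {α : Type*} {n : ℕ} (v : Fin (n + 1) → α) :
    range v = insert (v (Fin.last n)) (range (Fin.init v)) := by
  conv_lhs => rw [← Fin.snoc_init_self v, Fin.range_snoc]

theorem linearIndependent_of_notMem_span_Iio {K V : Type*} [DivisionRing K] [AddCommGroup V]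
    [Module K V] {n : ℕ} {v : Fin n → V} (h : ∀ i, v i ∉ Submodule.span K (v '' Iio i)) :
    LinearIndependent K v := by
  induction n with
  | zero => exact linearIndependent_empty_type
  | succ n ih =>
    rw [linearIndependent_finSucc', ← image_Iio_last]
    exact ⟨ih fun i => image_init_Iio v i ▸ h i.castSucc, h (Fin.last n)⟩

theorem linearIndependent_of_isWeaklyRegular_ofFn {K R : Type*} [Field K] [CommRing R]
    [Algebra K R] {n : ℕ} {q : Fin n → R} (hq : IsWeaklyRegular R (List.ofFn q))
    (htop : Ideal.span (range q) ≠ ⊤) : LinearIndependent K q := by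
  rw [isWeaklyRegular_ofFn_iff] at hq
  refine linearIndependent_of_notMem_span_Iio fun i hi => htop ?_
  have hqi : q i ∈ Ideal.span (q '' Iio i) :=
    Submodule.span_le_restrictScalars K R _ hi
  exact (Ideal.eq_top_iff_one _).2
    (Ideal.span_mono (image_subset_range _ _) (hq i 1 (by rwa [mul_one])))

end RegularSequencesOfPolynomials

section StrictIdeals

variable {R : Type*} [CommRing R] {m I : Ideal R} {d : ℕ} {a : R}

/-- For `I ≤ m ^ d`: in the associated graded ring of `m`, the initial ideal of `I` is generated by
the classes of elements of `I` in degree `d`. The condition is void for `j < d`, where the truncated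
`j - d` is `0`. -/
def IsStrict (m : Ideal R) (d : ℕ) (I : Ideal R) : Prop :=
  ∀ j, I ⊓ m ^ j ≤ I * m ^ (j - d) ⊔ m ^ (j + 1)

/-- The class of `a` in degree `d` of the associated graded ring of `m` is a nonzerodivisor modulo
the ideal generated by the degree-`d` classes of elements of `I`. -/
def IsStrictlyRegular (m : Ideal R) (d : ℕ) (I : Ideal R) (a : R) : Prop :=
  a ∈ m ^ d ∧ ∀ e, ∀ u ∈ m ^ e,
    a * u ∈ I * m ^ e ⊔ m ^ (e + d + 1) → u ∈ I * m ^ (e - d) ⊔ m ^ (e + 1)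

theorem isStrict_bot (m : Ideal R) (d : ℕ) : IsStrict m d ⊥ := fun j => by simp

theorem IsStrictlyRegular.mul_mem_pow (ha : IsStrictlyRegular m d I a) {e j : ℕ} (hj : j ≤ e + d)
    {u : R} (hu : u ∈ m ^ e) : a * u ∈ m ^ j :=
  Ideal.pow_le_pow_right hj (by rw [add_comm, pow_add]; exact Ideal.mul_mem_mul ha.1 hu)

theorem IsStrictlyRegular.mem_of_mul_mem_sup_pow (ha : IsStrictlyRegular m d I a)
    (hI : IsStrict m d I) {K : ℕ} {u : R} (hu : a * u ∈ I ⊔ m ^ K) : u ∈ I ⊔ m ^ (K - d) := by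
  -- Strictness of `I` turns `a * u' ∈ I ⊔ m ^ (e + d + 1)` with `u' ∈ m ^ e` into the homogeneous
  -- relation to which strict regularity of `a` applies.
  suffices ∀ e ≤ K - d, u ∈ I ⊔ m ^ e from this _ le_rfl
  intro e he
  induction e with
  | zero => simp
  | succ e ih =>
    obtain ⟨v, hv, u', hu', rfl⟩ := Submodule.mem_sup.1 (ih (by omega))
    obtain ⟨w, hw, z, hz, hwz⟩ := Submodule.mem_sup.1 hu
    have hz' : z ∈ m ^ (e + d + 1) := Ideal.pow_le_pow_right (by omega) hz
    have hau' : a * u' = (w - a * v) + z := by linear_combination -hwz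
    have hmem : w - a * v ∈ I ⊓ m ^ (e + d) := by
      refine ⟨sub_mem hw (Ideal.mul_mem_left _ _ hv), ?_⟩
      rw [← sub_eq_of_eq_add hau']
      exact sub_mem (ha.mul_mem_pow le_rfl hu') (Ideal.pow_le_pow_right (Nat.le_succ _) hz')
    have hstrict := hI (e + d) hmem
    rw [Nat.add_sub_cancel] at hstrict
    have hu'' := ha.2 e u' hu' (hau' ▸ add_mem hstrict (Ideal.mem_sup_right hz'))
    have hle : I * m ^ (e - d) ⊔ m ^ (e + 1) ≤ I ⊔ m ^ (e + 1) :=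
      sup_le_sup_right Ideal.mul_le_left _
    exact add_mem (Ideal.mem_sup_left hv) (hle hu'')

theorem IsStrictlyRegular.mul_mem_sup_pow_iff (ha : IsStrictlyRegular m d I a)
    (hI : IsStrict m d I) {K : ℕ} {u : R} : a * u ∈ I ⊔ m ^ K ↔ u ∈ I ⊔ m ^ (K - d) := by
  refine ⟨ha.mem_of_mul_mem_sup_pow hI, fun hu => ?_⟩
  obtain ⟨v, hv, w, hw, rfl⟩ := Submodule.mem_sup.1 hu
  rw [mul_add]
  exact add_mem (Ideal.mem_sup_left (Ideal.mul_mem_left _ _ hv))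
    (Ideal.mem_sup_right (ha.mul_mem_pow (by omega) hw))

theorem IsStrict.sup_span_singleton (hI : IsStrict m d I) (ha : IsStrictlyRegular m d I a) :
    IsStrict m d (I ⊔ Ideal.span {a}) := by
  rintro j w ⟨hw, hwj⟩
  obtain ⟨v, hv, _, hu, rfl⟩ := Submodule.mem_sup.1 hw
  obtain ⟨u, rfl⟩ := Ideal.mem_span_singleton.1 hu
  have hau : a * u ∈ I ⊔ m ^ j :=
    Submodule.mem_sup.2 ⟨-v, neg_mem hv, _, hwj, neg_add_cancel_left v _⟩
  obtain ⟨v', hv', u', hu', rfl⟩ := Submodule.mem_sup.1 (ha.mem_of_mul_mem_sup_pow hI hau)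
  have hmem : v + a * v' ∈ I ⊓ m ^ j := by
    refine ⟨add_mem hv (Ideal.mul_mem_left _ _ hv'), ?_⟩
    rw [show v + a * v' = v + a * (v' + u') - a * u' by ring]
    exact sub_mem hwj (ha.mul_mem_pow (by omega) hu')
  rw [show v + a * (v' + u') = (v + a * v') + a * u' by ring]
  have hle : I * m ^ (j - d) ⊔ m ^ (j + 1) ≤ (I ⊔ Ideal.span {a}) * m ^ (j - d) ⊔ m ^ (j + 1) :=
    sup_le_sup_right (Ideal.mul_mono_left le_sup_left) _
  exact add_mem (hle (hI j hmem))
    (Ideal.mem_sup_left (Ideal.mul_mem_mul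
      (Ideal.mem_sup_right (Ideal.mem_span_singleton_self a)) hu'))

theorem span_range_eq_sup_span_last {n : ℕ} (q : Fin (n + 1) → R) : Ideal.span (range q) =
    Ideal.span (range (Fin.init q)) ⊔ Ideal.span {q (Fin.last n)} := by
  rw [range_eq_insert_last, Ideal.span_insert, sup_comm]

theorem isStrict_span_range {n : ℕ} {q : Fin n → R}
    (hq : ∀ i, IsStrictlyRegular m d (Ideal.span (q '' Iio i)) (q i)) :
    IsStrict m d (Ideal.span (range q)) := by
  induction n with
  | zero => simpa using isStrict_bot m d
  | succ n ih =>
    rw [span_range_eq_sup_span_last]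
    exact (ih fun i => image_init_Iio q i ▸ hq i.castSucc).sup_span_singleton
      (image_Iio_last q ▸ hq (Fin.last n))

variable {𝕜 : Type*} [Field 𝕜] [Algebra 𝕜 R]

theorem rank_quotient_sup_span_singleton_add {J L : Ideal R}
    (hL : ∀ u, a * u ∈ J ↔ u ∈ L) :
    Module.rank 𝕜 (R ⧸ J ⊔ Ideal.span {a}) + Module.rank 𝕜 (R ⧸ L) = Module.rank 𝕜 (R ⧸ J) := by
  let ψ : (R ⧸ J) →ₗ[R] R ⧸ J ⊔ Ideal.span {a} :=
    (Ideal.Quotient.factorₐ R le_sup_left).toLinearMap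
  let φ : R →ₗ[R] R ⧸ J := LinearMap.toSpanSingleton R _ (Ideal.Quotient.mk J a)
  have hφ (u : R) : φ u = Ideal.Quotient.mk J (a * u) := by
    simp [φ, mul_comm, Algebra.smul_def]
  have hkerφ : LinearMap.ker φ = L := by
    ext u
    rw [LinearMap.mem_ker, hφ, Ideal.Quotient.eq_zero_iff_mem, hL]
  have hkerψ : LinearMap.ker ψ = LinearMap.range φ := by
    ext y
    obtain ⟨r, rfl⟩ := Ideal.Quotient.mk_surjective y
    have hψr : ψ (Ideal.Quotient.mk J r) = Ideal.Quotient.mk _ r := rfl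
    rw [LinearMap.mem_ker, hψr, Ideal.Quotient.eq_zero_iff_mem, LinearMap.mem_range]
    constructor
    · intro hr
      obtain ⟨z, hz, w, hw, rfl⟩ := Submodule.mem_sup.1 hr
      obtain ⟨u, rfl⟩ := Ideal.mem_span_singleton.1 hw
      exact ⟨u, by rw [hφ, Ideal.Quotient.eq]; simpa using hz⟩
    · rintro ⟨u, hu⟩
      rw [hφ, Ideal.Quotient.eq] at hu
      simpa using sub_mem (Ideal.mem_sup_right (Ideal.mul_mem_right u _
        (Ideal.mem_span_singleton_self a))) (Ideal.mem_sup_left hu)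
  have hψ : Function.Surjective (ψ.restrictScalars 𝕜) :=
    Ideal.Quotient.factor_surjective le_sup_left
  let e : (R ⧸ L) ≃ₗ[R] LinearMap.ker ψ := (Submodule.quotEquivOfEq _ _ hkerφ.symm).trans
    (φ.quotKerEquivRange.trans (LinearEquiv.ofEq _ _ hkerψ.symm))
  rw [LinearMap.rank_eq_of_surjective hψ, (e.restrictScalars 𝕜).rank_eq]
  rfl

theorem rank_quotient_span_range_sup_pow_eq {n : ℕ} {q q' : Fin n → R}
    (hq : ∀ i, IsStrictlyRegular m d (Ideal.span (q '' Iio i)) (q i))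
    (hq' : ∀ i, IsStrictlyRegular m d (Ideal.span (q' '' Iio i)) (q' i))
    (hfin : ∀ K, Module.rank 𝕜 (R ⧸ m ^ K) < Cardinal.aleph0) (K : ℕ) :
    Module.rank 𝕜 (R ⧸ Ideal.span (range q) ⊔ m ^ K) =
      Module.rank 𝕜 (R ⧸ Ideal.span (range q') ⊔ m ^ K) := by
  induction n generalizing K with
  | zero => rw [Subsingleton.elim q q']
  | succ n ih =>
    have hinit {p : Fin (n + 1) → R}
        (hp : ∀ i, IsStrictlyRegular m d (Ideal.span (p '' Iio i)) (p i)) (i : Fin n) :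
        IsStrictlyRegular m d (Ideal.span (Fin.init p '' Iio i)) (Fin.init p i) :=
      image_init_Iio p i ▸ hp i.castSucc
    have hrec {p : Fin (n + 1) → R}
        (hp : ∀ i, IsStrictlyRegular m d (Ideal.span (p '' Iio i)) (p i)) :
        Module.rank 𝕜 (R ⧸ Ideal.span (range p) ⊔ m ^ K) +
          Module.rank 𝕜 (R ⧸ Ideal.span (range (Fin.init p)) ⊔ m ^ (K - d)) =
            Module.rank 𝕜 (R ⧸ Ideal.span (range (Fin.init p)) ⊔ m ^ K) := by
      rw [span_range_eq_sup_span_last, sup_right_comm]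
      refine rank_quotient_sup_span_singleton_add fun u => ?_
      exact (image_Iio_last p ▸ hp (Fin.last n)).mul_mem_sup_pow_iff
        (isStrict_span_range (hinit hp))
    have hfin' : Module.rank 𝕜 (R ⧸ Ideal.span (range (Fin.init q)) ⊔ m ^ (K - d)) <
        Cardinal.aleph0 :=
      (LinearMap.rank_le_of_surjective
        (Ideal.Quotient.factorₐ 𝕜 le_sup_right).toLinearMap
        (Ideal.Quotient.factor_surjective le_sup_right)).trans_lt (hfin (K - d))
    refine Cardinal.eq_of_add_eq_add_right ?_ hfin'
    rw [hrec hq, ih (hinit hq) (hinit hq'), ih (hinit hq) (hinit hq'), hrec hq']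

end StrictIdeals

section InitialForms

open MvPolynomial RingTheory.Sequence

attribute [local instance] MvPolynomial.gradedAlgebra

section HomogeneousPolynomials

variable {σ A κ : Type*} [CommRing A] {d : ℕ}

theorem homogeneousComponent_mul_of_isHomogeneous {Q : MvPolynomial σ A} (hQ : Q.IsHomogeneous d)
    (a : MvPolynomial σ A) (e : ℕ) :
    homogeneousComponent e (a * Q) =
      if d ≤ e then homogeneousComponent (e - d) a * Q else 0 := by
  have h := DirectSum.coe_decompose_mul_of_right_mem (homogeneousSubmodule σ A) e (a := a)
    ((mem_homogeneousSubmodule d Q).2 hQ)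
  rwa [← decomposition.decompose'_apply, ← decomposition.decompose'_apply]

theorem isHomogeneous_span_range {Q : κ → MvPolynomial σ A} (hQ : ∀ l, (Q l).IsHomogeneous d) :
    (Ideal.span (range Q)).IsHomogeneous (homogeneousSubmodule σ A) :=
  Ideal.homogeneous_span _ _ (forall_mem_range.2 fun l => ⟨d, hQ l⟩)

theorem mem_pow_idealOfVars_of_isHomogeneous {p : MvPolynomial σ A} (hp : p.IsHomogeneous d) :
    p ∈ idealOfVars σ A ^ d :=
  (mem_pow_idealOfVars_iff d p).2 fun _ hx => (hp.degree_eq_sum_deg_support hx).le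

theorem sub_homogeneousComponent_mem_pow_succ_idealOfVars {p : MvPolynomial σ A}
    (hp : p ∈ idealOfVars σ A ^ d) :
    p - homogeneousComponent d p ∈ idealOfVars σ A ^ (d + 1) := by
  rw [mem_pow_idealOfVars_iff'] at hp ⊢
  intro x hx
  rw [coeff_sub, coeff_homogeneousComponent]
  split_ifs with h
  · exact sub_self _
  · rw [sub_zero, hp x (by omega)]

theorem homogeneousComponent_eq_zero_of_mem_pow_succ_idealOfVars {p : MvPolynomial σ A}
    (hp : p ∈ idealOfVars σ A ^ (d + 1)) : homogeneousComponent d p = 0 := by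
  rw [mem_pow_idealOfVars_iff'] at hp
  ext x
  rw [coeff_homogeneousComponent, coeff_zero]
  split_ifs with h
  · exact hp x (by omega)
  · rfl

theorem span_range_eq_top_of_isHomogeneous_zero {K : Type*} [Field K] [Nonempty σ]
    {P : κ → MvPolynomial σ K} (hP : ∀ l, (P l).IsHomogeneous 0) {k : ℕ}
    (hk : idealOfVars σ K ^ k ≤ Ideal.span (range P)) : Ideal.span (range P) = ⊤ := by
  by_contra htop
  have hzero (l : κ) : P l = 0 := by
    have hPl := totalDegree_eq_zero_iff_eq_C.1 ((totalDegree_zero_iff_isHomogeneous _).2 (hP l))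
    rw [hPl, C_eq_zero]
    by_contra hne
    refine htop (Ideal.eq_top_of_isUnit_mem _ (Ideal.subset_span (mem_range_self l)) ?_)
    rw [hPl]
    exact (isUnit_iff_ne_zero.2 hne).map C
  have hX := hk (Ideal.pow_mem_pow (Ideal.subset_span (mem_range_self (Classical.arbitrary σ))) k)
  have hbot : Ideal.span (range P) = ⊥ := by
    rw [Ideal.span_eq_bot]
    exact forall_mem_range.2 hzero
  rw [hbot, Ideal.mem_bot] at hX
  exact pow_ne_zero k (X_ne_zero _) hX

end HomogeneousPolynomials

theorem span_range_linearCombination_eq {S R κ κ' : Type*} [CommSemiring S] [CommRing R]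
    [Algebra S R] [Fintype κ] (f : κ → R) {c : κ' → κ → S} (hc : Submodule.span S (range c) = ⊤) :
    Ideal.span (range fun i => Fintype.linearCombination S f (c i)) = Ideal.span (range f) := by
  have hspan : Submodule.span S (range f) =
      Submodule.span S (range (Fintype.linearCombination S f ∘ c)) := by
    rw [← Fintype.range_linearCombination, LinearMap.range_eq_map, ← hc, Submodule.map_span,
      ← range_comp]
  rw [Ideal.span, Ideal.span, ← Submodule.span_span_of_tower S R (range f), hspan,
    Submodule.span_span_of_tower]
  rfl

section AdicTopology

variable {R : Type*} [CommRing R] {m J : Ideal R}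

theorem pow_le_of_pow_le_sup_pow_succ (hm : m.FG) (hjac : m ≤ Ideal.jacobson ⊥) {k : ℕ}
    (h : m ^ k ≤ J ⊔ m ^ (k + 1)) : m ^ k ≤ J :=
  Submodule.le_of_le_smul_of_le_jacobson_bot hm.pow hjac (by rwa [smul_eq_mul, ← pow_succ'])

theorem exists_pow_le_of_rank_quotient_lt_aleph0 {𝕜 : Type*} [Field 𝕜] [Algebra 𝕜 R] (hm : m.FG)
    (hjac : m ≤ Ideal.jacobson ⊥) (h : Module.rank 𝕜 (R ⧸ J) < Cardinal.aleph0) :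
    ∃ k, m ^ k ≤ J := by
  have hfin : Module.Finite 𝕜 (R ⧸ J) := Module.rank_lt_aleph0_iff.1 h
  let π : R →ₗ[𝕜] R ⧸ J := (Ideal.Quotient.mkₐ 𝕜 J).toLinearMap
  let F : ℕ →o (Submodule 𝕜 (R ⧸ J))ᵒᵈ :=
    ⟨fun k => OrderDual.toDual (((m ^ k).restrictScalars 𝕜).map π), fun _ _ hab =>
      Submodule.map_mono (f := π) (Ideal.pow_le_pow_right hab)⟩
  obtain ⟨k, hk⟩ := IsArtinian.monotone_stabilizes F
  refine ⟨k, pow_le_of_pow_le_sup_pow_succ hm hjac fun u hu => ?_⟩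
  have hstab : ((m ^ k).restrictScalars 𝕜).map π = ((m ^ (k + 1)).restrictScalars 𝕜).map π :=
    hk (k + 1) k.le_succ
  obtain ⟨v, hv, huv⟩ : π u ∈ ((m ^ (k + 1)).restrictScalars 𝕜).map π := hstab ▸ ⟨u, hu, rfl⟩
  exact Submodule.mem_sup.2 ⟨u - v, Ideal.Quotient.eq.1 huv.symm, v, hv, sub_add_cancel u v⟩

end AdicTopology

variable {𝕜 R : Type*} [Field 𝕜] [CommRing R] [Algebra 𝕜 R] {n : ℕ}
  {ι : MvPolynomial (Fin n) 𝕜 →ₐ[𝕜] R} {m : Ideal R}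

/-- The images under `ι` of the variables are coordinates for the ideal `m`, which has residue
field `𝕜` and lies in the Jacobson radical: they generate `m`, and the associated graded ring of
`m` is the polynomial ring in them. -/
structure IsRegularCoordinates (ι : MvPolynomial (Fin n) 𝕜 →ₐ[𝕜] R) (m : Ideal R) : Prop where
  map_idealOfVars : (idealOfVars (Fin n) 𝕜).map ι = m
  exists_sub_algebraMap_mem : ∀ r, ∃ c : 𝕜, r - algebraMap 𝕜 R c ∈ m
  eq_zero_of_map_mem : ∀ j p, p.IsHomogeneous j → ι p ∈ m ^ (j + 1) → p = 0
  le_jacobson : m ≤ Ideal.jacobson ⊥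

/-- `P` is the initial form of `a` in degree `d`: it represents the class of `a` in
`m ^ d / m ^ (d + 1)`. It is `0` when `a ∈ m ^ (d + 1)`. -/
def IsInitialForm (ι : MvPolynomial (Fin n) 𝕜 →ₐ[𝕜] R) (m : Ideal R) (d : ℕ) (a : R)
    (P : MvPolynomial (Fin n) 𝕜) : Prop :=
  P.IsHomogeneous d ∧ a - ι P ∈ m ^ (d + 1)

namespace IsInitialForm

variable {d : ℕ} {a b : R} {P Q : MvPolynomial (Fin n) 𝕜}

theorem map_of_isHomogeneous (hP : P.IsHomogeneous d) : IsInitialForm ι m d (ι P) P :=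
  ⟨hP, by simp⟩

theorem zero : IsInitialForm ι m d 0 0 := ⟨isHomogeneous_zero _ _ _, by simp⟩

theorem add (ha : IsInitialForm ι m d a P) (hb : IsInitialForm ι m d b Q) :
    IsInitialForm ι m d (a + b) (P + Q) :=
  ⟨ha.1.add hb.1, by rw [map_add, add_sub_add_comm]; exact add_mem ha.2 hb.2⟩

theorem sub (ha : IsInitialForm ι m d a P) (hb : IsInitialForm ι m d b Q) :
    IsInitialForm ι m d (a - b) (P - Q) :=
  ⟨ha.1.sub hb.1, by rw [map_sub, sub_sub_sub_comm]; exact sub_mem ha.2 hb.2⟩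

theorem sum {κ : Type*} (s : Finset κ) {a : κ → R} {P : κ → MvPolynomial (Fin n) 𝕜}
    (h : ∀ l ∈ s, IsInitialForm ι m d (a l) (P l)) :
    IsInitialForm ι m d (∑ l ∈ s, a l) (∑ l ∈ s, P l) := by
  refine ⟨IsHomogeneous.sum _ _ _ fun l hl => (h l hl).1, ?_⟩
  rw [map_sum, ← Finset.sum_sub_distrib]
  exact Ideal.sum_mem _ fun l hl => (h l hl).2

theorem smul (c : 𝕜) (ha : IsInitialForm ι m d a P) : IsInitialForm ι m d (c • a) (c • P) := by
  refine ⟨by rw [smul_eq_C_mul]; exact ha.1.C_mul c, ?_⟩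
  rw [map_smul, ← smul_sub, Algebra.smul_def]
  exact Ideal.mul_mem_left _ _ ha.2

theorem linearCombination {κ : Type*} [Fintype κ] {a : κ → R} {P : κ → MvPolynomial (Fin n) 𝕜}
    (h : ∀ l, IsInitialForm ι m d (a l) (P l)) (c : κ → 𝕜) :
    IsInitialForm ι m d (Fintype.linearCombination 𝕜 a c) (Fintype.linearCombination 𝕜 P c) :=
  sum _ fun l _ => (h l).smul (c l)

end IsInitialForm

namespace IsRegularCoordinates

variable {d e k : ℕ} {a b r u : R} {p P Q : MvPolynomial (Fin n) 𝕜}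

theorem fg (H : IsRegularCoordinates ι m) : m.FG := by
  rw [← H.map_idealOfVars]
  exact (idealOfVars_fg (Fin n) 𝕜).map (ι : MvPolynomial (Fin n) 𝕜 →+* R)

theorem pow_eq_map (H : IsRegularCoordinates ι m) (e : ℕ) :
    m ^ e = (idealOfVars (Fin n) 𝕜 ^ e).map ι := by
  rw [Ideal.map_pow, H.map_idealOfVars]

theorem map_mem_pow (H : IsRegularCoordinates ι m) (hp : p.IsHomogeneous e) : ι p ∈ m ^ e :=
  H.pow_eq_map e ▸ Ideal.mem_map_of_mem ι (mem_pow_idealOfVars_of_isHomogeneous hp)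

theorem mem_pow (H : IsRegularCoordinates ι m) (ha : IsInitialForm ι m d a P) : a ∈ m ^ d :=
  (Submodule.sub_mem_iff_left _ (H.map_mem_pow ha.1)).1 (Ideal.pow_le_pow_right d.le_succ ha.2)

theorem eq_zero_of_mem_pow_succ (H : IsRegularCoordinates ι m) (ha : IsInitialForm ι m d a P)
    (h : a ∈ m ^ (d + 1)) : P = 0 :=
  H.eq_zero_of_map_mem d P ha.1 ((Submodule.sub_mem_iff_right _ h).1 ha.2)

theorem isInitialForm_mul (H : IsRegularCoordinates ι m) (ha : IsInitialForm ι m d a P)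
    (hb : IsInitialForm ι m e b Q) : IsInitialForm ι m (d + e) (a * b) (P * Q) := by
  refine ⟨ha.1.mul hb.1, ?_⟩
  rw [map_mul, show a * b - ι P * ι Q = (a - ι P) * b + ι P * (b - ι Q) by ring]
  refine add_mem ?_ ?_
  · exact Ideal.pow_le_pow_right (by omega)
      (pow_add m (d + 1) e ▸ Ideal.mul_mem_mul ha.2 (H.mem_pow hb))
  · exact pow_add m d (e + 1) ▸ Ideal.mul_mem_mul (H.map_mem_pow ha.1) hb.2

theorem exists_isInitialForm (H : IsRegularCoordinates ι m) (hu : u ∈ m ^ e) :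
    ∃ p, IsInitialForm ι m e u p := by
  rw [H.pow_eq_map, pow_idealOfVars_eq_span, Ideal.map_span] at hu
  have hle : Ideal.span (ι '' ((monomial · 1) '' (Finsupp.degree ⁻¹' {e}))) ≤ m ^ e := by
    rw [H.pow_eq_map, pow_idealOfVars_eq_span, Ideal.map_span]
  induction hu using Submodule.span_induction with
  | mem x hx =>
    obtain ⟨_, ⟨s, hs, rfl⟩, rfl⟩ := hx
    exact ⟨_, .map_of_isHomogeneous (isHomogeneous_monomial _ hs)⟩
  | zero => exact ⟨0, .zero⟩
  | add x y _ _ hx hy => exact ⟨_, hx.choose_spec.add hy.choose_spec⟩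
  | smul r x hx ih =>
    obtain ⟨p, hp⟩ := ih
    obtain ⟨c, hc⟩ := H.exists_sub_algebraMap_mem r
    refine ⟨c • p, (hp.smul c).1, ?_⟩
    have hsplit : r • x - ι (c • p) = (r - algebraMap 𝕜 R c) * x + (c • x - ι (c • p)) := by
      rw [smul_eq_mul, Algebra.smul_def c x]
      ring
    rw [hsplit]
    exact add_mem (pow_succ' m e ▸ Ideal.mul_mem_mul hc (hle hx)) (hp.smul c).2

theorem exists_totalDegree_le_sub_mem_pow (H : IsRegularCoordinates ι m) (r : R) (k : ℕ) :
    ∃ p, p.totalDegree ≤ k ∧ r - ι p ∈ m ^ k := by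
  induction k with
  | zero => exact ⟨0, by simp, by simp⟩
  | succ k ih =>
    obtain ⟨p, hp, h⟩ := ih
    obtain ⟨p', hp', h'⟩ := H.exists_isInitialForm h
    refine ⟨p + p', (totalDegree_add _ _).trans (max_le (by omega) ?_), ?_⟩
    · exact hp'.totalDegree_le.trans k.le_succ
    · rwa [map_add, ← sub_sub]

theorem rank_quotient_pow_lt_aleph0 (H : IsRegularCoordinates ι m) (k : ℕ) :
    Module.rank 𝕜 (R ⧸ m ^ k) < Cardinal.aleph0 := by
  let φ : restrictTotalDegree (Fin n) 𝕜 k →ₗ[𝕜] R ⧸ m ^ k :=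
    (Ideal.Quotient.mkₐ 𝕜 (m ^ k)).toLinearMap ∘ₗ ι.toLinearMap ∘ₗ Submodule.subtype _
  have hφ : Function.Surjective φ := fun y => by
    obtain ⟨r, rfl⟩ := Ideal.Quotient.mk_surjective y
    obtain ⟨p, hp, h⟩ := H.exists_totalDegree_le_sub_mem_pow r k
    exact ⟨⟨p, (mem_restrictTotalDegree _ _ _).2 hp⟩, (Ideal.Quotient.eq.2 h).symm⟩
  have := Module.Finite.of_surjective φ hφ
  exact Module.rank_lt_aleph0 𝕜 _

theorem mem_pow_idealOfVars_of_map_mem (H : IsRegularCoordinates ι m) (hp : ι p ∈ m ^ k) :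
    p ∈ idealOfVars (Fin n) 𝕜 ^ k := by
  induction k with
  | zero => simp
  | succ k ih =>
    have hsub := sub_homogeneousComponent_mem_pow_succ_idealOfVars
      (ih (Ideal.pow_le_pow_right k.le_succ hp))
    have hzero : homogeneousComponent k p = 0 := by
      refine H.eq_zero_of_mem_pow_succ (a := ι p) ⟨homogeneousComponent_isHomogeneous k p, ?_⟩ hp
      rw [← map_sub, H.pow_eq_map]
      exact Ideal.mem_map_of_mem ι hsub
    rwa [hzero, sub_zero] at hsub

theorem exists_mem_sub_map_mem_pow (H : IsRegularCoordinates ι m)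
    {I : Ideal (MvPolynomial (Fin n) 𝕜)} (hr : r ∈ I.map ι) (k : ℕ) :
    ∃ z ∈ I, r - ι z ∈ m ^ k := by
  induction hr using Submodule.span_induction with
  | mem x hx =>
    obtain ⟨z, hz, rfl⟩ := hx
    exact ⟨z, hz, by simp⟩
  | zero => exact ⟨0, I.zero_mem, by simp⟩
  | add x y _ _ hx hy =>
    obtain ⟨z, hz, hxz⟩ := hx
    obtain ⟨w, hw, hyw⟩ := hy
    exact ⟨z + w, I.add_mem hz hw, by rw [map_add, add_sub_add_comm]; exact add_mem hxz hyw⟩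
  | smul r x _ hx =>
    obtain ⟨z, hz, hxz⟩ := hx
    obtain ⟨p, -, hp⟩ := H.exists_totalDegree_le_sub_mem_pow r k
    refine ⟨p * z, I.mul_mem_left _ hz, ?_⟩
    rw [map_mul, smul_eq_mul, show r * x - ι p * ι z = r * (x - ι z) + (r - ι p) * ι z by ring]
    exact add_mem (Ideal.mul_mem_left _ _ hxz) (Ideal.mul_mem_right _ _ hp)

theorem pow_idealOfVars_le_of_pow_le_map (H : IsRegularCoordinates ι m)
    {I : Ideal (MvPolynomial (Fin n) 𝕜)} (hI : I.IsHomogeneous (homogeneousSubmodule (Fin n) 𝕜))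
    (hk : m ^ k ≤ I.map ι) : idealOfVars (Fin n) 𝕜 ^ k ≤ I := by
  rw [pow_idealOfVars_eq_span, Ideal.span_le]
  rintro _ ⟨s, hs, rfl⟩
  have hx : (monomial s (1 : 𝕜)).IsHomogeneous k := isHomogeneous_monomial _ hs
  obtain ⟨z, hz, hxz⟩ := H.exists_mem_sub_map_mem_pow (hk (H.map_mem_pow hx)) (k + 1)
  rw [← map_sub] at hxz
  have hcomp := homogeneousComponent_eq_zero_of_mem_pow_succ_idealOfVars
    (H.mem_pow_idealOfVars_of_map_mem hxz)
  rw [map_sub, homogeneousComponent_eq_self hx, sub_eq_zero] at hcomp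
  change monomial s 1 ∈ I
  rw [hcomp]
  exact homogeneousComponent_mem_of_mem hI hz k

section HomogeneousIdeals

variable {κ : Type*} {Q : κ → MvPolynomial (Fin n) 𝕜} {q : κ → R}

theorem map_mem_span_mul_pow_sup_pow_succ [Finite κ] (H : IsRegularCoordinates ι m)
    (hq : ∀ l, IsInitialForm ι m d (q l) (Q l)) (hp : p.IsHomogeneous e)
    (hpQ : p ∈ Ideal.span (range Q)) :
    ι p ∈ Ideal.span (range q) * m ^ (e - d) ⊔ m ^ (e + 1) := by
  have := Fintype.ofFinite κ
  obtain ⟨c, rfl⟩ := Ideal.mem_span_range_iff_exists_fun.1 hpQ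
  rw [← homogeneousComponent_eq_self hp, map_sum, map_sum]
  refine Ideal.sum_mem _ fun l _ => ?_
  rw [homogeneousComponent_mul_of_isHomogeneous (hq l).1]
  split_ifs with hde
  · have hc : IsInitialForm ι m (e - d) (ι (homogeneousComponent (e - d) (c l))) _ :=
      .map_of_isHomogeneous (homogeneousComponent_isHomogeneous _ _)
    have hmul := H.isInitialForm_mul (hq l) hc
    rw [Nat.add_sub_cancel' hde, mul_comm (Q l)] at hmul
    exact Submodule.mem_sup.2 ⟨_, Ideal.mul_mem_mul (Ideal.subset_span (mem_range_self l))
      (H.mem_pow hc), _, neg_mem hmul.2, by ring⟩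
  · rw [map_zero]
    exact zero_mem _

theorem exists_isInitialForm_mem_span (H : IsRegularCoordinates ι m)
    (hq : ∀ l, IsInitialForm ι m d (q l) (Q l)) (hu : u ∈ Ideal.span (range q) * m ^ e) :
    ∃ z ∈ Ideal.span (range Q), IsInitialForm ι m (d + e) u z := by
  rw [mul_comm, ← smul_eq_mul, Ideal.span, Submodule.mem_ideal_smul_span_iff_exists_sum] at hu
  obtain ⟨c, hc, rfl⟩ := hu
  choose p hp using fun l => H.exists_isInitialForm (hc l)
  refine ⟨∑ l ∈ c.support, p l * Q l, Ideal.sum_mem _ fun l _ =>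
    Ideal.mul_mem_left _ _ (Ideal.subset_span (mem_range_self l)), ?_⟩
  exact .sum _ fun l _ => add_comm e d ▸ H.isInitialForm_mul (hp l) (hq l)

theorem pow_le_span_range [Finite κ] (H : IsRegularCoordinates ι m)
    (hq : ∀ l, IsInitialForm ι m d (q l) (Q l))
    (hk : idealOfVars (Fin n) 𝕜 ^ k ≤ Ideal.span (range Q)) : m ^ k ≤ Ideal.span (range q) := by
  refine pow_le_of_pow_le_sup_pow_succ H.fg H.le_jacobson fun u hu => ?_
  obtain ⟨p, hp⟩ := H.exists_isInitialForm hu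
  have hpQ := hk (mem_pow_idealOfVars_of_isHomogeneous hp.1)
  have hle : Ideal.span (range q) * m ^ (k - d) ⊔ m ^ (k + 1) ≤
      Ideal.span (range q) ⊔ m ^ (k + 1) := sup_le_sup_right Ideal.mul_le_left _
  exact (Submodule.sub_mem_iff_left _ (hle (H.map_mem_span_mul_pow_sup_pow_succ hq hp.1 hpQ))).1
    (Ideal.mem_sup_right hp.2)

theorem isStrictlyRegular_of_isInitialForm [Finite κ] (H : IsRegularCoordinates ι m)
    (hq : ∀ l, IsInitialForm ι m d (q l) (Q l)) (ha : IsInitialForm ι m d a P)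
    (hreg : ∀ p, P * p ∈ Ideal.span (range Q) → p ∈ Ideal.span (range Q)) :
    IsStrictlyRegular m d (Ideal.span (range q)) a := by
  refine ⟨H.mem_pow ha, fun e u hu hau => ?_⟩
  obtain ⟨p, hp⟩ := H.exists_isInitialForm hu
  obtain ⟨y, hy, t, ht, hyt⟩ := Submodule.mem_sup.1 hau
  obtain ⟨z, hz, hyz⟩ := H.exists_isInitialForm_mem_span hq hy
  have hPp : P * p = z := by
    refine sub_eq_zero.1 (H.eq_zero_of_mem_pow_succ ((H.isInitialForm_mul ha hp).sub hyz) ?_)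
    rwa [← hyt, add_sub_cancel_left, add_comm d e]
  have hιp := H.map_mem_span_mul_pow_sup_pow_succ hq hp.1 (hreg p (hPp ▸ hz))
  exact (Submodule.sub_mem_iff_left _ hιp).1 (Ideal.mem_sup_right hp.2)

end HomogeneousIdeals

theorem isStrictlyRegular_of_isWeaklyRegular {N : ℕ} (H : IsRegularCoordinates ι m)
    {Q : Fin N → MvPolynomial (Fin n) 𝕜} {q : Fin N → R}
    (hq : ∀ i, IsInitialForm ι m d (q i) (Q i))
    (hQ : IsWeaklyRegular (MvPolynomial (Fin n) 𝕜) (List.ofFn Q)) (i : Fin N) :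
    IsStrictlyRegular m d (Ideal.span (q '' Iio i)) (q i) := by
  rw [isWeaklyRegular_ofFn_iff] at hQ
  have hQi := hQ i
  rw [image_eq_range] at hQi ⊢
  exact H.isStrictlyRegular_of_isInitialForm (fun l : Iio i => hq l) (hq i) hQi

theorem exists_isStrictlyRegular [Infinite 𝕜] (H : IsRegularCoordinates ι m)
    {P : Fin n → MvPolynomial (Fin n) 𝕜} {f : Fin n → R}
    (hf : ∀ l, IsInitialForm ι m d (f l) (P l)) (hd : d ≠ 0)
    (hk : idealOfVars (Fin n) 𝕜 ^ k ≤ Ideal.span (range P)) :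
    ∃ q : Fin n → R, Ideal.span (range q) = Ideal.span (range f) ∧
      ∀ i, IsStrictlyRegular m d (Ideal.span (q '' Iio i)) (q i) := by
  have hspan : Ideal.span (range P) ≤
      Ideal.span (LinearMap.range (Fintype.linearCombination 𝕜 P) : Set _) := by
    rw [Fintype.range_linearCombination]
    exact Ideal.span_mono Submodule.subset_span
  obtain ⟨Q, hQP, hQ⟩ := exists_isWeaklyRegular_of_pow_idealOfVars_le_span _ (hk.trans hspan)
  choose c hc using hQP
  have hfc (i : Fin n) := IsInitialForm.linearCombination hf (c i)
  have htop : Ideal.span (range Q) ≠ ⊤ := by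
    refine ne_top_of_le_ne_top (idealOfVars_ne_top (Fin n) 𝕜) (Ideal.span_le.2 ?_)
    rintro _ ⟨i, rfl⟩
    exact Ideal.pow_le_self hd (mem_pow_idealOfVars_of_isHomogeneous (hc i ▸ (hfc i).1))
  have hlin : LinearIndependent 𝕜 c := by
    refine .of_comp (Fintype.linearCombination 𝕜 P) ?_
    rw [show _ ∘ c = Q from funext hc]
    exact linearIndependent_of_isWeaklyRegular_ofFn hQ htop
  refine ⟨fun i => Fintype.linearCombination 𝕜 f (c i), ?_,
    H.isStrictlyRegular_of_isWeaklyRegular (fun i => hc i ▸ hfc i) hQ⟩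
  exact span_range_linearCombination_eq f (hlin.span_eq_top_of_card_eq_finrank' (by simp))

theorem exists_pow_idealOfVars_le_span_range (H : IsRegularCoordinates ι m) {κ : Type*}
    {P : κ → MvPolynomial (Fin n) 𝕜} (hPd : ∀ l, (P l).IsHomogeneous d)
    (hP : Module.rank 𝕜 (R ⧸ Ideal.span (range (ι ∘ P))) < Cardinal.aleph0) :
    ∃ k, idealOfVars (Fin n) 𝕜 ^ k ≤ Ideal.span (range P) := by
  obtain ⟨k, hk⟩ := exists_pow_le_of_rank_quotient_lt_aleph0 H.fg H.le_jacobson hP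
  rw [range_comp, ← Ideal.map_span] at hk
  exact ⟨k, H.pow_idealOfVars_le_of_pow_le_map (isHomogeneous_span_range hPd) hk⟩

theorem span_range_eq_top_of_isInitialForm_zero [Nonempty (Fin n)] (H : IsRegularCoordinates ι m)
    {κ : Type*} [Finite κ] {P : κ → MvPolynomial (Fin n) 𝕜} {f : κ → R}
    (hf : ∀ l, IsInitialForm ι m 0 (f l) (P l))
    (hk : idealOfVars (Fin n) 𝕜 ^ k ≤ Ideal.span (range P)) : Ideal.span (range f) = ⊤ := by
  have htop := span_range_eq_top_of_isHomogeneous_zero (fun l => (hf l).1) hk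
  simpa using H.pow_le_span_range (k := 0) hf (htop ▸ le_top)

theorem rank_quotient_span_range_eq [Infinite 𝕜] (H : IsRegularCoordinates ι m)
    {P P' : Fin n → MvPolynomial (Fin n) 𝕜} {f f' : Fin n → R}
    (hf : ∀ l, IsInitialForm ι m d (f l) (P l))
    (hf' : ∀ l, IsInitialForm ι m d (f' l) (P' l))
    (hP : Module.rank 𝕜 (R ⧸ Ideal.span (range (ι ∘ P))) < Cardinal.aleph0)
    (hP' : Module.rank 𝕜 (R ⧸ Ideal.span (range (ι ∘ P'))) < Cardinal.aleph0) :
    Module.rank 𝕜 (R ⧸ Ideal.span (range f)) = Module.rank 𝕜 (R ⧸ Ideal.span (range f')) := by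
  obtain ⟨k, hk⟩ := H.exists_pow_idealOfVars_le_span_range (fun l => (hf l).1) hP
  obtain ⟨k', hk'⟩ := H.exists_pow_idealOfVars_le_span_range (fun l => (hf' l).1) hP'
  rcases isEmpty_or_nonempty (Fin n) with hn | hn
  · rw [Subsingleton.elim f f']
  rcases eq_or_ne d 0 with rfl | hd
  · rw [H.span_range_eq_top_of_isInitialForm_zero hf hk,
      H.span_range_eq_top_of_isInitialForm_zero hf' hk']
  obtain ⟨q, hq, hqreg⟩ := H.exists_isStrictlyRegular hf hd hk
  obtain ⟨q', hq', hqreg'⟩ := H.exists_isStrictlyRegular hf' hd hk'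
  have hrank := rank_quotient_span_range_sup_pow_eq hqreg hqreg' H.rank_quotient_pow_lt_aleph0
    (max k k')
  have hle := (Ideal.pow_le_pow_right (le_max_left k k')).trans (H.pow_le_span_range hf hk)
  have hle' := (Ideal.pow_le_pow_right (le_max_right k k')).trans (H.pow_le_span_range hf' hk')
  rwa [hq, hq', sup_eq_left.2 hle, sup_eq_left.2 hle'] at hrank

end IsRegularCoordinates

end InitialForms

section Hadamard

variable {E G : Type*} [NormedAddCommGroup E] [NormedSpace ℝ E] [NormedAddCommGroup G]
  [NormedSpace ℝ G] {m : ℕ∞}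

open MeasureTheory in
theorem contDiff_setIntegral {s : Set ℝ} (hs : MeasurableSet s) (hb : Bornology.IsBounded s)
    {H : E → ℝ → G} (hH : ContDiff ℝ m (Function.uncurry H)) :
    ContDiff ℝ m fun x => ∫ t in s, H x t := by
  obtain ⟨r, hr, hsr⟩ := hb.subset_closedBall_lt 0 0
  let ψ : ContDiffBump (0 : ℝ) := ⟨r, r + 1, hr, lt_add_one r⟩
  have hψ (y : ℝ) (hy : y ∉ closedBall 0 (r + 1)) : ψ y = 0 :=
    ψ.zero_of_le_dist (not_le.1 (mem_closedBall.not.1 hy)).le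
  -- The integral is the value at `0` of the convolution of `1_s` with the cut-off of `H x (-·)`.
  have hconv := contDiffOn_convolution_right_with_param_comp (μ := volume)
    (ContinuousLinearMap.lsmul ℝ ℝ) (v := fun _ : E => (0 : ℝ)) (f := s.indicator 1)
    (g := fun x y => ψ y • H x (-y)) contDiffOn_const isOpen_univ
    (isCompact_closedBall 0 (r + 1)) (fun x y _ hy => by simp [hψ y hy])
    (((integrableOn_const (hb.measure_lt_top.ne)).integrable_indicator hs).locallyIntegrable)
    (ContDiff.contDiffOn ((ψ.contDiff.comp contDiff_snd).smul
      (hH.comp (contDiff_fst.prodMk contDiff_snd.neg))))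
  rw [contDiffOn_univ] at hconv
  convert hconv using 2 with x
  rw [convolution, ← integral_indicator hs]
  congr 1 with t
  by_cases ht : t ∈ s
  · have hψt : ψ (-t) = 1 := ψ.one_of_mem_closedBall (by simpa using hsr ht)
    simp [ht, hψt]
  · simp [ht]

theorem exists_contDiff_eq_add_apply [CompleteSpace G] {F : E → G} (hF : ContDiff ℝ (m + 1) F) :
    ∃ h : E → E →L[ℝ] G, ContDiff ℝ m h ∧ ∀ x, F x = F 0 + h x x := by
  have hF' : ContDiff ℝ m (fderiv ℝ F) := hF.fderiv_right le_rfl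
  refine ⟨fun x => ∫ t in Ioc (0 : ℝ) 1, fderiv ℝ F (t • x),
    contDiff_setIntegral measurableSet_Ioc (isBounded_Ioc 0 1)
      (hF'.comp (contDiff_snd.smul contDiff_fst)), fun x => ?_⟩
  have hcont : Continuous fun t : ℝ => fderiv ℝ F (t • x) :=
    hF'.continuous.comp (continuous_id.smul continuous_const)
  have hderiv (t : ℝ) : HasDerivAt (fun t : ℝ => F (t • x)) (fderiv ℝ F (t • x) x) t := by
    simpa [Function.comp_def] using
      (hF.differentiable (by simp) (t • x)).hasFDerivAt.comp_hasDerivAt t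
        ((hasDerivAt_id t).smul_const x)
  have hftc := intervalIntegral.integral_eq_sub_of_hasDerivAt (a := 0) (b := 1)
    (fun t _ => hderiv t) ((hcont.clm_apply continuous_const).intervalIntegrable _ _)
  rw [ContinuousLinearMap.integral_apply (hcont.integrableOn_Ioc),
    ← intervalIntegral.integral_of_le zero_le_one, hftc]
  simp

end Hadamard

section SmoothFunctions

open MvPolynomial

variable {n k : ℕ}

/-- The algebra of smooth functions `ℝ^n → ℝ`. The elements of `smoothGerms n` have globally defined
smooth representatives, so they are handled through functions in this algebra. -/
def smoothFunctions (n : ℕ) : Subalgebra ℝ (Eucl n → ℝ) where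
  carrier := {F | ContDiff ℝ (⊤ : ℕ∞) F}
  add_mem' hF hG := (mem_ofPred.1 hF).add (mem_ofPred.1 hG)
  mul_mem' hF hG := (mem_ofPred.1 hF).mul (mem_ofPred.1 hG)
  algebraMap_mem' _ := mem_ofPred.2 contDiff_const

instance : CoeFun (smoothFunctions n) fun _ => Eucl n → ℝ := ⟨Subtype.val⟩

theorem mem_smoothFunctions {F : Eucl n → ℝ} : F ∈ smoothFunctions n ↔ ContDiff ℝ (⊤ : ℕ∞) F :=
  Iff.rfl

theorem contDiff_smoothFunctions (F : smoothFunctions n) : ContDiff ℝ (⊤ : ℕ∞) F := F.2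

theorem smoothFunctions_isBigO_one (F : smoothFunctions n) : F =O[𝓝 0] fun _ => (1 : ℝ) :=
  (contDiff_smoothFunctions F).continuous.continuousAt.isBigO_one ℝ

/-- The germ at the origin of a smooth function. -/
def smoothGerm (n : ℕ) : smoothFunctions n →ₐ[ℝ] smoothGerms n :=
  AlgHom.mk'
    { toFun F := ⟨Germ.ofFun F, F, F.2, rfl⟩
      map_one' := rfl
      map_mul' _ _ := rfl
      map_zero' := rfl
      map_add' _ _ := rfl }
    fun _ _ => rfl

theorem smoothGerm_surjective : Function.Surjective (smoothGerm n) := by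
  rintro ⟨_, F, hF, rfl⟩
  exact ⟨⟨F, hF⟩, rfl⟩

theorem smoothGerm_eq_iff {F G : smoothFunctions n} :
    smoothGerm n F = smoothGerm n G ↔ F =ᶠ[𝓝 0] G :=
  Subtype.ext_iff.trans Germ.coe_eq

theorem isUnit_smoothGerm {F : smoothFunctions n} (h : F 0 ≠ 0) : IsUnit (smoothGerm n F) := by
  have hne : ∀ᶠ x in 𝓝 0, F x ≠ 0 :=
    (contDiff_smoothFunctions F).continuous.continuousAt.eventually_ne h
  obtain ⟨ε, hε, hball⟩ := Metric.eventually_nhds_iff.1 hne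
  let χ : ContDiffBump (0 : Eucl n) := ⟨ε / 2, ε, by positivity, by linarith⟩
  have hpos (x : Eucl n) : F x ^ 2 + (1 - χ x) ≠ 0 := by
    by_cases hx : dist x 0 < ε
    · have := hball hx
      have : 0 < F x ^ 2 := by positivity
      linarith [χ.le_one (x := x)]
    · rw [χ.zero_of_le_dist (not_lt.1 hx)]
      positivity
  -- Near the origin `χ = 1`, so `F / (F ^ 2 + (1 - χ))` is the reciprocal of `F` there.
  let G : smoothFunctions n := ⟨fun x => F x / (F x ^ 2 + (1 - χ x)),
    mem_smoothFunctions.2 <| (contDiff_smoothFunctions F).div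
      (((contDiff_smoothFunctions F).pow 2).add (contDiff_const.sub χ.contDiff)) hpos⟩
  refine .of_mul_eq_one (smoothGerm n G) ?_
  rw [← map_mul, ← map_one (smoothGerm n), smoothGerm_eq_iff]
  filter_upwards [hne, χ.eventuallyEq_one] with x hx hχ
  change F x * (F x / (F x ^ 2 + (1 - χ x))) = 1
  rw [hχ, Pi.one_apply, sub_self, add_zero]
  field_simp

/-- The `i`-th coordinate as a smooth function. -/
def coordFunction (i : Fin n) : smoothFunctions n :=
  ⟨fun x => x i, mem_smoothFunctions.2 (EuclideanSpace.proj (𝕜 := ℝ) i).contDiff⟩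

/-- Polynomials as smooth functions. -/
def polyFunction (n : ℕ) : MvPolynomial (Fin n) ℝ →ₐ[ℝ] smoothFunctions n := aeval coordFunction

theorem polyFunction_apply (p : MvPolynomial (Fin n) ℝ) (x : Eucl n) :
    polyFunction n p x = eval x p :=
  map_aeval coordFunction
    ((Pi.evalAlgHom ℝ (fun _ => ℝ) x).comp (smoothFunctions n).val : smoothFunctions n →+* ℝ) p

/-- The ideal of `smoothFunctions n` generated by the coordinates; by Hadamard's lemma it consists
of the functions vanishing at the origin. -/
def coordIdeal (n : ℕ) : Ideal (smoothFunctions n) := (idealOfVars (Fin n) ℝ).map (polyFunction n)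

theorem coordFunction_mem_coordIdeal (i : Fin n) : coordFunction i ∈ coordIdeal n := by
  rw [← aeval_X (R := ℝ) coordFunction i]
  exact Ideal.mem_map_of_mem _ (Ideal.subset_span (mem_range_self i))

theorem sub_algebraMap_mem_coordIdeal (F : smoothFunctions n) :
    F - algebraMap ℝ _ (F 0) ∈ coordIdeal n := by
  obtain ⟨h, hh, hF⟩ := exists_contDiff_eq_add_apply (m := ⊤) (contDiff_smoothFunctions F)
  let H (i : Fin n) : smoothFunctions n :=
    ⟨fun x => h x (EuclideanSpace.single i 1),
      mem_smoothFunctions.2 (hh.clm_apply contDiff_const)⟩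
  suffices F - algebraMap ℝ _ (F 0) = ∑ i, H i * coordFunction i by
    rw [this]
    exact Ideal.sum_mem _ fun i _ => Ideal.mul_mem_left _ _ (coordFunction_mem_coordIdeal i)
  ext x
  have hx : x = ∑ i, x i • EuclideanSpace.single i (1 : ℝ) := by
    ext j
    simp [Finset.sum_apply, Pi.single_apply]
  calc F x - F 0 = h x (∑ i, x i • EuclideanSpace.single i 1) := by
        rw [← hx, hF x, add_sub_cancel_left]
    _ = ∑ i, (H i * coordFunction i) x := by
        simp only [map_sum, map_smul, smul_eq_mul, mul_comm (x _)]
        rfl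
    _ = _ := by rw [AddSubmonoidClass.coe_finsetSum, Finset.sum_apply]

/-- The ideal of smooth functions that are `O(‖x‖ ^ k)` at the origin. -/
def bigOIdeal (n k : ℕ) : Ideal (smoothFunctions n) where
  carrier := {F | F =O[𝓝 0] fun x => ‖x‖ ^ k}
  add_mem' := IsBigO.add
  zero_mem' := isBigO_zero _ _
  smul_mem' G F hF := by
    rw [mem_ofPred] at hF ⊢
    exact ((smoothFunctions_isBigO_one G).mul hF).congr_right fun _ => one_mul _

theorem mem_bigOIdeal {F : smoothFunctions n} : F ∈ bigOIdeal n k ↔ F =O[𝓝 0] fun x => ‖x‖ ^ k :=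
  Iff.rfl

theorem coordIdeal_le_bigOIdeal : coordIdeal n ≤ bigOIdeal n 1 := by
  rw [coordIdeal, idealOfVars, Ideal.map_span, ← range_comp, Ideal.span_le]
  rintro _ ⟨i, rfl⟩
  refine IsBigO.of_bound' (Eventually.of_forall fun x => ?_)
  simpa [polyFunction_apply] using PiLp.norm_apply_le x i

theorem isBigO_norm_pow_of_mem_coordIdeal_pow {F : smoothFunctions n} (hF : F ∈ coordIdeal n ^ k) :
    F =O[𝓝 0] fun x => ‖x‖ ^ k := by
  suffices coordIdeal n ^ k ≤ bigOIdeal n k from this hF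
  clear hF
  induction k with
  | zero =>
    intro F _
    simpa [mem_bigOIdeal] using smoothFunctions_isBigO_one F
  | succ k ih =>
    rw [pow_succ, Ideal.mul_le]
    intro F hF G hG
    have hFG := (mem_bigOIdeal.1 (ih hF)).mul (mem_bigOIdeal.1 (coordIdeal_le_bigOIdeal hG))
    exact mem_bigOIdeal.2 (hFG.congr_right fun x => (pow_add ..).symm)

end SmoothFunctions

section Lines

variable {F : V → W} {j k m : ℕ}

theorem tendsto_inv_pow_smul_line_of_isBigO (hF : F =O[𝓝 0] fun x => ‖x‖ ^ j) (hkj : k < j)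
    (v : V) : Tendsto (fun t : ℝ => (t ^ k)⁻¹ • F (t • v)) (𝓝[>] 0) (𝓝 0) := by
  have hline : Tendsto (fun t : ℝ => t • v) (𝓝[>] 0) (𝓝 0) :=
    ((tendsto_id (α := ℝ)).smul_const v).mono_left nhdsWithin_le_nhds |>.trans (by simp)
  have hO : (fun t : ℝ => F (t • v)) =O[𝓝[>] 0] fun t => t ^ j := by
    refine (hF.comp_tendsto hline).trans (IsBigO.of_bound (‖v‖ ^ j) (.of_forall fun t => ?_))
    simp [norm_smul, mul_pow, mul_comm]
  have ho : (fun t : ℝ => F (t • v)) =o[𝓝[>] 0] fun t => t ^ k :=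
    hO.trans_isLittleO ((isLittleO_pow_pow hkj).mono nhdsWithin_le_nhds)
  exact ho.tendsto_inv_smul_nhds_zero

theorem hasOrderAt_zero_natCast_iff : HasOrderAt F 0 (m : ℝ) ↔
    (∀ v, v ≠ 0 → ∃ L, Tendsto (fun t : ℝ => (t ^ m)⁻¹ • F (t • v)) (𝓝[>] 0) (𝓝 L)) ∧
    ∃ v, v ≠ 0 ∧ ∃ L, L ≠ 0 ∧ Tendsto (fun t : ℝ => (t ^ m)⁻¹ • F (t • v)) (𝓝[>] 0) (𝓝 L) := by
  simp only [HasOrderAt, Real.rpow_natCast, zero_add]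

theorem HasOrderAt.le_of_isBigO (h : HasOrderAt F 0 (m : ℝ)) (hF : F =O[𝓝 0] fun x => ‖x‖ ^ k) :
    k ≤ m := by
  obtain ⟨-, v, -, L, hL, hlim⟩ := hasOrderAt_zero_natCast_iff.1 h
  by_contra! hmk
  exact hL (tendsto_nhds_unique hlim (tendsto_inv_pow_smul_line_of_isBigO hF hmk v))

theorem HasOrderAt.tendsto_line_zero (h : HasOrderAt F 0 (m : ℝ)) (hF0 : F 0 = 0) (hk : k < m)
    (v : V) : Tendsto (fun t : ℝ => (t ^ k)⁻¹ • F (t • v)) (𝓝[>] 0) (𝓝 0) := by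
  obtain rfl | hv := eq_or_ne v 0
  · simp [hF0]
  obtain ⟨L, hL⟩ := (hasOrderAt_zero_natCast_iff.1 h).1 v hv
  have hpow : Tendsto (fun t : ℝ => t ^ (m - k)) (𝓝[>] 0) (𝓝 0) :=
    ((continuous_pow (m - k)).tendsto' 0 0 (by simp; omega)).mono_left nhdsWithin_le_nhds
  refine (zero_smul ℝ L ▸ hpow.smul hL).congr' ?_
  filter_upwards [self_mem_nhdsWithin] with t ht
  rw [smul_smul, pow_sub₀ t (ne_of_gt ht) hk.le, mul_right_comm, mul_inv_cancel₀, one_mul]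
  exact pow_ne_zero m (ne_of_gt ht)

end Lines

section PolynomialGerms

open MvPolynomial

variable {n k m : ℕ} {F : smoothFunctions n} {P : MvPolynomial (Fin n) ℝ}

theorem eval_smul_of_isHomogeneous {σ A : Type*} [CommSemiring A] {p : MvPolynomial σ A}
    (hp : p.IsHomogeneous k) (t : A) (v : σ → A) : eval (t • v) p = t ^ k * eval v p := by
  rw [eval_eq, eval_eq, Finset.mul_sum]
  refine Finset.sum_congr rfl fun d hd => ?_
  have hdeg : ∑ i ∈ d.support, d i = k := by
    rw [← Finsupp.degree_apply, Finsupp.degree_eq_weight_one]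
    exact hp (mem_support_iff.1 hd)
  simp_rw [Pi.smul_apply, smul_eq_mul, mul_pow]
  rw [Finset.prod_mul_distrib, Finset.prod_pow_eq_pow_sum, hdeg, mul_left_comm]

/-- The germs at the origin of polynomials. -/
def polyGerm (n : ℕ) : MvPolynomial (Fin n) ℝ →ₐ[ℝ] smoothGerms n :=
  (smoothGerm n).comp (polyFunction n)

/-- The ideal of smooth germs generated by the coordinates, that is, the maximal ideal. -/
def germMaximalIdeal (n : ℕ) : Ideal (smoothGerms n) := (idealOfVars (Fin n) ℝ).map (polyGerm n)

theorem germMaximalIdeal_eq_map : germMaximalIdeal n = (coordIdeal n).map (smoothGerm n) :=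
  (Ideal.map_mapₐ (polyFunction n) (smoothGerm n)).symm

theorem smoothGerm_mem_germMaximalIdeal_pow_iff : smoothGerm n F ∈ germMaximalIdeal n ^ k ↔
    ∃ G ∈ coordIdeal n ^ k, smoothGerm n G = smoothGerm n F := by
  rw [germMaximalIdeal_eq_map, ← Ideal.map_pow,
    Ideal.mem_map_iff_of_surjective _ smoothGerm_surjective]

theorem isBigO_norm_pow_of_smoothGerm_mem (hF : smoothGerm n F ∈ germMaximalIdeal n ^ k) :
    F =O[𝓝 0] fun x => ‖x‖ ^ k := by
  obtain ⟨G, hG, hGF⟩ := smoothGerm_mem_germMaximalIdeal_pow_iff.1 hF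
  exact (isBigO_norm_pow_of_mem_coordIdeal_pow hG).congr' (smoothGerm_eq_iff.1 hGF) .rfl

theorem apply_zero_of_smoothGerm_mem (hF : smoothGerm n F ∈ germMaximalIdeal n) : F 0 = 0 := by
  have hO := isBigO_norm_pow_of_smoothGerm_mem ((pow_one (germMaximalIdeal n)).symm ▸ hF)
  exact hO.eq_zero_imp.self_of_nhds (by simp)

theorem smoothGerm_sub_algebraMap_mem (F : smoothFunctions n) :
    smoothGerm n F - algebraMap ℝ _ (F 0) ∈ germMaximalIdeal n := by
  rw [germMaximalIdeal_eq_map, ← AlgHom.commutes (smoothGerm n), ← map_sub]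
  exact Ideal.mem_map_of_mem _ (sub_algebraMap_mem_coordIdeal F)

theorem IsInitialForm.tendsto_line
    (h : IsInitialForm (polyGerm n) (germMaximalIdeal n) k (smoothGerm n F) P) (v : Eucl n) :
    Tendsto (fun t : ℝ => (t ^ k)⁻¹ • F (t • v)) (𝓝[>] 0) (𝓝 (eval v P)) := by
  have hsub : smoothGerm n (F - polyFunction n P) ∈ germMaximalIdeal n ^ (k + 1) := by
    rw [map_sub]
    exact h.2
  have hlim := tendsto_inv_pow_smul_line_of_isBigO (isBigO_norm_pow_of_smoothGerm_mem hsub)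
    k.lt_succ_self v
  rw [← zero_add (eval v P)]
  refine (hlim.add_const (eval v P)).congr' ?_
  filter_upwards [self_mem_nhdsWithin] with t ht
  have hP : polyFunction n P (t • v) = t ^ k * eval v P := by
    rw [polyFunction_apply, ← eval_smul_of_isHomogeneous h.1]
    rfl
  change (t ^ k)⁻¹ • (F (t • v) - polyFunction n P (t • v)) + _ = _
  rw [hP, smul_sub, smul_eq_mul, smul_eq_mul, inv_mul_cancel_left₀ (pow_ne_zero k (ne_of_gt ht)),
    sub_add_cancel]

theorem IsInitialForm.eq_zero_of_tendsto_line
    (h : IsInitialForm (polyGerm n) (germMaximalIdeal n) k (smoothGerm n F) P)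
    (hF : ∀ v, Tendsto (fun t : ℝ => (t ^ k)⁻¹ • F (t • v)) (𝓝[>] 0) (𝓝 0)) : P = 0 :=
  MvPolynomial.funext fun v =>
    (tendsto_nhds_unique (h.tendsto_line (WithLp.toLp 2 v)) (hF _)).trans (map_zero _).symm

theorem isRegularCoordinates_polyGerm (n : ℕ) :
    IsRegularCoordinates (polyGerm n) (germMaximalIdeal n) where
  map_idealOfVars := rfl
  exists_sub_algebraMap_mem r := by
    obtain ⟨F, rfl⟩ := smoothGerm_surjective r
    exact ⟨F 0, smoothGerm_sub_algebraMap_mem F⟩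
  eq_zero_of_map_mem j p hp h := by
    have hinit : IsInitialForm (polyGerm n) (germMaximalIdeal n) j (smoothGerm n 0) p :=
      ⟨hp, by simpa using h⟩
    refine hinit.eq_zero_of_tendsto_line fun v => ?_
    simp
  le_jacobson x hx := by
    refine Ideal.mem_jacobson_bot.2 fun y => ?_
    obtain ⟨F, rfl⟩ := smoothGerm_surjective x
    obtain ⟨G, rfl⟩ := smoothGerm_surjective y
    rw [← map_mul, ← map_one (smoothGerm n), ← map_add]
    refine isUnit_smoothGerm ?_
    change F 0 * G 0 + 1 ≠ 0
    simp [apply_zero_of_smoothGerm_mem hx]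

theorem HasOrderAt.smoothGerm_mem (h : HasOrderAt F 0 (m : ℝ)) (hF0 : F 0 = 0) :
    smoothGerm n F ∈ germMaximalIdeal n ^ m := by
  suffices ∀ k ≤ m, smoothGerm n F ∈ germMaximalIdeal n ^ k from this m le_rfl
  intro k hk
  induction k with
  | zero => simp
  | succ k ih =>
    obtain ⟨P, hP⟩ := (isRegularCoordinates_polyGerm n).exists_isInitialForm (ih (by omega))
    obtain rfl := hP.eq_zero_of_tendsto_line (h.tendsto_line_zero hF0 hk)
    simpa using hP.2

end PolynomialGerms

section Derivations

open MvPolynomial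

theorem derivation_mem_pow {R A : Type*} [CommSemiring R] [CommSemiring A] [Algebra R A]
    (D : Derivation R A A) {I : Ideal A} {k : ℕ} {a : A} (ha : a ∈ I ^ (k + 1)) :
    D a ∈ I ^ k := by
  induction k generalizing a with
  | zero => simp
  | succ k ih =>
    rw [pow_succ] at ha
    refine Submodule.mul_induction_on ha (fun b hb c hc => ?_) fun b c hb hc => ?_
    · rw [D.leibniz]
      refine Ideal.add_mem _ (Ideal.mul_mem_right _ _ hb) ?_
      rw [pow_succ']
      exact Ideal.mul_mem_mul hc (ih hb)
    · rw [map_add]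
      exact Ideal.add_mem _ hb hc

theorem derivation_aeval {R A σ : Type*} [CommSemiring R] [CommSemiring A] [Algebra R A]
    [Fintype σ] (D : Derivation R A A) (f : σ → A) (p : MvPolynomial σ R) :
    D (aeval f p) = ∑ i, aeval f (pderiv i p) * D (f i) := by
  classical
  induction p using MvPolynomial.induction_on with
  | C a => simp
  | add p q hp hq => simp only [map_add, hp, hq, add_mul, Finset.sum_add_distrib]
  | mul_X p j hp =>
    simp only [map_mul, aeval_X, D.leibniz, hp, (pderiv _).leibniz, pderiv_X, map_add, smul_eq_mul,
      add_mul, Finset.sum_add_distrib, Pi.single_apply, Finset.mul_sum]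
    simp [mul_assoc]

variable {n k m : ℕ}

/-- The derivative of smooth functions in the direction `v`. -/
def dirDeriv (v : Eucl n) : Derivation ℝ (smoothFunctions n) (smoothFunctions n) :=
  have hdiff (F : smoothFunctions n) (x : Eucl n) : DifferentiableAt ℝ F x :=
    (contDiff_smoothFunctions F).differentiable (by simp) x
  Derivation.mk'
    { toFun F := ⟨fun x => fderiv ℝ F x v, mem_smoothFunctions.2
        (((contDiff_smoothFunctions F).fderiv_right (by simp)).clm_apply contDiff_const)⟩
      map_add' F G := by
        ext x
        exact congrArg (· v) (fderiv_add (hdiff F x) (hdiff G x))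
      map_smul' c F := by
        ext x
        exact congrArg (· v) (fderiv_const_smul (hdiff F x) c) }
    fun F G => by
      ext x
      exact congrArg (· v) (fderiv_mul (hdiff F x) (hdiff G x))

theorem dirDeriv_apply (v : Eucl n) (F : smoothFunctions n) (x : Eucl n) :
    dirDeriv v F x = fderiv ℝ F x v := rfl

theorem smoothGerm_dirDeriv_congr (v : Eucl n) {F G : smoothFunctions n}
    (h : smoothGerm n F = smoothGerm n G) :
    smoothGerm n (dirDeriv v F) = smoothGerm n (dirDeriv v G) := by
  rw [smoothGerm_eq_iff] at h ⊢
  filter_upwards [h.fderiv (𝕜 := ℝ)] with x hx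
  rw [dirDeriv_apply, dirDeriv_apply, hx]

theorem smoothGerm_dirDeriv_mem (v : Eucl n) {F : smoothFunctions n}
    (hF : smoothGerm n F ∈ germMaximalIdeal n ^ (k + 1)) :
    smoothGerm n (dirDeriv v F) ∈ germMaximalIdeal n ^ k := by
  obtain ⟨G, hG, hGF⟩ := smoothGerm_mem_germMaximalIdeal_pow_iff.1 hF
  exact smoothGerm_mem_germMaximalIdeal_pow_iff.2
    ⟨dirDeriv v G, derivation_mem_pow _ hG, smoothGerm_dirDeriv_congr v hGF⟩

theorem smoothGerm_iterate_dirDeriv_mem (v : Eucl n) {F : smoothFunctions n}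
    (hF : smoothGerm n F ∈ germMaximalIdeal n ^ (k + m)) :
    smoothGerm n ((dirDeriv v)^[m] F) ∈ germMaximalIdeal n ^ k := by
  induction m generalizing F with
  | zero => exact hF
  | succ m ih => exact ih (smoothGerm_dirDeriv_mem v hF)

theorem iteratedFDeriv_apply_eq_iterate_dirDeriv (F : smoothFunctions n) (v x : Eucl n) :
    iteratedFDeriv ℝ m F x (fun _ => v) = (dirDeriv v)^[m] F x := by
  induction m generalizing x with
  | zero => rfl
  | succ m ih =>
    have hdiff : DifferentiableAt ℝ (iteratedFDeriv ℝ m F) x :=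
      (contDiff_smoothFunctions F).differentiable_iteratedFDeriv (mod_cast WithTop.coe_lt_top _) x
    rw [hdiff.iteratedFDeriv_succ_apply_left', Function.iterate_succ_apply', dirDeriv_apply]
    exact congrArg (fun G => fderiv ℝ G x v) (funext ih)

theorem iterate_dirDeriv_line {F : smoothFunctions n} {v : Eucl n} {c : ℝ}
    (hF : ∀ t : ℝ, F (t • v) = c * t ^ m) : (dirDeriv v)^[m] F 0 = m.factorial * c := by
  induction m generalizing F c with
  | zero => simpa using hF 0
  | succ m ih =>
    refine (ih (c := c * (m + 1)) fun t => ?_).trans (by push_cast [Nat.factorial_succ]; ring)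
    have hline : HasDerivAt (fun t : ℝ => F (t • v)) (dirDeriv v F (t • v)) t := by
      simpa [Function.comp_def, dirDeriv_apply] using
        ((contDiff_smoothFunctions F).differentiable (by simp)
          (t • v)).hasFDerivAt.comp_hasDerivAt t ((hasDerivAt_id t).smul_const v)
    have hpow : HasDerivAt (fun t : ℝ => F (t • v)) (c * (m + 1) * t ^ m) t := by
      simpa [hF, mul_assoc] using (hasDerivAt_pow (m + 1) t).const_mul c
    exact hline.unique hpow

end Derivations

section InitialPart

open MvPolynomial

variable {n d m : ℕ} {F : smoothFunctions n} {P : MvPolynomial (Fin n) ℝ}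

theorem IsInitialForm.inPart_eq
    (h : IsInitialForm (polyGerm n) (germMaximalIdeal n) m (smoothGerm n F) P) :
    inPart F m = polyFunction n P := by
  ext v
  have hmem : smoothGerm n (F - polyFunction n P) ∈ germMaximalIdeal n ^ (1 + m) := by
    rw [map_sub, add_comm]
    exact h.2
  have hsub := smoothGerm_iterate_dirDeriv_mem v hmem
  rw [pow_one, iterate_map_sub] at hsub
  have hP : (dirDeriv v)^[m] (polyFunction n P) 0 = m.factorial * polyFunction n P v := by
    refine iterate_dirDeriv_line fun t => ?_
    rw [polyFunction_apply, polyFunction_apply, mul_comm, ← eval_smul_of_isHomogeneous h.1]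
    rfl
  have hF : (dirDeriv v)^[m] F 0 = m.factorial * polyFunction n P v :=
    (sub_eq_zero.1 (apply_zero_of_smoothGerm_mem hsub)).trans hP
  rw [inPart, iteratedFDeriv_apply_eq_iterate_dirDeriv, hF, smul_eq_mul,
    inv_mul_cancel_left₀ (by positivity)]

/-- The `i`-th partial derivative of smooth functions. -/
def partialDeriv (i : Fin n) : Derivation ℝ (smoothFunctions n) (smoothFunctions n) :=
  dirDeriv (EuclideanSpace.single i 1)

theorem partialDeriv_coordFunction (i j : Fin n) :
    partialDeriv i (coordFunction j) = if i = j then 1 else 0 := by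
  ext x
  have hproj : fderiv ℝ (coordFunction j) x = EuclideanSpace.proj (𝕜 := ℝ) j :=
    (EuclideanSpace.proj (𝕜 := ℝ) j : Eucl n →L[ℝ] ℝ).fderiv
  rw [partialDeriv, dirDeriv_apply, hproj]
  split_ifs with h
  · subst h
    simp
  · simp [Ne.symm h]

theorem partialDeriv_polyFunction (i : Fin n) (p : MvPolynomial (Fin n) ℝ) :
    partialDeriv i (polyFunction n p) = polyFunction n (pderiv i p) := by
  rw [polyFunction, derivation_aeval]
  simp [partialDeriv_coordFunction]

theorem isInitialForm_partialDeriv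
    (h : IsInitialForm (polyGerm n) (germMaximalIdeal n) (d + 1) (smoothGerm n F) P) (i : Fin n) :
    IsInitialForm (polyGerm n) (germMaximalIdeal n) d (smoothGerm n (partialDeriv i F))
      (pderiv i P) := by
  refine ⟨h.1.pderiv, ?_⟩
  have hmem : smoothGerm n (F - polyFunction n P) ∈ germMaximalIdeal n ^ (d + 1 + 1) := by
    rw [map_sub]
    exact h.2
  have := smoothGerm_dirDeriv_mem (EuclideanSpace.single i 1) hmem
  rwa [← partialDeriv, map_sub, partialDeriv_polyFunction, map_sub] at this

theorem milnor_eq_rank (F : smoothFunctions n) : milnor n F = Module.rank ℝ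
    (smoothGerms n ⧸ Ideal.span (range fun i => smoothGerm n (partialDeriv i F))) := by
  have hJ : jacobianIdeal n F = Ideal.span (range fun i => smoothGerm n (partialDeriv i F)) := by
    refine congrArg Ideal.span (Set.ext fun γ => exists_congr fun i => ?_)
    exact ⟨fun h => Subtype.ext h.symm, fun h => (congrArg Subtype.val h).symm⟩
  rw [milnor, hJ]

end InitialPart

section OrderInvariance

variable {n k m : ℕ}

theorem IsLipeoGermAt.norm_bounds {φ : Eucl n → Eucl n} (hφ : IsLipeoGermAt φ) :
    (φ =O[𝓝 0] fun x => x) ∧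
      ∃ ψ : Eucl n → Eucl n, (ψ =O[𝓝 0] fun x => x) ∧ φ ∘ ψ =ᶠ[𝓝 0] id := by
  obtain ⟨hφ0, U, V, hU, hV, hbij, c, hc, hlip⟩ := hφ
  have hc0 : 0 < c := zero_lt_one.trans_le hc
  have hbounds (x) (hx : x ∈ U) : ‖x‖ ≤ c * ‖φ x‖ ∧ ‖φ x‖ ≤ c * ‖x‖ := by
    simpa [hφ0, inv_mul_le_iff₀ hc0] using hlip x hx 0 (mem_of_mem_nhds hU)
  have hmem : ∀ y ∈ V, Function.invFunOn φ U y ∈ U := fun y hy =>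
    Function.invFunOn_mem (hbij.surjOn hy)
  have hinv : ∀ y ∈ V, φ (Function.invFunOn φ U y) = y := fun y hy =>
    Function.invFunOn_eq (hbij.surjOn hy)
  refine ⟨.of_bound c (eventually_of_mem hU fun x hx => (hbounds x hx).2),
    Function.invFunOn φ U, .of_bound c (eventually_of_mem hV fun y hy => ?_),
    eventually_of_mem hV hinv⟩
  have := (hbounds _ (hmem y hy)).1
  rwa [hinv y hy] at this

theorem isBigO_norm_pow_comp {E E' G : Type*} [NormedAddCommGroup E] [NormedAddCommGroup E']
    [NormedAddCommGroup G] {F : E → G} {φ : E' → E} (hF : F =O[𝓝 0] fun x => ‖x‖ ^ k)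
    (hφ : φ =O[𝓝 0] fun x => x) : (F ∘ φ) =O[𝓝 0] fun x => ‖x‖ ^ k := by
  have hφ0 : Tendsto φ (𝓝 0) (𝓝 0) := hφ.trans_tendsto tendsto_id
  exact (hF.comp_tendsto hφ0).trans (hφ.norm_norm.pow k)

theorem HasOrderAt.isBigO_norm_pow {F : Eucl n → ℝ} (h : HasOrderAt F 0 (m : ℝ))
    (hF : ContDiff ℝ (⊤ : ℕ∞) F) (hF0 : F 0 = 0) : F =O[𝓝 0] fun x => ‖x‖ ^ m := by
  lift F to smoothFunctions n using mem_smoothFunctions.2 hF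
  exact isBigO_norm_pow_of_smoothGerm_mem (h.smoothGerm_mem hF0)

theorem HasOrderAt.eq_of_isLipeoGermAt {f g : Eucl n → ℝ} (hf : ContDiff ℝ (⊤ : ℕ∞) f)
    (hg : ContDiff ℝ (⊤ : ℕ∞) g) (hf0 : f 0 = 0) (hg0 : g 0 = 0)
    (hordf : HasOrderAt f 0 (k : ℝ)) (hordg : HasOrderAt g 0 (m : ℝ)) {φ : Eucl n → Eucl n}
    (hφ : IsLipeoGermAt φ) (hfg : AsympEquivAt f (g ∘ φ) 0) : k = m := by
  obtain ⟨hφO, ψ, hψO, hφψ⟩ := hφ.norm_bounds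
  obtain ⟨c₁, c₂, -, hc₂, hev⟩ := hfg
  have hfO : f =O[𝓝 0] (g ∘ φ) :=
    .of_bound c₂⁻¹ (hev.mono fun x hx => (le_inv_mul_iff₀ hc₂).2 hx.1)
  have hgO : (g ∘ φ) =O[𝓝 0] f := .of_bound c₁ (hev.mono fun x hx => hx.2)
  have hgψ : g =O[𝓝 0] (f ∘ ψ) :=
    (hgO.comp_tendsto (hψO.trans_tendsto tendsto_id)).congr' (hφψ.fun_comp g) .rfl
  exact le_antisymm
    (hordg.le_of_isBigO (hgψ.trans (isBigO_norm_pow_comp (hordf.isBigO_norm_pow hf hf0) hψO)))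
    (hordf.le_of_isBigO (hfO.trans (isBigO_norm_pow_comp (hordg.isBigO_norm_pow hg hg0) hφO)))

end OrderInvariance

section MilnorNumber

open MvPolynomial

variable {n m : ℕ}

theorem IsInitialForm.milnor_inPart_eq {F : smoothFunctions n} {P : MvPolynomial (Fin n) ℝ}
    (h : IsInitialForm (polyGerm n) (germMaximalIdeal n) m (smoothGerm n F) P) :
    milnor n (inPart F m) =
      Module.rank ℝ (smoothGerms n ⧸ Ideal.span (range (polyGerm n ∘ fun i => pderiv i P))) := by
  have hpartial : (fun i => smoothGerm n (partialDeriv i (polyFunction n P))) =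
      polyGerm n ∘ fun i => pderiv i P :=
    funext fun i => congrArg (smoothGerm n) (partialDeriv_polyFunction i P)
  rw [h.inPart_eq, milnor_eq_rank, hpartial]

theorem milnor_eq_of_hasOrderAt {F G : Eucl n → ℝ} (hF : ContDiff ℝ (⊤ : ℕ∞) F)
    (hG : ContDiff ℝ (⊤ : ℕ∞) G) (hF0 : F 0 = 0) (hG0 : G 0 = 0)
    (hordF : HasOrderAt F 0 (m : ℝ)) (hordG : HasOrderAt G 0 (m : ℝ))
    (hisoF : milnor n (inPart F m) < Cardinal.aleph0)
    (hisoG : milnor n (inPart G m) < Cardinal.aleph0) : milnor n F = milnor n G := by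
  lift F to smoothFunctions n using mem_smoothFunctions.2 hF
  lift G to smoothFunctions n using mem_smoothFunctions.2 hG
  have hm : 1 ≤ m := by
    refine hordF.le_of_isBigO (isBigO_norm_pow_of_smoothGerm_mem ?_)
    simpa [hF0] using smoothGerm_sub_algebraMap_mem F
  obtain ⟨d, rfl⟩ := Nat.exists_eq_add_of_le' hm
  have hreg := isRegularCoordinates_polyGerm n
  obtain ⟨P, hP⟩ := hreg.exists_isInitialForm (hordF.smoothGerm_mem hF0)
  obtain ⟨Q, hQ⟩ := hreg.exists_isInitialForm (hordG.smoothGerm_mem hG0)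
  rw [hP.milnor_inPart_eq] at hisoF
  rw [hQ.milnor_inPart_eq] at hisoG
  rw [milnor_eq_rank, milnor_eq_rank]
  exact hreg.rank_quotient_span_range_eq (isInitialForm_partialDeriv hP)
    (isInitialForm_partialDeriv hQ) hisoF hisoG

end MilnorNumber

/-- if `f, g : (ℝ^n, 0) → (ℝ, 0)` are `C^∞` germs of finite order whose
initial parts have algebraically isolated singularities at the origin, and `f` and `g`
are `R`-asymptotically Lipschitz equivalent at the origin (i.e. `f ∼_0 g ∘ φ` for some
germ of lipeomorphism `φ : (ℝ^n, 0) → (ℝ^n, 0)`), then `μ(f) = μ(g)`. -/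
theorem milnor_invariant_of_asympLipschitz {n : ℕ} (f g : Eucl n → ℝ)
    (hf : ContDiff ℝ (⊤ : ℕ∞) f) (hg : ContDiff ℝ (⊤ : ℕ∞) g)
    (hf0 : f 0 = 0) (hg0 : g 0 = 0)
    (mf mg : ℕ) (hordf : HasOrderAt f 0 (mf : ℝ)) (hordg : HasOrderAt g 0 (mg : ℝ))
    (hisof : milnor n (inPart f mf) < Cardinal.aleph0)
    (hisog : milnor n (inPart g mg) < Cardinal.aleph0)
    (hequiv : ∃ φ : Eucl n → Eucl n, IsLipeoGermAt φ ∧ AsympEquivAt f (g ∘ φ) 0) :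
    milnor n f = milnor n g := by
  obtain ⟨φ, hφ, hfg⟩ := hequiv
  obtain rfl : mf = mg := HasOrderAt.eq_of_isLipeoGermAt hf hg hf0 hg0 hordf hordg hφ hfg
  exact milnor_eq_of_hasOrderAt hf hg hf0 hg0 hordf hordg hisof hisog
end
end
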